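/- (Monotonicity in the volume of the random-boundary-condition measures.) Let G = (V,E) be a connected graph of degree bounded by D > 0, with nearest-neighbour ferromagnetic interactions, β > 0, and let ρ be a measure on ℝ with 0 < ∫_ℝ e^{a|u|²}dρ(u) < ∞ for all a > 0 and ρ([0,∞)) > 0. Let a = 8βD, let C̃ be the constant from the n = 2 regularity theorem, let B = ( (2/a)( 2C̃ + log ρ_a(ℝ) − log ρ_{a/2}(ℝ) ) )^{1/2}, and let ζ = ζ_{a,B} be the single-site measure dζ(u) = 1_{u ≥ B} dρ_a(u − B). Then for every β > 0 there exists r > 0 such that for all finite sets Λ' ⊂ Λ ⊂ V with d_G(∂Λ, Λ') > r, the measure ν̃⁰_{Λ',β,ρ} stochastically dominates the Λ'-marginal of ν̃⁰_{Λ,β,ρ}. -/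

import Mathlib

open MeasureTheory
open scoped ENNReal Classical

/-- A walk of length `m` in `(R, J)`. -/
def IsWalk {V : Type*} (J : V → V → ℝ) (R : Set V) (m : ℕ) (w : ℕ → V) : Prop :=
  (∀ i, 0 < i → i < m → w i ∈ R) ∧ ∀ i < m, J (w i) (w (i + 1)) ≠ 0

/-- The quantity `A(x, R, λ, ξ, C)` (case `n = 2`). -/
noncomputable def ARealL {V : Type*} (J : V → V → ℝ) (f : ℝ → ℝ) (lam : ℝ)
    (ξ : V → ℝ) (C : ℝ) (x : V) (R : Set V) : ℝ :=
  sInf {A : ℝ | 1 ≤ A ∧ ∀ (m : ℕ) (w : ℕ → V), IsWalk J R m w → w 0 = x → w m ∈ R →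
    |∑' z : {z : V // z ∉ R}, J (w m) z.1 * ξ z.1| ≤
      (∑' z : {z : V // z ∉ R}, |J (w m) z.1| * f (J (w m) z.1)) * C * A * lam ^ (m + 1) *
        ∏ i ∈ Finset.range m, f (J (w i) (w (i + 1)))}

/-- The Hamiltonian `-H^ξ_{Λ,J}` (already multiplied by `β`). -/
noncomputable def hamil {V : Type*} (J : V → V → ℝ) (β : ℝ) (Λ : Finset V)
    (ξ : V → ℝ) (φ : ↥Λ → ℝ) : ℝ :=
  β * ((1 / 2) * ∑ x : ↥Λ, ∑ y : ↥Λ,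
      (if x.1 ≠ y.1 then J x.1 y.1 * φ x * φ y else 0)
    + ∑ x : ↥Λ, φ x * ∑' y : {y : V // y ∉ Λ}, J x.1 y.1 * ξ y.1)

/-- The finite-volume Gibbs measure `ν^ξ_{Λ,β,ρ,J}` on `ℝ^Λ`. -/
noncomputable def gibbs {V : Type*} (J : V → V → ℝ) (β : ℝ) (ρ : Measure ℝ)
    (Λ : Finset V) (ξ : V → ℝ) : Measure (↥Λ → ℝ) :=
  (((Measure.pi fun _ : ↥Λ => ρ).withDensity
      fun φ => ENNReal.ofReal (Real.exp (hamil J β Λ ξ φ))) Set.univ)⁻¹ •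
    (Measure.pi fun _ : ↥Λ => ρ).withDensity
      fun φ => ENNReal.ofReal (Real.exp (hamil J β Λ ξ φ))

/-- The `Λ'`-marginal of a measure on `ℝ^Λ`, for `Λ' ⊆ Λ`. -/
noncomputable def marg {V : Type*} {Λ' Λ : Finset V} (h : Λ' ⊆ Λ)
    (μ : Measure (↥Λ → ℝ)) : Measure (↥Λ' → ℝ) :=
  μ.map fun φ x => φ ⟨x.1, h x.2⟩

/-- The normalized product measure `ν^0_{Λ,0,ρ,0}`. -/
noncomputable def prodN {V : Type*} (ρ : Measure ℝ) (Λ : Finset V) :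
    Measure (↥Λ → ℝ) :=
  ((Measure.pi fun _ : ↥Λ => ρ) Set.univ)⁻¹ • Measure.pi fun _ : ↥Λ => ρ

/-- The tilted single-site measure `dρ_b(u) = e^(b|u|²) dρ(u)`. -/
noncomputable def rhoMod (ρ : Measure ℝ) (b : ℝ) : Measure ℝ :=
  ρ.withDensity fun u => ENNReal.ofReal (Real.exp (b * u ^ 2))

/-- The shifted truncated single-site measure `dζ_{a,B}(u) = 1_{u ≥ B} dρ_a(u - B)`. -/
noncomputable def zetaM (ρ : Measure ℝ) (a B : ℝ) : Measure ℝ :=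
  ((rhoMod ρ a).map (fun u => u + B)).restrict (Set.Ici B)

/-- Nearest-neighbour interactions on a graph `G`. -/
noncomputable def Jnn {V : Type*} (G : SimpleGraph V) : V → V → ℝ :=
  fun x y => if G.Adj x y then 1 else 0

/-- `∂Λ`: the set of vertices of `Λ` adjacent to `V ∖ Λ`. -/
noncomputable def bdry {V : Type*} (G : SimpleGraph V) (Λ : Finset V) : Finset V :=
  Λ.filter fun x => ∃ y, y ∉ Λ ∧ G.Adj x y

/-- The random-boundary-condition measure `ν̃⁰_{Λ,β,ρ}`: sample the spins on `∂Λ` from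
the normalized product of `ζ`, then the spins on `Λ∖∂Λ` from the finite-volume Gibbs
measure with these boundary spins as boundary conditions. -/
noncomputable def nuTilde {V : Type*} (G : SimpleGraph V) (β : ℝ) (ρ ζ : Measure ℝ)
    (Λ : Finset V) : Measure (↥Λ → ℝ) :=
  (prodN ζ (bdry G Λ)).bind fun ξb =>
    (gibbs (Jnn G) β ρ (Λ \ bdry G Λ)
        (fun y => if h : y ∈ bdry G Λ then ξb ⟨y, h⟩ else 0)).map
      fun ψ x => if h : x.1 ∈ bdry G Λ then ξb ⟨x.1, h⟩
        else ψ ⟨x.1, Finset.mem_sdiff.mpr ⟨x.2, h⟩⟩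

/-- Stochastic domination. -/
def StochDom {ι : Type*} (μ ν : Measure (ι → ℝ)) : Prop :=
  ∀ g : (ι → ℝ) → ℝ, Measurable g → Monotone g → (∃ K, ∀ φ, |g φ| ≤ K) →
    ∫ φ, g φ ∂μ ≤ ∫ φ, g φ ∂ν


/-! By the spatial Markov property and monotonicity in the boundary condition, it is enough that,
under `ν̃_Λ`, the spins on `∂Λ'` are dominated by the product of the normalized measures `ζ`. Two
facts give this.

A log-supermodular law whose orthant probabilities `P(φ_x ≥ t_x for all x ∈ S)` are at most those
of a product measure is dominated by that product measure. For laws on `{0, 1}^A` this goes by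
induction on `A`, tilting the law of one coordinate until some orthant bound becomes an equality;
conditioning on that orthant then splits the problem. The law on `ℝ^A` reduces to it by recording
which of finitely many thresholds each coordinate exceeds.

The measure `ν̃_Λ` itself is not log-supermodular, because its density contains the inverse of the
partition function `Z(ξ)` of the boundary spins `ξ`. Replacing `1 / Z(ξ)` by `exp (c ∑ ξ)` with `c`
large gives a log-supermodular law, and `Z(ξ) exp (c ∑ ξ)` is increasing in `ξ`, so by Harris'
inequality this law dominates `ν̃_Λ`. Its orthant probabilities near `Λ'` are controlled by the
regularity bound once the boundary spins are not too large for their distance to `Λ'`; larger ones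
are lowered to `B` at a Gaussian cost that the tails of `ζ` absorb. The value of `B` is exactly the
one that turns the regularity bound into tails of `ζ`. -/
section FourFunctions

theorem nnreal_add_le_add_of_mul_le_mul {a b c d : NNReal} (hac : a ≤ c) (hbc : b ≤ c)
    (h : a * b ≤ c * d) : a + b ≤ c + d := by
  rcases eq_zero_or_pos c with rfl | hc
  · simp [nonpos_iff_eq_zero.1 hac, nonpos_iff_eq_zero.1 hbc]
  rw [← NNReal.coe_le_coe] at *
  push_cast at *
  have hc : (0 : ℝ) < c := hc
  refine le_of_mul_le_mul_left ?_ hc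
  nlinarith [mul_nonneg (sub_nonneg.2 hac) (sub_nonneg.2 hbc)]

theorem ennreal_add_le_add_of_mul_le_mul {a b c d : ℝ≥0∞} (hac : a ≤ c) (hbc : b ≤ c)
    (h : a * b ≤ c * d) : a + b ≤ c + d := by
  by_cases hc : c = ⊤
  · simp [hc]
  by_cases hd : d = ⊤
  · simp [hd]
  lift a to NNReal using ne_top_of_le_ne_top hc hac
  lift b to NNReal using ne_top_of_le_ne_top hc hbc
  lift c to NNReal using hc
  lift d to NNReal using hd
  norm_cast at *
  exact nnreal_add_le_add_of_mul_le_mul hac hbc h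

theorem update_sup_update {ι α : Type*} [LinearOrder α] (x y : ι → α) (i : ι) (u v : α) :
    Function.update x i u ⊔ Function.update y i v = Function.update (x ⊔ y) i (u ⊔ v) := by
  funext j
  rcases eq_or_ne j i with rfl | hj
  · simp
  · simp [hj]

theorem update_inf_update {ι α : Type*} [LinearOrder α] (x y : ι → α) (i : ι) (u v : α) :
    Function.update x i u ⊓ Function.update y i v = Function.update (x ⊓ y) i (u ⊓ v) :=
  update_sup_update (α := αᵒᵈ) x y i u v

variable {α : Type*} [MeasurableSpace α]

theorem two_mul_lintegral_mul_lintegral (μ : Measure α) {f g : α → ℝ≥0∞}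
    (hf : Measurable f) (hg : Measurable g) :
    2 * ((∫⁻ u, f u ∂μ) * ∫⁻ u, g u ∂μ) = ∫⁻ u, ∫⁻ v, (f u * g v + f v * g u) ∂μ ∂μ := by
  have inner_eq (u : α) : ∫⁻ v, (f u * g v + f v * g u) ∂μ =
      f u * (∫⁻ v, g v ∂μ) + (∫⁻ v, f v ∂μ) * g u := by
    rw [lintegral_add_left (by fun_prop), lintegral_const_mul _ hg, lintegral_mul_const _ hf]
  simp_rw [inner_eq]
  rw [lintegral_add_left (by fun_prop), lintegral_mul_const _ hf, lintegral_const_mul _ hg,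
    two_mul]

theorem four_functions_lintegral [LinearOrder α] (μ : Measure α) {f₁ f₂ f₃ f₄ : α → ℝ≥0∞}
    (hf₁ : Measurable f₁) (hf₂ : Measurable f₂) (hf₃ : Measurable f₃) (hf₄ : Measurable f₄)
    (h : ∀ u v, f₁ u * f₂ v ≤ f₃ (u ⊔ v) * f₄ (u ⊓ v)) :
    (∫⁻ u, f₁ u ∂μ) * ∫⁻ u, f₂ u ∂μ ≤ (∫⁻ u, f₃ u ∂μ) * ∫⁻ u, f₄ u ∂μ := by
  have symmetrized {u v : α} (huv : u ≤ v) :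
      f₁ u * f₂ v + f₁ v * f₂ u ≤ f₃ v * f₄ u + f₃ u * f₄ v := by
    refine ennreal_add_le_add_of_mul_le_mul (by simpa [huv] using h u v)
      (by simpa [huv] using h v u) ?_
    calc f₁ u * f₂ v * (f₁ v * f₂ u) = (f₁ u * f₂ u) * (f₁ v * f₂ v) := by ring
      _ ≤ (f₃ u * f₄ u) * (f₃ v * f₄ v) :=
        mul_le_mul' (by simpa using h u u) (by simpa using h v v)
      _ = f₃ v * f₄ u * (f₃ u * f₄ v) := by ring
  refine (ENNReal.mul_le_mul_iff_right (a := 2) (by simp) (by simp)).1 ?_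
  rw [two_mul_lintegral_mul_lintegral μ hf₁ hf₂, two_mul_lintegral_mul_lintegral μ hf₃ hf₄]
  refine lintegral_mono fun u => lintegral_mono fun v => ?_
  rcases le_total u v with huv | hvu
  · simpa [add_comm] using symmetrized huv
  · simpa [add_comm] using symmetrized hvu

theorem four_functions_lmarginal {ι : Type*} [LinearOrder α] (μ : ι → Measure α)
    [∀ i, SigmaFinite (μ i)] (s : Finset ι) {f₁ f₂ f₃ f₄ : (ι → α) → ℝ≥0∞}
    (hf₁ : Measurable f₁) (hf₂ : Measurable f₂) (hf₃ : Measurable f₃) (hf₄ : Measurable f₄)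
    (h : ∀ x y, f₁ x * f₂ y ≤ f₃ (x ⊔ y) * f₄ (x ⊓ y)) (x y : ι → α) :
    (∫⋯∫⁻_s, f₁ ∂μ) x * (∫⋯∫⁻_s, f₂ ∂μ) y ≤
      (∫⋯∫⁻_s, f₃ ∂μ) (x ⊔ y) * (∫⋯∫⁻_s, f₄ ∂μ) (x ⊓ y) := by
  induction s using Finset.induction generalizing x y with
  | empty => simpa using h x y
  | insert i s hi ih =>
    simp only [lmarginal_insert _ hf₁ hi, lmarginal_insert _ hf₂ hi, lmarginal_insert _ hf₃ hi,
      lmarginal_insert _ hf₄ hi]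
    have measurable_fiber {f : (ι → α) → ℝ≥0∞} (hf : Measurable f) (z : ι → α) :
        Measurable fun u => (∫⋯∫⁻_s, f ∂μ) (Function.update z i u) :=
      (hf.lmarginal μ).comp (measurable_update z)
    refine four_functions_lintegral (μ i) (measurable_fiber hf₁ x) (measurable_fiber hf₂ y)
      (measurable_fiber hf₃ _) (measurable_fiber hf₄ _) fun u v => ?_
    rw [← update_sup_update, ← update_inf_update]
    exact ih _ _

end FourFunctions

section WeightedSubsets

variable {α : Type*}

/-- The integral of `g` against the finite measure on subsets of `A` with point masses `μ`. -/
noncomputable def weightedSum (A : Finset α) (μ g : Finset α → ℝ) : ℝ :=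
  ∑ s ∈ A.powerset, μ s * g s

/-- The probability of `s` when each `j ∈ A` belongs to it independently with probability `p j`. -/
noncomputable def bernoulliWeight (A : Finset α) (p : α → ℝ) (s : Finset α) : ℝ :=
  ∏ j ∈ A, if j ∈ s then p j else 1 - p j

/-- The expectation of `g` under the Bernoulli product measure on subsets of `A`. -/
noncomputable def bernoulliMean (A : Finset α) (p : α → ℝ) (g : Finset α → ℝ) : ℝ :=
  weightedSum A (bernoulliWeight A p) g

/-- The indicator of the orthant `{s | K ⊆ s}`, as a real-valued function. -/
noncomputable def orthantInd (K s : Finset α) : ℝ := if K ⊆ s then 1 else 0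

/-- The mass function, on subsets disjoint from `R`, of the image of `μ` under forgetting `R`. -/
noncomputable def marginalWeight (R : Finset α) (μ : Finset α → ℝ) (η : Finset α) : ℝ :=
  weightedSum R (fun s => μ (η ∪ s)) 1

/-- Reweighting of `μ` by `x` on sets containing `i` and by `1 - x` on the other ones. -/
noncomputable def tilt (i : α) (x : ℝ) (μ : Finset α → ℝ) (s : Finset α) : ℝ :=
  (if i ∈ s then x else 1 - x) * μ s

/-- `μ` is a log-supermodular weight on subsets of `A` whose mass of each increasing orthant
`{s | K ⊆ s}` is at most that of the Bernoulli product measure with parameters `p`. -/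
structure FKGOrthantBound (A : Finset α) (μ : Finset α → ℝ) (p : α → ℝ) : Prop where
  nonneg : ∀ s, 0 ≤ μ s
  mul_le : ∀ s ⊆ A, ∀ t ⊆ A, μ s * μ t ≤ μ (s ∩ t) * μ (s ∪ t)
  orthant_le : ∀ K ⊆ A, weightedSum A μ (orthantInd K) ≤ weightedSum A μ 1 * ∏ i ∈ K, p i

/-- The statement, proved by induction on `A`, that orthant bounds imply stochastic domination by
a Bernoulli product measure for log-supermodular weights on subsets of `A`. -/
def OrthantBoundsSuffice (A : Finset α) : Prop :=
  ∀ (μ : Finset α → ℝ) (p : α → ℝ), (∀ i, p i ∈ Set.Icc 0 1) → FKGOrthantBound A μ p →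
    ∀ g : Finset α → ℝ, (∀ s, 0 ≤ g s) → Monotone g →
      weightedSum A μ g ≤ weightedSum A μ 1 * bernoulliMean A p g

variable {A T R K L : Finset α} {i : α} {p : α → ℝ} {μ ν g h : Finset α → ℝ}

theorem weightedSum_congr (hμ : ∀ s ⊆ A, μ s = ν s) (hg : ∀ s ⊆ A, g s = h s) :
    weightedSum A μ g = weightedSum A ν h :=
  Finset.sum_congr rfl fun s hs => by
    rw [hμ s (Finset.mem_powerset.1 hs), hg s (Finset.mem_powerset.1 hs)]

theorem weightedSum_const_mul (c : ℝ) (μ g : Finset α → ℝ) :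
    weightedSum A (fun s => c * μ s) g = c * weightedSum A μ g := by
  simp only [weightedSum, mul_assoc, Finset.mul_sum]

theorem weightedSum_mono (hμ : ∀ s, 0 ≤ μ s) (hgh : g ≤ h) :
    weightedSum A μ g ≤ weightedSum A μ h :=
  Finset.sum_le_sum fun s _ => mul_le_mul_of_nonneg_left (hgh s) (hμ s)

theorem weightedSum_nonneg (hμ : ∀ s, 0 ≤ μ s) (hg : ∀ s, 0 ≤ g s) :
    0 ≤ weightedSum A μ g :=
  Finset.sum_nonneg fun s _ => mul_nonneg (hμ s) (hg s)

theorem weightedSum_eq_zero_of_mass_eq_zero (hμ : ∀ s, 0 ≤ μ s) (h0 : weightedSum A μ 1 = 0) :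
    weightedSum A μ g = 0 := by
  have hmass : ∀ s ∈ A.powerset, μ s * (1 : Finset α → ℝ) s = 0 :=
    (Finset.sum_eq_zero_iff_of_nonneg fun s _ => mul_nonneg (hμ s) zero_le_one).1 h0
  refine Finset.sum_eq_zero fun s hs => ?_
  rw [show μ s = 0 by simpa using hmass s hs, zero_mul]

theorem weightedSum_insert (hi : i ∉ A) (μ g : Finset α → ℝ) :
    weightedSum (insert i A) μ g =
      weightedSum A μ g + weightedSum A (fun s => μ (insert i s)) (fun s => g (insert i s)) :=
  Finset.sum_powerset_insert hi _

theorem weightedSum_union (hTR : Disjoint T R) (μ g : Finset α → ℝ) :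
    weightedSum (T ∪ R) μ g =
      ∑ η ∈ T.powerset, weightedSum R (fun s => μ (η ∪ s)) (fun s => g (η ∪ s)) := by
  induction R using Finset.induction generalizing μ g with
  | empty => simp [weightedSum]
  | insert i R hi ih =>
    rw [Finset.disjoint_insert_right] at hTR
    rw [Finset.union_insert, weightedSum_insert (by simp [hTR.1, hi]), ih hTR.2, ih hTR.2,
      ← Finset.sum_add_distrib]
    simp only [weightedSum_insert hi, Finset.union_insert]

theorem weightedSum_tilt (hi : i ∉ A) (x : ℝ) (μ g : Finset α → ℝ) :
    weightedSum (insert i A) (tilt i x μ) g = (1 - x) * weightedSum A μ g +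
      x * weightedSum A (fun s => μ (insert i s)) (fun s => g (insert i s)) := by
  rw [weightedSum_insert hi, ← weightedSum_const_mul, ← weightedSum_const_mul]
  congr 1
  · refine weightedSum_congr (fun s hs => ?_) fun _ _ => rfl
    rw [tilt, if_neg fun h => hi (hs h)]
  · simp [tilt]

theorem orthantInd_nonneg (K s : Finset α) : 0 ≤ orthantInd K s := by
  unfold orthantInd; split_ifs <;> simp

theorem orthantInd_monotone (K : Finset α) : Monotone (orthantInd K) := fun s t hst => by
  unfold orthantInd
  split_ifs with hs ht <;> first | exact absurd (hs.trans hst) ht | simp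

theorem orthantInd_insert_of_subset (hi : i ∉ A) (hK : K ⊆ A) (s : Finset α) :
    orthantInd K (insert i s) = orthantInd K s := by
  simp only [orthantInd, Finset.subset_insert_iff_of_notMem fun h => hi (hK h)]

theorem orthantInd_insert_insert (hi : i ∉ A) (hK : K ⊆ A) (s : Finset α) :
    orthantInd (insert i K) (insert i s) = orthantInd K s := by
  simp only [orthantInd, Finset.insert_subset_insert_iff fun h => hi (hK h)]

theorem orthantInd_union_union (hTR : Disjoint T R) (hK : K ⊆ T) (hL : L ⊆ R) {η s : Finset α}
    (hη : η ⊆ T) (hs : s ⊆ R) :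
    orthantInd (K ∪ L) (η ∪ s) = orthantInd K η * orthantInd L s := by
  have hKs : K ⊆ η ∪ s ↔ K ⊆ η :=
    ⟨(hTR.mono hK hs).left_le_of_le_sup_right, fun h => h.trans Finset.subset_union_left⟩
  have hLη : L ⊆ η ∪ s ↔ L ⊆ s :=
    ⟨(hTR.symm.mono hL hη).left_le_of_le_sup_left, fun h => h.trans Finset.subset_union_right⟩
  simp only [orthantInd, Finset.union_subset_iff, hKs, hLη, ite_and, mul_ite, mul_one, mul_zero]
  split_ifs <;> rfl

theorem weightedSum_orthantInd_insert (hi : i ∉ A) (hK : K ⊆ A) (μ : Finset α → ℝ) :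
    weightedSum (insert i A) μ (orthantInd (insert i K)) =
      weightedSum A (fun s => μ (insert i s)) (orthantInd K) := by
  have hzero : weightedSum A μ (orthantInd (insert i K)) = 0 := by
    refine Finset.sum_eq_zero fun s hs => ?_
    have : ¬ insert i K ⊆ s := fun h =>
      hi (Finset.mem_powerset.1 hs (h (Finset.mem_insert_self i K)))
    rw [orthantInd, if_neg this, mul_zero]
  rw [weightedSum_insert hi, hzero, zero_add]
  exact weightedSum_congr (fun _ _ => rfl) fun s _ => orthantInd_insert_insert hi hK s

theorem weightedSum_orthantInd_of_subset (hi : i ∉ A) (hK : K ⊆ A) (μ : Finset α → ℝ) :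
    weightedSum (insert i A) μ (orthantInd K) =
      weightedSum A μ (orthantInd K) + weightedSum A (fun s => μ (insert i s)) (orthantInd K) := by
  simp only [weightedSum_insert hi, orthantInd_insert_of_subset hi hK]

theorem weightedSum_mul_le {f₁ f₂ f₃ f₄ g₁ g₂ g₃ g₄ : Finset α → ℝ}
    (h₁ : ∀ s, 0 ≤ f₁ s * g₁ s) (h₂ : ∀ s, 0 ≤ f₂ s * g₂ s) (h₃ : ∀ s, 0 ≤ f₃ s * g₃ s)
    (h₄ : ∀ s, 0 ≤ f₄ s * g₄ s)
    (h : ∀ s ⊆ A, ∀ t ⊆ A,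
      f₁ s * g₁ s * (f₂ t * g₂ t) ≤ f₃ (s ∩ t) * g₃ (s ∩ t) * (f₄ (s ∪ t) * g₄ (s ∪ t))) :
    weightedSum A f₁ g₁ * weightedSum A f₂ g₂ ≤ weightedSum A f₃ g₃ * weightedSum A f₄ g₄ := by
  have key := Finset.four_functions_theorem A (f₁ := f₁ * g₁) (f₂ := f₂ * g₂) (f₃ := f₃ * g₃)
    (f₄ := f₄ * g₄) h₁ h₂ h₃ h₄ (fun s hs t ht => h s hs t ht)
    (subset_refl A.powerset) (subset_refl A.powerset)
  rwa [Finset.powerset_infs_powerset_self, Finset.powerset_sups_powerset_self] at key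

theorem weightedSum_holley (hμ : ∀ s, 0 ≤ μ s) (hν : ∀ s, 0 ≤ ν s) (hg : ∀ s, 0 ≤ g s)
    (hgm : Monotone g) (h : ∀ s ⊆ A, ∀ t ⊆ A, μ s * ν t ≤ μ (s ∩ t) * ν (s ∪ t)) :
    weightedSum A μ g * weightedSum A ν 1 ≤ weightedSum A μ 1 * weightedSum A ν g := by
  refine weightedSum_mul_le (fun s => mul_nonneg (hμ s) (hg s)) (fun s => by simpa using hν s)
    (fun s => by simpa using hμ s) (fun s => mul_nonneg (hν s) (hg s)) fun s hs t ht => ?_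
  simp only [Pi.one_apply, mul_one]
  calc μ s * g s * ν t = μ s * ν t * g s := by ring
    _ ≤ μ (s ∩ t) * ν (s ∪ t) * g (s ∪ t) :=
      mul_le_mul (h s hs t ht) (hgm Finset.subset_union_left) (hg s)
        (mul_nonneg (hμ _) (hν _))
    _ = _ := by ring

theorem bernoulliWeight_nonneg (hp : ∀ i, p i ∈ Set.Icc (0 : ℝ) 1) (A s : Finset α) :
    0 ≤ bernoulliWeight A p s :=
  Finset.prod_nonneg fun j _ => by
    split_ifs
    exacts [(hp j).1, sub_nonneg.2 (hp j).2]

theorem bernoulliMean_mono (hp : ∀ i, p i ∈ Set.Icc (0 : ℝ) 1) (hgh : g ≤ h) :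
    bernoulliMean A p g ≤ bernoulliMean A p h :=
  weightedSum_mono (bernoulliWeight_nonneg hp A) hgh

theorem bernoulliMean_nonneg (hp : ∀ i, p i ∈ Set.Icc (0 : ℝ) 1) (hg : ∀ s, 0 ≤ g s) :
    0 ≤ bernoulliMean A p g :=
  weightedSum_nonneg (bernoulliWeight_nonneg hp A) hg

theorem bernoulliMean_congr_of_eqOn {p q : α → ℝ} (hpq : ∀ j ∈ A, p j = q j)
    (g : Finset α → ℝ) : bernoulliMean A p g = bernoulliMean A q g :=
  weightedSum_congr (fun s _ => Finset.prod_congr rfl fun j hj => by rw [hpq j hj]) fun _ _ => rfl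

theorem bernoulliMean_union (hTR : Disjoint T R) (p : α → ℝ) (g : Finset α → ℝ) :
    bernoulliMean (T ∪ R) p g =
      bernoulliMean T p fun η => bernoulliMean R p fun s => g (η ∪ s) := by
  unfold bernoulliMean
  rw [weightedSum_union hTR]
  refine Finset.sum_congr rfl fun η hη => ?_
  rw [← weightedSum_const_mul]
  refine weightedSum_congr (fun s hs => ?_) fun _ _ => rfl
  rw [Finset.mem_powerset] at hη
  rw [bernoulliWeight, Finset.prod_union hTR]
  congr 1 <;> refine Finset.prod_congr rfl fun j hj => ?_
  · have : j ∉ s := fun h => Finset.disjoint_left.1 hTR hj (hs h)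
    simp [this]
  · have : j ∉ η := fun h => Finset.disjoint_left.1 hTR (hη h) hj
    simp [this]

theorem bernoulliMean_empty (p : α → ℝ) (g : Finset α → ℝ) : bernoulliMean ∅ p g = g ∅ := by
  simp [bernoulliMean, weightedSum, bernoulliWeight]

theorem bernoulliMean_singleton (i : α) (p : α → ℝ) (g : Finset α → ℝ) :
    bernoulliMean {i} p g = (1 - p i) * g ∅ + p i * g {i} := by
  rw [← insert_empty_eq, bernoulliMean, weightedSum_insert (Finset.notMem_empty i)]
  simp [weightedSum, bernoulliWeight]

theorem bernoulliMean_insert (hi : i ∉ A) (p : α → ℝ) (g : Finset α → ℝ) :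
    bernoulliMean (insert i A) p g =
      (1 - p i) * bernoulliMean A p g + p i * bernoulliMean A p fun s => g (insert i s) := by
  rw [Finset.insert_eq, bernoulliMean_union (Finset.disjoint_singleton_left.2 hi),
    bernoulliMean_singleton]
  simp only [Finset.empty_union, ← Finset.insert_eq]

theorem weightedSum_marginalWeight (hTR : Disjoint T R) (hg : ∀ η ⊆ T, ∀ s ⊆ R, g (η ∪ s) = h η) :
    weightedSum T (marginalWeight R μ) h = weightedSum (T ∪ R) μ g := by
  rw [weightedSum_union hTR]
  refine Finset.sum_congr rfl fun η hη => ?_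
  rw [marginalWeight, weightedSum, Finset.sum_mul]
  refine Finset.sum_congr rfl fun s hs => ?_
  simp only [hg η (Finset.mem_powerset.1 hη) s (Finset.mem_powerset.1 hs), Pi.one_apply, mul_one]

theorem marginalWeight_nonneg (hμ : ∀ s, 0 ≤ μ s) (η : Finset α) : 0 ≤ marginalWeight R μ η :=
  weightedSum_nonneg (fun _ => hμ _) fun _ => zero_le_one

theorem union_inter_union_of_disjoint (hTR : Disjoint T R) {η θ s t : Finset α} (hη : η ⊆ T)
    (hθ : θ ⊆ T) (hs : s ⊆ R) (ht : t ⊆ R) : (η ∪ s) ∩ (θ ∪ t) = η ∩ θ ∪ s ∩ t := by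
  have hηt : η ∩ t = ∅ := Finset.disjoint_iff_inter_eq_empty.1 (hTR.mono hη ht)
  have hsθ : s ∩ θ = ∅ := Finset.disjoint_iff_inter_eq_empty.1 (hTR.symm.mono hs hθ)
  rw [Finset.union_inter_distrib_right, Finset.inter_union_distrib_left,
    Finset.inter_union_distrib_left, hηt, hsθ, Finset.union_empty, Finset.empty_union]

theorem weightedSum_fiber_orthantInd (hTR : Disjoint T R) (hK : K ⊆ R) :
    weightedSum R (fun s => μ (T ∪ s)) (orthantInd K) =
      weightedSum (T ∪ R) μ (orthantInd (T ∪ K)) := by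
  rw [weightedSum_union hTR, Finset.sum_eq_single T]
  · refine weightedSum_congr (fun _ _ => rfl) fun s hs => ?_
    rw [orthantInd_union_union hTR subset_rfl hK subset_rfl hs]
    simp [orthantInd]
  · intro η hη hne
    rw [Finset.mem_powerset] at hη
    refine Finset.sum_eq_zero fun s hs => ?_
    simp only [orthantInd_union_union hTR subset_rfl hK hη (Finset.mem_powerset.1 hs)]
    rw [orthantInd, if_neg fun h => hne (hη.antisymm h), zero_mul, mul_zero]
  · simp

theorem weightedSum_fiber_one (hTR : Disjoint T R) :
    weightedSum R (fun s => μ (T ∪ s)) 1 = weightedSum (T ∪ R) μ (orthantInd T) := by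
  have := weightedSum_fiber_orthantInd (μ := μ) hTR (Finset.empty_subset R)
  rw [Finset.union_empty] at this
  rw [← this]
  exact weightedSum_congr (fun _ _ => rfl) fun s _ => by simp [orthantInd]

namespace FKGOrthantBound

theorem fiber_mul_fiber_le (hTR : Disjoint T R) (H : FKGOrthantBound (T ∪ R) μ p)
    {η θ : Finset α} (hη : η ⊆ T) (hθ : θ ⊆ T) :
    ∀ s ⊆ R, ∀ t ⊆ R, μ (η ∪ s) * μ (θ ∪ t) ≤ μ (η ∩ θ ∪ s ∩ t) * μ (η ∪ θ ∪ (s ∪ t)) := by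
  intro s hs t ht
  have := H.mul_le _ (Finset.union_subset_union hη hs) _ (Finset.union_subset_union hθ ht)
  rwa [union_inter_union_of_disjoint hTR hη hθ hs ht, Finset.union_union_union_comm] at this

theorem marginal (hTR : Disjoint T R) (H : FKGOrthantBound (T ∪ R) μ p) :
    FKGOrthantBound T (marginalWeight R μ) p where
  nonneg := marginalWeight_nonneg H.nonneg
  mul_le η hη θ hθ := by
    have hnonneg (ζ s : Finset α) : 0 ≤ μ (ζ ∪ s) * (1 : Finset α → ℝ) s :=
      mul_nonneg (H.nonneg _) zero_le_one
    refine weightedSum_mul_le (hnonneg η) (hnonneg θ) (hnonneg _) (hnonneg _) fun s hs t ht => ?_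
    simpa using H.fiber_mul_fiber_le hTR hη hθ s hs t ht
  orthant_le K hK := by
    have hind : ∀ η ⊆ T, ∀ s ⊆ R, orthantInd K (η ∪ s) = orthantInd K η := fun η hη s hs => by
      simpa [orthantInd] using orthantInd_union_union hTR hK (Finset.empty_subset R) hη hs
    rw [weightedSum_marginalWeight hTR hind,
      weightedSum_marginalWeight (g := 1) (h := 1) hTR fun _ _ _ _ => rfl]
    exact H.orthant_le K (hK.trans Finset.subset_union_left)

theorem fiber_of_tight (hTR : Disjoint T R) (H : FKGOrthantBound (T ∪ R) μ p)
    (htight : weightedSum (T ∪ R) μ (orthantInd T) = weightedSum (T ∪ R) μ 1 * ∏ i ∈ T, p i) :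
    FKGOrthantBound R (fun s => μ (T ∪ s)) p where
  nonneg _ := H.nonneg _
  mul_le := by simpa using H.fiber_mul_fiber_le hTR subset_rfl subset_rfl
  orthant_le K hK := by
    rw [weightedSum_fiber_orthantInd hTR hK, weightedSum_fiber_one hTR, htight, mul_assoc,
      ← Finset.prod_union (hTR.mono_right hK)]
    exact H.orthant_le _ (Finset.union_subset_union_right hK)

end FKGOrthantBound

-- Tightness of the bound at `T` makes the fiber over the top configuration `T` satisfy the orthant
-- bounds on `R`, and by log-supermodularity this fiber dominates all the other ones.
theorem weightedSum_le_of_tight (hTR : Disjoint T R) (hT : OrthantBoundsSuffice T)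
    (hR : OrthantBoundsSuffice R) (hp : ∀ i, p i ∈ Set.Icc (0 : ℝ) 1)
    (H : FKGOrthantBound (T ∪ R) μ p)
    (htight : weightedSum (T ∪ R) μ (orthantInd T) = weightedSum (T ∪ R) μ 1 * ∏ i ∈ T, p i)
    (hpos : 0 < weightedSum (T ∪ R) μ (orthantInd T)) (hg : ∀ s, 0 ≤ g s)
    (hgm : Monotone g) :
    weightedSum (T ∪ R) μ g ≤ weightedSum (T ∪ R) μ 1 * bernoulliMean (T ∪ R) p g := by
  have hfiber : ∀ η ⊆ T, weightedSum R (fun s => μ (η ∪ s)) (fun s => g (η ∪ s)) ≤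
      marginalWeight R μ η * bernoulliMean R p fun s => g (η ∪ s) := by
    intro η hη
    have hgη : Monotone fun s => g (η ∪ s) := fun s t hst =>
      hgm (Finset.union_subset_union_right hst)
    have hcompare := weightedSum_holley (A := R) (μ := fun s => μ (η ∪ s))
      (ν := fun s => μ (T ∪ s)) (fun _ => H.nonneg _) (fun _ => H.nonneg _)
      (fun s => hg (η ∪ s)) hgη (by
        simpa [Finset.inter_eq_left.2 hη, Finset.union_eq_right.2 hη] using
          H.fiber_mul_fiber_le hTR hη subset_rfl)
    refine le_of_mul_le_mul_right (hcompare.trans ?_) ((weightedSum_fiber_one hTR).symm ▸ hpos)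
    calc _ ≤ marginalWeight R μ η * (weightedSum R (fun s => μ (T ∪ s)) 1 *
          bernoulliMean R p fun s => g (η ∪ s)) :=
          mul_le_mul_of_nonneg_left
            (hR _ p hp (H.fiber_of_tight hTR htight) _ (fun s => hg _) hgη)
            (marginalWeight_nonneg H.nonneg η)
      _ = _ := by ring
  calc weightedSum (T ∪ R) μ g
      ≤ weightedSum T (marginalWeight R μ) fun η => bernoulliMean R p fun s => g (η ∪ s) := by
        rw [weightedSum_union hTR]
        exact Finset.sum_le_sum fun η hη => hfiber η (Finset.mem_powerset.1 hη)
    _ ≤ weightedSum T (marginalWeight R μ) 1 *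
          bernoulliMean T p fun η => bernoulliMean R p fun s => g (η ∪ s) :=
        hT _ p hp (H.marginal hTR) _ (fun η => bernoulliMean_nonneg hp fun s => hg _)
          fun η θ hηθ => bernoulliMean_mono hp fun s => hgm (Finset.union_subset_union_left hηθ)
    _ = _ := by
        rw [weightedSum_marginalWeight (g := 1) (h := 1) hTR fun _ _ _ _ => rfl,
          bernoulliMean_union hTR]

theorem exists_forall_le_zero_and_eq_zero {ι : Type*} {s : Finset ι} {F : ι → ℝ → ℝ}
    (hF : ∀ k ∈ s, Continuous (F k)) {a b : ℝ} (hab : a ≤ b) (ha : ∀ k ∈ s, F k a ≤ 0)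
    (hb : ∃ k ∈ s, 0 ≤ F k b) :
    ∃ x ∈ Set.Icc a b, (∀ k ∈ s, F k x ≤ 0) ∧ ∃ k ∈ s, F k x = 0 := by
  obtain ⟨k₀, hk₀, hk₀b⟩ := hb
  have hs : s.Nonempty := ⟨k₀, hk₀⟩
  have hsup : Continuous fun x => s.sup' hs fun k => F k x :=
    Continuous.finset_sup'_apply hs hF
  obtain ⟨x, hx, hx0⟩ := intermediate_value_Icc hab hsup.continuousOn
    ⟨Finset.sup'_le hs _ ha, hk₀b.trans (Finset.le_sup' (fun k => F k b) hk₀)⟩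
  obtain ⟨k, hk, hkx⟩ := Finset.exists_mem_eq_sup' hs fun k => F k x
  exact ⟨x, hx, fun k hk => (Finset.le_sup' (fun k => F k x) hk).trans hx0.le, k, hk,
    hkx.symm.trans hx0⟩

namespace FKGOrthantBound

theorem slice (hi : i ∉ A) (H : FKGOrthantBound (insert i A) μ p) : FKGOrthantBound A μ p where
  nonneg := H.nonneg
  mul_le s hs t ht :=
    H.mul_le s (hs.trans (Finset.subset_insert i A)) t (ht.trans (Finset.subset_insert i A))
  orthant_le K hK := by
    set μ₁ : Finset α → ℝ := fun s => μ (insert i s)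
    have hmass : weightedSum (insert i A) μ 1 = weightedSum A μ 1 + weightedSum A μ₁ 1 :=
      weightedSum_insert hi μ 1
    have horthant := H.orthant_le K (hK.trans (Finset.subset_insert i A))
    rw [weightedSum_orthantInd_of_subset hi hK, hmass] at horthant
    have hm : 0 ≤ weightedSum A μ 1 := weightedSum_nonneg H.nonneg fun _ => zero_le_one
    have hm₁ : 0 ≤ weightedSum A μ₁ 1 :=
      weightedSum_nonneg (fun _ => H.nonneg _) fun _ => zero_le_one
    rcases hm.eq_or_lt with hm0 | hmpos
    · rw [weightedSum_eq_zero_of_mass_eq_zero H.nonneg hm0.symm, ← hm0, zero_mul]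
    have hcompare := weightedSum_holley (A := A) H.nonneg (ν := μ₁) (fun _ => H.nonneg _)
      (orthantInd_nonneg K) (orthantInd_monotone K) fun s hs t ht => by
        have := H.mul_le s (hs.trans (Finset.subset_insert i A)) _
          (Finset.insert_subset_insert i ht)
        rwa [Finset.inter_insert_of_notMem fun h => hi (hs h), Finset.union_insert] at this
    refine le_of_mul_le_mul_right ?_ (add_pos_of_pos_of_nonneg hmpos hm₁)
    nlinarith [mul_le_mul_of_nonneg_left horthant hm]

theorem tilt_mul_tilt_le {B : Finset α} (H : FKGOrthantBound B μ p) {x : ℝ}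
    (hx : x ∈ Set.Icc (0 : ℝ) 1) (i : α) :
    ∀ s ⊆ B, ∀ t ⊆ B, tilt i x μ s * tilt i x μ t ≤ tilt i x μ (s ∩ t) * tilt i x μ (s ∪ t) := by
  intro s hs t ht
  have hfactor : (if i ∈ s then x else 1 - x) * (if i ∈ t then x else 1 - x) =
      (if i ∈ s ∩ t then x else 1 - x) * if i ∈ s ∪ t then x else 1 - x := by
    by_cases his : i ∈ s <;> by_cases hit : i ∈ t <;> simp [his, hit, mul_comm]
  have hnonneg : 0 ≤ (if i ∈ s then x else 1 - x) * if i ∈ t then x else 1 - x := by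
    have := sub_nonneg.2 hx.2
    have := hx.1
    positivity
  calc tilt i x μ s * tilt i x μ t
      = ((if i ∈ s then x else 1 - x) * if i ∈ t then x else 1 - x) * (μ s * μ t) := by
        unfold tilt; ring
    _ ≤ ((if i ∈ s then x else 1 - x) * if i ∈ t then x else 1 - x) * (μ (s ∩ t) * μ (s ∪ t)) :=
        mul_le_mul_of_nonneg_left (H.mul_le s hs t ht) hnonneg
    _ = tilt i x μ (s ∩ t) * tilt i x μ (s ∪ t) := by rw [hfactor]; unfold tilt; ring

theorem tilt_of_orthant_le (hi : i ∉ A) (H : FKGOrthantBound (insert i A) μ p) {x q : ℝ}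
    (hx : x ∈ Set.Icc (0 : ℝ) 1)
    (hq : weightedSum (insert i A) (tilt i x μ) 1 * q = x * (weightedSum (insert i A) μ 1 * p i))
    (horthant : ∀ K ⊆ A, weightedSum (insert i A) (tilt i x μ) (orthantInd K) ≤
      weightedSum (insert i A) (tilt i x μ) 1 * ∏ j ∈ K, p j) :
    FKGOrthantBound (insert i A) (tilt i x μ) (Function.update p i q) where
  nonneg s := by
    have := sub_nonneg.2 hx.2
    have := hx.1
    have := H.nonneg s
    unfold tilt
    positivity
  mul_le := H.tilt_mul_tilt_le hx i
  orthant_le K hK := by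
    by_cases hiK : i ∈ K
    · obtain ⟨L, hiL, rfl⟩ : ∃ L, i ∉ L ∧ insert i L = K :=
        ⟨K.erase i, Finset.notMem_erase i K, Finset.insert_erase hiK⟩
      have hL : L ⊆ A := (Finset.insert_subset_insert_iff hiL).1 hK
      have hbound := H.orthant_le (insert i L) hK
      rw [weightedSum_orthantInd_insert hi hL, Finset.prod_insert hiL] at hbound
      rw [weightedSum_orthantInd_insert hi hL, Finset.prod_insert hiL, Function.update_self,
        Finset.prod_update_of_notMem hiL, ← mul_assoc, hq]
      calc weightedSum A (fun s => tilt i x μ (insert i s)) (orthantInd L)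
          = x * weightedSum A (fun s => μ (insert i s)) (orthantInd L) := by
            simp only [tilt, Finset.mem_insert_self, if_true, weightedSum_const_mul]
        _ ≤ x * (weightedSum (insert i A) μ 1 * (p i * ∏ j ∈ L, p j)) :=
            mul_le_mul_of_nonneg_left hbound hx.1
        _ = x * (weightedSum (insert i A) μ 1 * p i) * ∏ j ∈ L, p j := by ring
    · rw [Finset.prod_update_of_notMem hiK]
      exact horthant K ((Finset.subset_insert_iff_of_notMem hiK).1 hK)

end FKGOrthantBound

theorem weightedSum_le_of_eq_one (hi : i ∉ A) (hA : OrthantBoundsSuffice A)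
    (hp : ∀ i, p i ∈ Set.Icc (0 : ℝ) 1) (hpi : p i = 1) (H : FKGOrthantBound (insert i A) μ p)
    (hg : ∀ s, 0 ≤ g s) (hgm : Monotone g) :
    weightedSum (insert i A) μ g ≤
      weightedSum (insert i A) μ 1 * bernoulliMean (insert i A) p g := by
  have hdisj : Disjoint A {i} := Finset.disjoint_singleton_right.2 hi
  have hunion : insert i A = A ∪ {i} := by rw [Finset.union_comm, Finset.insert_eq]
  have hgi : Monotone fun s => g (insert i s) := fun s t hst =>
    hgm (Finset.insert_subset_insert i hst)
  rw [bernoulliMean_insert hi, hpi, sub_self, zero_mul, zero_add, one_mul, hunion]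
  calc weightedSum (A ∪ {i}) μ g
      ≤ weightedSum (A ∪ {i}) μ fun s => g (insert i s) :=
        weightedSum_mono H.nonneg fun s => hgm (Finset.subset_insert i s)
    _ = weightedSum A (marginalWeight {i} μ) fun s => g (insert i s) := by
        refine (weightedSum_marginalWeight hdisj fun η _ s hs => ?_).symm
        have : insert i (η ∪ s) = insert i η := by
          rcases Finset.subset_singleton_iff.1 hs with rfl | rfl <;> simp
        rw [this]
    _ ≤ weightedSum A (marginalWeight {i} μ) 1 * bernoulliMean A p fun s => g (insert i s) :=
        hA _ p hp ((hunion ▸ H).marginal hdisj) _ (fun s => hg _) hgi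
    _ = _ := by rw [weightedSum_marginalWeight (g := 1) (h := 1) hdisj fun _ _ _ _ => rfl]

theorem orthantInd_empty : orthantInd (∅ : Finset α) = 1 := by
  funext s
  simp [orthantInd]

theorem weightedSum_tilt_orthantInd (hi : i ∉ A) (hK : K ⊆ A) (x : ℝ) (μ : Finset α → ℝ) :
    weightedSum (insert i A) (tilt i x μ) (orthantInd K) =
      (1 - x) * weightedSum A μ (orthantInd K) +
        x * weightedSum A (fun s => μ (insert i s)) (orthantInd K) := by
  simp only [weightedSum_tilt hi, orthantInd_insert_of_subset hi hK]

theorem weightedSum_tilt_orthantInd_half (hi : i ∉ A) (hK : K ⊆ A) (μ : Finset α → ℝ) :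
    weightedSum (insert i A) (tilt i (1 / 2) μ) (orthantInd K) =
      1 / 2 * weightedSum (insert i A) μ (orthantInd K) := by
  rw [weightedSum_tilt_orthantInd hi hK, weightedSum_orthantInd_of_subset hi hK]
  ring

theorem tilt_orthant_le_of_prod_eq_zero (hi : i ∉ A) (hK : K ⊆ A)
    (H : FKGOrthantBound (insert i A) μ p) (h0 : ∏ j ∈ K, p j = 0) (x : ℝ) :
    weightedSum (insert i A) (tilt i x μ) (orthantInd K) = 0 := by
  have hbound := H.orthant_le K (hK.trans (Finset.subset_insert i A))
  rw [h0, mul_zero, weightedSum_orthantInd_of_subset hi hK] at hbound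
  have hzero := weightedSum_nonneg (A := A) H.nonneg (orthantInd_nonneg K)
  have hone := weightedSum_nonneg (A := A) (μ := fun s => μ (insert i s)) (fun _ => H.nonneg _)
    (orthantInd_nonneg K)
  rw [weightedSum_tilt_orthantInd hi hK, le_antisymm (by linarith) hzero,
    le_antisymm (by linarith) hone, mul_zero, mul_zero, add_zero]

theorem FKGOrthantBound.fiber_mass_le (hi : i ∉ A) (H : FKGOrthantBound (insert i A) μ p) :
    weightedSum A (fun s => μ (insert i s)) 1 ≤ weightedSum (insert i A) μ 1 * p i := by
  have hbound := H.orthant_le {i} (by simp)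
  rwa [← insert_empty_eq, weightedSum_orthantInd_insert hi (Finset.empty_subset A),
    insert_empty_eq, orthantInd_empty, Finset.prod_singleton] at hbound

theorem exists_tilt_tight (hi : i ∉ A) (hp : ∀ i, p i ∈ Set.Icc (0 : ℝ) 1)
    (H : FKGOrthantBound (insert i A) μ p) :
    ∃ x ∈ Set.Icc (1 / 2 : ℝ) 1,
      x * (weightedSum (insert i A) μ 1 * p i) ≤ weightedSum (insert i A) (tilt i x μ) 1 ∧
      (∀ K ⊆ A, weightedSum (insert i A) (tilt i x μ) (orthantInd K) ≤
        weightedSum (insert i A) (tilt i x μ) 1 * ∏ j ∈ K, p j) ∧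
      (x * (weightedSum (insert i A) μ 1 * p i) = weightedSum (insert i A) (tilt i x μ) 1 ∨
        ∃ T ⊆ A, T.Nonempty ∧ 0 < ∏ j ∈ T, p j ∧
          weightedSum (insert i A) (tilt i x μ) (orthantInd T) =
            weightedSum (insert i A) (tilt i x μ) 1 * ∏ j ∈ T, p j) := by
  set M : ℝ → ℝ := fun x => weightedSum (insert i A) (tilt i x μ) 1
  have hM_half : M (1 / 2) = 1 / 2 * weightedSum (insert i A) μ 1 := by
    simpa only [orthantInd_empty] using
      weightedSum_tilt_orthantInd_half hi (Finset.empty_subset A) μ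
  let slack : Option (Finset α) → ℝ → ℝ := fun k x => k.elim
    (x * (weightedSum (insert i A) μ 1 * p i) - M x)
    fun K => weightedSum (insert i A) (tilt i x μ) (orthantInd K) - M x * ∏ j ∈ K, p j
  have hcont : ∀ k, Continuous (slack k) := by
    rintro (_ | K) <;>
    · simp only [slack, M, Option.elim, weightedSum_tilt hi]
      fun_prop
  let s := Finset.insertNone (A.powerset.filter fun K => K.Nonempty ∧ 0 < ∏ j ∈ K, p j)
  have hhalf : ∀ k ∈ s, slack k (1 / 2) ≤ 0 := by
    rintro (_ | K) hk <;> simp only [slack, Option.elim, hM_half, sub_nonpos]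
    · nlinarith [(hp i).2, weightedSum_nonneg (A := insert i A) (g := 1) H.nonneg
        fun _ => zero_le_one]
    · have hK : K ⊆ A := by simp_all [s]
      rw [weightedSum_tilt_orthantInd_half hi hK, mul_assoc]
      exact mul_le_mul_of_nonneg_left (H.orthant_le K (hK.trans (Finset.subset_insert i A)))
        (by norm_num)
  have hone : 0 ≤ slack none 1 := by
    have hmass : M 1 = weightedSum A (fun s => μ (insert i s)) 1 := by
      simp only [M, weightedSum_tilt hi, sub_self, zero_mul, zero_add, one_mul]
      rfl
    simpa [slack, hmass] using H.fiber_mass_le hi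
  obtain ⟨x, hx, hle, k, hk, hzero⟩ := exists_forall_le_zero_and_eq_zero (s := s)
    (fun k _ => hcont k) (by norm_num) hhalf ⟨none, by simp [s], hone⟩
  refine ⟨x, hx, sub_nonpos.1 (hle none (by simp [s])), fun K hK => ?_, ?_⟩
  · rcases K.eq_empty_or_nonempty with rfl | hKne
    · simp [orthantInd_empty]
    rcases (Finset.prod_nonneg fun j _ => (hp j).1 : 0 ≤ ∏ j ∈ K, p j).eq_or_lt with h0 | hpos
    · rw [tilt_orthant_le_of_prod_eq_zero hi hK H h0.symm, ← h0, mul_zero]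
    · exact sub_nonpos.1 (hle (some K) (by simp [s, hK, hKne, hpos]))
  · rcases k with _ | T
    · exact .inl (sub_eq_zero.1 hzero)
    · have hT : T ⊆ A ∧ T.Nonempty ∧ 0 < ∏ j ∈ T, p j := by simpa [s] using hk
      exact .inr ⟨T, hT.1, hT.2.1, hT.2.2, sub_eq_zero.1 hzero⟩

theorem FKGOrthantBound.tilt_mass_pos (hi : i ∉ A) (H : FKGOrthantBound (insert i A) μ p) {x : ℝ}
    (hx : x ∈ Set.Icc (1 / 2 : ℝ) 1) (hm₁ : 0 < weightedSum A (fun s => μ (insert i s)) 1) :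
    0 < weightedSum (insert i A) (tilt i x μ) 1 := by
  rw [weightedSum_tilt hi]
  exact add_pos_of_nonneg_of_pos
    (mul_nonneg (sub_nonneg.2 hx.2) (weightedSum_nonneg H.nonneg fun _ => zero_le_one))
    (mul_pos (by linarith [hx.1]) hm₁)

theorem weightedSum_le_of_tight_of_subset (IH : ∀ T ⊂ A, OrthantBoundsSuffice T)
    (hp : ∀ i, p i ∈ Set.Icc (0 : ℝ) 1) (H : FKGOrthantBound A μ p) (hT : T ⊂ A)
    (hTne : T.Nonempty) (hmass : 0 < weightedSum A μ 1) (hTpos : 0 < ∏ j ∈ T, p j)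
    (htight : weightedSum A μ (orthantInd T) = weightedSum A μ 1 * ∏ i ∈ T, p i)
    (hg : ∀ s, 0 ≤ g s) (hgm : Monotone g) :
    weightedSum A μ g ≤ weightedSum A μ 1 * bernoulliMean A p g := by
  have hunion : T ∪ A \ T = A := Finset.union_sdiff_of_subset hT.subset
  have key := weightedSum_le_of_tight (T := T) (R := A \ T) (μ := μ) (p := p) (g := g)
    Finset.disjoint_sdiff (IH T hT) (IH _ (Finset.sdiff_ssubset hT.subset hTne)) hp
  rw [hunion] at key
  exact key H htight (htight ▸ mul_pos hmass hTpos) hg hgm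

theorem weightedSum_tilt_le (hi : i ∉ A) (IH : ∀ T ⊂ insert i A, OrthantBoundsSuffice T)
    (hp : ∀ i, p i ∈ Set.Icc (0 : ℝ) 1) (H : FKGOrthantBound (insert i A) μ p)
    (hm₁ : 0 < weightedSum A (fun s => μ (insert i s)) 1) (hg : ∀ s, 0 ≤ g s)
    (hgm : Monotone g) :
    ∃ x ∈ Set.Icc (1 / 2 : ℝ) 1, weightedSum (insert i A) (tilt i x μ) g ≤
      weightedSum (insert i A) (tilt i x μ) 1 * bernoulliMean A p g +
        x * (weightedSum (insert i A) μ 1 * p i) *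
          (bernoulliMean A p (fun s => g (insert i s)) - bernoulliMean A p g) := by
  obtain ⟨x, hx, hq_le, horthant, htight⟩ := exists_tilt_tight hi hp H
  refine ⟨x, hx, ?_⟩
  set M := weightedSum (insert i A) (tilt i x μ) 1
  have hx01 : x ∈ Set.Icc (0 : ℝ) 1 := ⟨by linarith [hx.1], hx.2⟩
  have hMpos : 0 < M := H.tilt_mass_pos hi hx hm₁
  obtain ⟨q, hq⟩ : ∃ q, M * q = x * (weightedSum (insert i A) μ 1 * p i) :=
    ⟨_, mul_div_cancel₀ _ hMpos.ne'⟩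
  set p' := Function.update p i q
  have hp'i : p' i = q := Function.update_self i q p
  have hp'A : ∀ j ∈ A, p' j = p j := fun j hj =>
    Function.update_of_ne (ne_of_mem_of_not_mem hj hi) q p
  have hq01 : q ∈ Set.Icc (0 : ℝ) 1 := by
    have := weightedSum_nonneg (A := insert i A) H.nonneg (g := 1) fun _ => zero_le_one
    exact ⟨nonneg_of_mul_nonneg_right (hq ▸ mul_nonneg hx01.1 (mul_nonneg this (hp i).1)) hMpos,
      le_of_mul_le_mul_left (by rwa [hq, mul_one]) hMpos⟩
  have hp'01 : ∀ j, p' j ∈ Set.Icc (0 : ℝ) 1 :=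
    (Function.forall_update_iff p fun _ y => y ∈ Set.Icc (0 : ℝ) 1).2 ⟨hq01, fun j _ => hp j⟩
  have H' : FKGOrthantBound (insert i A) (tilt i x μ) p' :=
    H.tilt_of_orthant_le hi hx01 hq horthant
  suffices hmain : weightedSum (insert i A) (tilt i x μ) g ≤
      M * bernoulliMean (insert i A) p' g by
    rw [bernoulliMean_insert hi, hp'i, bernoulliMean_congr_of_eqOn hp'A,
      bernoulliMean_congr_of_eqOn hp'A] at hmain
    exact hmain.trans_eq (by rw [← hq]; ring)
  rcases htight with hq1 | ⟨T, hT, hTne, hTpos, hTeq⟩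
  · have : p' i = 1 := by
      rw [hp'i]
      exact mul_left_cancel₀ hMpos.ne' (by rw [hq, hq1, mul_one])
    exact weightedSum_le_of_eq_one hi (IH A (Finset.ssubset_insert hi)) hp'01 this H' hg hgm
  · have hprod : ∏ j ∈ T, p' j = ∏ j ∈ T, p j :=
      Finset.prod_congr rfl fun j hj => hp'A j (hT hj)
    exact weightedSum_le_of_tight_of_subset IH hp'01 H'
      (hT.trans_ssubset (Finset.ssubset_insert hi)) hTne hMpos (hprod ▸ hTpos) (hprod ▸ hTeq)
      hg hgm

theorem orthantBoundsSuffice (A : Finset α) : OrthantBoundsSuffice A := by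
  induction A using Finset.strongInduction with
  | H A IH =>
    intro μ p hp H g hg hgm
    rcases A.eq_empty_or_nonempty with rfl | ⟨i, hiA⟩
    · simp [bernoulliMean_empty, weightedSum]
    obtain ⟨A, hi, rfl⟩ : ∃ B, i ∉ B ∧ insert i B = A :=
      ⟨A.erase i, Finset.notMem_erase i A, Finset.insert_erase hiA⟩
    set e₀ := bernoulliMean A p g
    set e₁ := bernoulliMean A p fun s => g (insert i s)
    have he : 0 ≤ e₁ - e₀ :=
      sub_nonneg.2 (bernoulliMean_mono hp fun s => hgm (Finset.subset_insert i s))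
    have hslice : weightedSum A μ g ≤ weightedSum A μ 1 * e₀ :=
      IH A (Finset.ssubset_insert hi) μ p hp (H.slice hi) g hg hgm
    have hm₀ := weightedSum_nonneg (A := A) H.nonneg (g := 1) fun _ => zero_le_one
    have hm₁ : 0 ≤ weightedSum A (fun s => μ (insert i s)) 1 :=
      weightedSum_nonneg (fun _ => H.nonneg _) fun _ => zero_le_one
    have hgoal : weightedSum (insert i A) μ 1 * bernoulliMean (insert i A) p g =
        weightedSum (insert i A) μ 1 * e₀ + weightedSum (insert i A) μ 1 * p i * (e₁ - e₀) := by
      rw [bernoulliMean_insert hi]; ring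
    rw [hgoal]
    have hmass : weightedSum (insert i A) μ 1 =
        weightedSum A μ 1 + weightedSum A (fun s => μ (insert i s)) 1 := weightedSum_insert hi μ 1
    rcases hm₁.eq_or_lt with hm₁0 | hm₁pos
    · rw [hmass, ← hm₁0, weightedSum_insert hi,
        weightedSum_eq_zero_of_mass_eq_zero (fun _ => H.nonneg _) hm₁0.symm, add_zero, add_zero]
      exact hslice.trans (le_add_of_nonneg_right (mul_nonneg (mul_nonneg hm₀ (hp i).1) he))
    -- The tilted inequality is affine in the tilt `x`; it holds at `0` and at some `x ≥ 1 / 2`.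
    obtain ⟨x, hx, htilt⟩ := weightedSum_tilt_le hi IH hp H hm₁pos hg hgm
    rw [weightedSum_tilt hi, weightedSum_tilt hi] at htilt
    have htilt' : (1 - x) * weightedSum A μ g +
        x * weightedSum A (fun s => μ (insert i s)) (fun s => g (insert i s)) ≤
        ((1 - x) * weightedSum A μ 1 + x * weightedSum A (fun s => μ (insert i s)) 1) * e₀ +
          x * (weightedSum (insert i A) μ 1 * p i) * (e₁ - e₀) := htilt
    rw [hmass, weightedSum_insert hi] at *
    refine le_of_mul_le_mul_left ?_ (show (0 : ℝ) < x by linarith [hx.1])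
    nlinarith [mul_nonneg (show (0 : ℝ) ≤ 2 * x - 1 by linarith [hx.1]) (sub_nonneg.2 hslice)]

end WeightedSubsets

section OrthantMeans

theorem orthantInd_eq_indicator {α : Type*} (K : Finset α) :
    orthantInd K = (Set.Ici K).indicator 1 := by
  funext s
  simp [orthantInd, Set.indicator_apply]

theorem bernoulliMean_orthantInd {α : Type*} {A K : Finset α} (p : α → ℝ) (hK : K ⊆ A) :
    bernoulliMean A p (orthantInd K) = ∏ j ∈ K, p j := by
  induction A using Finset.induction generalizing K with
  | empty => simp [Finset.subset_empty.1 hK, bernoulliMean_empty, orthantInd]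
  | insert i A hi ih =>
    rw [bernoulliMean_insert hi]
    by_cases hiK : i ∈ K
    · obtain ⟨L, hiL, rfl⟩ : ∃ L, i ∉ L ∧ insert i L = K :=
        ⟨K.erase i, Finset.notMem_erase i K, Finset.insert_erase hiK⟩
      have hLA : L ⊆ A := (Finset.insert_subset_insert_iff hiL).1 hK
      have hzero : bernoulliMean A p (orthantInd (insert i L)) = 0 :=
        Finset.sum_eq_zero fun s hs => by
          rw [orthantInd, if_neg fun h => hi (Finset.mem_powerset.1 hs (h (by simp))), mul_zero]
      simp only [orthantInd_insert_insert hi hLA]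
      rw [hzero, ih hLA, Finset.prod_insert hiL, mul_zero, zero_add]
    · have hKA : K ⊆ A := (Finset.subset_insert_iff_of_notMem hiK).1 hK
      simp only [orthantInd_insert_of_subset hi hKA]
      rw [ih hKA]
      ring

theorem biInter_Ici_eq_Ici_sup' {α β : Type*} [SemilatticeSup α] {u : Finset β}
    (hu : u.Nonempty) (f : β → α) : ⋂ k ∈ u, Set.Ici (f k) = Set.Ici (u.sup' hu f) := by
  ext x
  simp

theorem bernoulliMean_indicator_biUnion_Ici {α β : Type*} (A : Finset α) (p : α → ℝ)
    (𝒦 : Finset β) (f : β → Finset α) :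
    bernoulliMean A p ((⋃ k ∈ 𝒦, Set.Ici (f k)).indicator 1) =
      ∑ u ∈ 𝒦.powerset with u.Nonempty,
        (-1 : ℝ) ^ (u.card + 1) * bernoulliMean A p ((⋂ k ∈ u, Set.Ici (f k)).indicator 1) := by
  simp only [bernoulliMean, weightedSum, Finset.mul_sum]
  rw [Finset.sum_comm]
  refine Finset.sum_congr rfl fun s _ => ?_
  rw [Finset.indicator_biUnion_eq_sum_powerset, Finset.mul_sum]
  refine Finset.sum_congr rfl fun u _ => ?_
  rw [zsmul_eq_mul]
  push_cast
  ring

theorem exists_mul_eq_of_le {a b : ℝ} (ha : 0 ≤ a) (hab : a ≤ b) :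
    ∃ q ∈ Set.Icc (0 : ℝ) 1, q * b = a := by
  obtain rfl | hb := (ha.trans hab).eq_or_lt
  · exact ⟨0, by simp, by linarith⟩
  · exact ⟨a / b, ⟨by positivity, (div_le_one hb).2 hab⟩, div_mul_cancel₀ a hb.ne'⟩

theorem exists_prod_filter_le_eq {F : ℝ → ℝ} (hF : Antitone F)
    (hI : ∀ t, F t ∈ Set.Icc (0 : ℝ) 1) (T : Finset ℝ) :
    ∃ p : ℝ → ℝ, (∀ t, p t ∈ Set.Icc (0 : ℝ) 1) ∧
      ∀ s ∈ T, ∏ t ∈ T.filter (fun t => t ≤ s), p t = F s := by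
  induction T using Finset.induction_on_max with
  | empty => exact ⟨fun _ => 1, by simp, by simp⟩
  | insert a T ha ih =>
    obtain ⟨p, hpI, hp⟩ := ih
    have haT : a ∉ T := fun h => lt_irrefl _ (ha a h)
    have hle : F a ≤ ∏ t ∈ T, p t := by
      obtain rfl | hne := T.eq_empty_or_nonempty
      · simpa using (hI a).2
      · have hmax := hp _ (T.max'_mem hne)
        rw [Finset.filter_true_of_mem fun t ht => T.le_max' t ht] at hmax
        exact hmax ▸ hF (ha _ (T.max'_mem hne)).le
    obtain ⟨q, hqI, hq⟩ := exists_mul_eq_of_le (hI a).1 hle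
    refine ⟨Function.update p a q,
      (Function.forall_update_iff p fun _ b => b ∈ Set.Icc (0 : ℝ) 1).2 ⟨hqI, fun t _ => hpI t⟩,
      fun s hs => ?_⟩
    obtain rfl | hs := Finset.mem_insert.1 hs
    · rw [Finset.filter_true_of_mem fun t ht => (Finset.mem_insert.1 ht).elim le_of_eq
        fun h => (ha t h).le, Finset.prod_insert haT, Function.update_self,
        Finset.prod_update_of_notMem haT, hq]
    · rw [Finset.filter_insert, if_neg (not_le.2 (ha s hs)),
        Finset.prod_update_of_notMem (fun h => haT (Finset.mem_filter.1 h).1), hp s hs]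

theorem exists_prod_filter_le_eq_prod_measure_Ici {ι : Type*} (ζ : ι → Measure ℝ)
    [∀ i, IsProbabilityMeasure (ζ i)] (T : Finset ℝ) :
    ∃ p : ι × ℝ → ℝ, (∀ q, p q ∈ Set.Icc (0 : ℝ) 1) ∧
      ∀ (S : Finset ι) (t : ι → ℝ), (∀ i ∈ S, t i ∈ T) →
        ∏ q ∈ (S ×ˢ T).filter (fun q => q.2 ≤ t q.1), p q =
          ∏ i ∈ S, (ζ i).real (Set.Ici (t i)) := by
  choose p hpI hp using fun i => exists_prod_filter_le_eq (F := fun t => (ζ i).real (Set.Ici t))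
    (fun s t hst => measureReal_mono (Set.Ici_subset_Ici.2 hst))
    (fun t => ⟨measureReal_nonneg, measureReal_le_one⟩) T
  refine ⟨fun q => p q.1 q.2, fun q => hpI _ _, fun S t ht => ?_⟩
  rw [Finset.prod_filter, Finset.prod_product]
  exact Finset.prod_congr rfl fun i hi => by rw [← hp i (t i) (ht i hi), Finset.prod_filter]

end OrthantMeans

section ThresholdEncoding

variable {ι : Type*} [Fintype ι]

/-- The set of `(i, t)` with `t ∈ T` and `t ≤ x i`. It encodes which of the thresholds `T` the
coordinates of `x` exceed, and turns `⊔` and `⊓` into `∪` and `∩`. -/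
noncomputable def thresholdSet (T : Finset ℝ) (x : ι → ℝ) : Finset (ι × ℝ) :=
  (Finset.univ ×ˢ T).filter fun q => q.2 ≤ x q.1

variable {T : Finset ℝ} {k x y : ι → ℝ} {q : ι × ℝ} {μ : Measure (ι → ℝ)} {ζ : ι → Measure ℝ}
  {p : ι × ℝ → ℝ}

theorem thresholdSet_subset (T : Finset ℝ) (x : ι → ℝ) :
    thresholdSet T x ⊆ Finset.univ ×ˢ T :=
  Finset.filter_subset _ _

theorem mem_thresholdSet : q ∈ thresholdSet T x ↔ q.2 ∈ T ∧ q.2 ≤ x q.1 := by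
  simp [thresholdSet]

theorem thresholdSet_sup (T : Finset ℝ) (x y : ι → ℝ) :
    thresholdSet T (x ⊔ y) = thresholdSet T x ∪ thresholdSet T y := by
  ext q
  simp only [mem_thresholdSet, Finset.mem_union, Pi.sup_apply, le_sup_iff, and_or_left]

theorem thresholdSet_inf (T : Finset ℝ) (x y : ι → ℝ) :
    thresholdSet T (x ⊓ y) = thresholdSet T x ∩ thresholdSet T y := by
  ext q
  simp only [mem_thresholdSet, Finset.mem_inter, Pi.inf_apply, le_inf_iff]
  tauto

theorem thresholdSet_le_iff (hk : ∀ i, k i ∈ T) : thresholdSet T k ≤ thresholdSet T x ↔ k ≤ x :=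
  ⟨fun h i => (mem_thresholdSet.1 (h (mem_thresholdSet.2 ⟨hk i, le_rfl⟩ : (i, k i) ∈ _))).2,
    fun h q hq => mem_thresholdSet.2
      ⟨(mem_thresholdSet.1 hq).1, (mem_thresholdSet.1 hq).2.trans (h q.1)⟩⟩

theorem measurableSet_thresholdSet_preimage_singleton (T : Finset ℝ) (s : Finset (ι × ℝ)) :
    MeasurableSet (thresholdSet (ι := ι) T ⁻¹' {s}) := by
  have heq : thresholdSet (ι := ι) T ⁻¹' {s} = {x | ∀ q ∈ s, q.2 ∈ T ∧ q.2 ≤ x q.1} ∩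
      {x | ∀ q ∈ (Finset.univ ×ˢ T) \ s, ¬ q.2 ≤ x q.1} := by
    ext x
    simp only [Set.mem_preimage, Set.mem_singleton_iff, Set.mem_inter_iff, Set.mem_ofPred_eq,
      Finset.Subset.antisymm_iff, Finset.subset_iff, mem_thresholdSet, Finset.mem_sdiff,
      Finset.mem_product, Finset.mem_univ, true_and]
    grind
  have hcoord : ∀ q : ι × ℝ, MeasurableSet {x : ι → ℝ | q.2 ≤ x q.1} := fun q =>
    measurableSet_le measurable_const (measurable_pi_apply _)
  rw [heq, Set.ofPred_forall, Set.ofPred_forall]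
  simp only [Set.ofPred_forall]
  exact .inter (Finset.measurableSet_biInter _ fun q _ => (MeasurableSet.const _).inter (hcoord q))
    (Finset.measurableSet_biInter _ fun q _ => (hcoord q).compl)

theorem weightedSum_thresholdSet (μ : Measure (ι → ℝ)) [IsFiniteMeasure μ] (T : Finset ℝ)
    (Q : Set (Finset (ι × ℝ))) :
    weightedSum (Finset.univ ×ˢ T) (fun s => μ.real (thresholdSet T ⁻¹' {s})) (Q.indicator 1) =
      μ.real (thresholdSet T ⁻¹' Q) := by
  simp only [weightedSum, Set.indicator_apply, Pi.one_apply, mul_ite, mul_one, mul_zero]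
  rw [← Finset.sum_filter, sum_measureReal_preimage_singleton _
    fun s _ => measurableSet_thresholdSet_preimage_singleton T s]
  congr 1
  ext x
  simp [thresholdSet_subset]

theorem weightedSum_thresholdSet_one (μ : Measure (ι → ℝ)) [IsFiniteMeasure μ] (T : Finset ℝ) :
    weightedSum (Finset.univ ×ˢ T) (fun s => μ.real (thresholdSet T ⁻¹' {s})) 1 =
      μ.real Set.univ := by
  rw [← Set.indicator_univ (1 : Finset (ι × ℝ) → ℝ), weightedSum_thresholdSet, Set.preimage_univ]

theorem thresholdSet_sup' {u : Finset (ι → ℝ)} (hu : u.Nonempty) (T : Finset ℝ) :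
    thresholdSet T (u.sup' hu id) = u.sup' hu (thresholdSet T) := by
  rw [Finset.apply_sup'_eq_sup'_comp hu (thresholdSet T) (thresholdSet_sup T)]
  rfl

theorem bernoulliMean_thresholdSet_eq_pi_real [∀ i, IsProbabilityMeasure (ζ i)]
    (hp : ∀ k : ι → ℝ, (∀ i, k i ∈ T) →
      ∏ q ∈ thresholdSet T k, p q = ∏ i, (ζ i).real (Set.Ici (k i)))
    (𝒦 : Finset (ι → ℝ)) (h𝒦 : ∀ k ∈ 𝒦, ∀ i, k i ∈ T) :
    bernoulliMean (Finset.univ ×ˢ T) p ((⋃ k ∈ 𝒦, Set.Ici (thresholdSet T k)).indicator 1) =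
      (Measure.pi ζ).real (⋃ k ∈ 𝒦, Set.Ici k) := by
  rw [bernoulliMean_indicator_biUnion_Ici, measureReal_biUnion_eq_sum_powerset
    fun _ _ => isClosed_Ici.measurableSet]
  refine Finset.sum_congr rfl fun u hu => ?_
  obtain ⟨hu𝒦, hu⟩ := Finset.mem_filter.1 hu
  have hsup : ∀ i, u.sup' hu id i ∈ T := fun i => by
    rw [Finset.sup'_apply]
    obtain ⟨k, hk, hki⟩ := Finset.exists_mem_eq_sup' hu fun k : ι → ℝ => id k i
    exact hki ▸ h𝒦 k (Finset.mem_powerset.1 hu𝒦 hk) i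
  have hpi : (Measure.pi ζ).real (Set.Ici (u.sup' hu id)) =
      ∏ i, (ζ i).real (Set.Ici (u.sup' hu id i)) := by
    rw [← Set.pi_univ_Ici, measureReal_def, Measure.pi_pi, ENNReal.toReal_prod]
    rfl
  have hIci : ⋂ k ∈ u, Set.Ici k = Set.Ici (u.sup' hu id) := biInter_Ici_eq_Ici_sup' hu id
  rw [biInter_Ici_eq_Ici_sup' hu (thresholdSet T), ← thresholdSet_sup', ← orthantInd_eq_indicator,
    bernoulliMean_orthantInd p (thresholdSet_subset T _), hp _ hsup, hIci, hpi]

end ThresholdEncoding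

theorem monotone_indicator_one {α : Type*} [Preorder α] {U : Set α} (hU : IsUpperSet U) :
    Monotone (U.indicator (1 : α → ℝ)) := fun s t hst => by
  by_cases hs : s ∈ U
  · simp [hs, hU hst hs]
  · rw [Set.indicator_of_notMem hs]
    exact Set.indicator_apply_nonneg fun _ => zero_le_one

section ProductDomination

variable {ι : Type*}

/-- The four-set form of log-supermodularity (the FKG lattice condition), without reference to a
density. -/
def IsLogSupermodular (μ : Measure (ι → ℝ)) : Prop :=
  ∀ ⦃A B C D : Set (ι → ℝ)⦄, MeasurableSet A → MeasurableSet B → MeasurableSet C →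
    MeasurableSet D → (∀ x ∈ A, ∀ y ∈ B, x ⊔ y ∈ C ∧ x ⊓ y ∈ D) → μ A * μ B ≤ μ C * μ D

/-- The mass under `μ` of each increasing orthant, relative to the total mass, is at most its mass
under the product of the `ζ i`. -/
def HasOrthantBound (μ : Measure (ι → ℝ)) (ζ : ι → Measure ℝ) : Prop :=
  ∀ (S : Finset ι) (t : ι → ℝ),
    μ {x | ∀ i ∈ S, t i ≤ x i} ≤ μ Set.univ * ∏ i ∈ S, ζ i (Set.Ici (t i))

variable {μ : Measure (ι → ℝ)} [IsFiniteMeasure μ] {ζ : ι → Measure ℝ}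
  [∀ i, IsProbabilityMeasure (ζ i)]

theorem HasOrthantBound.measureReal_le (h : HasOrthantBound μ ζ) (S : Finset ι) (t : ι → ℝ) :
    μ.real {x | ∀ i ∈ S, t i ≤ x i} ≤ μ.real Set.univ * ∏ i ∈ S, (ζ i).real (Set.Ici (t i)) := by
  have hfin : μ Set.univ * ∏ i ∈ S, ζ i (Set.Ici (t i)) ≠ ∞ :=
    ENNReal.mul_ne_top (measure_ne_top _ _) (ENNReal.prod_ne_top fun i _ => measure_ne_top _ _)
  simpa only [measureReal_def, ENNReal.toReal_mul, ENNReal.toReal_prod] using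
    ENNReal.toReal_mono hfin (h S t)

variable [Fintype ι] {T : Finset ℝ} {p : ι × ℝ → ℝ}

theorem HasOrthantBound.measureReal_subset_thresholdSet_le (h : HasOrthantBound μ ζ)
    (hpI : ∀ q, p q ∈ Set.Icc (0 : ℝ) 1)
    (hp : ∀ (S : Finset ι) (t : ι → ℝ), (∀ i ∈ S, t i ∈ T) →
      ∏ q ∈ (S ×ˢ T).filter (fun q => q.2 ≤ t q.1), p q = ∏ i ∈ S, (ζ i).real (Set.Ici (t i)))
    {K : Finset (ι × ℝ)} (hK : K ⊆ Finset.univ ×ˢ T) :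
    μ.real (thresholdSet T ⁻¹' Set.Ici K) ≤ μ.real Set.univ * ∏ q ∈ K, p q := by
  have hmax : ∀ i, ∃ t, i ∈ K.image Prod.fst → (i, t) ∈ K ∧ ∀ t', (i, t') ∈ K → t' ≤ t := by
    intro i
    by_cases hi : i ∈ K.image Prod.fst
    · obtain ⟨⟨j, u⟩, hjK, rfl⟩ := Finset.mem_image.1 hi
      obtain ⟨⟨j', t⟩, htK, hmax⟩ := (K.filter fun q => q.1 = j).exists_max_image Prod.snd
        ⟨(j, u), Finset.mem_filter.2 ⟨hjK, rfl⟩⟩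
      obtain ⟨hjt, rfl⟩ : (j', t) ∈ K ∧ j' = j := Finset.mem_filter.1 htK
      exact ⟨t, fun _ => ⟨hjt, fun t' ht' => hmax (j', t') (Finset.mem_filter.2 ⟨ht', rfl⟩)⟩⟩
    · exact ⟨0, fun hi' => absurd hi' hi⟩
  choose t ht using hmax
  have hKT : ∀ q ∈ K, q.2 ∈ T := fun q hq => (Finset.mem_product.1 (hK hq)).2
  have hsub : K ⊆ (K.image Prod.fst ×ˢ T).filter fun q => q.2 ≤ t q.1 := fun q hq =>
    have hqS := Finset.mem_image_of_mem Prod.fst hq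
    Finset.mem_filter.2 ⟨Finset.mem_product.2 ⟨hqS, hKT q hq⟩, (ht q.1 hqS).2 q.2 hq⟩
  calc μ.real (thresholdSet T ⁻¹' Set.Ici K)
      ≤ μ.real {x | ∀ i ∈ K.image Prod.fst, t i ≤ x i} :=
        measureReal_mono fun x hx i hi => (mem_thresholdSet.1 (hx (ht i hi).1)).2
    _ ≤ μ.real Set.univ * ∏ i ∈ K.image Prod.fst, (ζ i).real (Set.Ici (t i)) :=
        h.measureReal_le _ t
    _ = μ.real Set.univ *
          ∏ q ∈ (K.image Prod.fst ×ˢ T).filter (fun q => q.2 ≤ t q.1), p q := by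
        rw [hp _ t fun i hi => hKT _ (ht i hi).1]
    _ ≤ μ.real Set.univ * ∏ q ∈ K, p q := by
        refine mul_le_mul_of_nonneg_left ?_ measureReal_nonneg
        exact Finset.prod_le_prod_of_subset_of_le_one hsub (fun q _ => (hpI q).1)
          fun q _ _ => (hpI q).2

theorem fkgOrthantBound_thresholdSet (hμ : IsLogSupermodular μ)
    (horth : ∀ K ⊆ Finset.univ ×ˢ T,
      μ.real (thresholdSet T ⁻¹' Set.Ici K) ≤ μ.real Set.univ * ∏ q ∈ K, p q) :
    FKGOrthantBound (Finset.univ ×ˢ T) (fun s => μ.real (thresholdSet T ⁻¹' {s})) p where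
  nonneg _ := measureReal_nonneg
  mul_le s _ t _ := by
    have hmeas := measurableSet_thresholdSet_preimage_singleton (ι := ι) T
    have hle := hμ (hmeas s) (hmeas t) (hmeas (s ∪ t)) (hmeas (s ∩ t)) fun x hx y hy =>
      ⟨(thresholdSet_sup T x y).trans (congrArg₂ _ hx hy),
        (thresholdSet_inf T x y).trans (congrArg₂ _ hx hy)⟩
    have hreal := ENNReal.toReal_mono
      (ENNReal.mul_ne_top (measure_ne_top _ _) (measure_ne_top _ _)) hle
    rw [ENNReal.toReal_mul, ENNReal.toReal_mul, mul_comm (μ _).toReal (μ (_ ⁻¹' {s ∩ t})).toReal]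
      at hreal
    simp only [measureReal_def]
    -- The two sides differ only in their `DecidableEq (ι × ℝ)` instances.
    convert hreal
  orthant_le K hK := by
    rw [orthantInd_eq_indicator, weightedSum_thresholdSet, weightedSum_thresholdSet_one]
    exact horth K hK

theorem measureReal_biUnion_Ici_le (hμ : IsLogSupermodular μ) (h : HasOrthantBound μ ζ)
    (𝒦 : Finset (ι → ℝ)) :
    μ.real (⋃ k ∈ 𝒦, Set.Ici k) ≤
      μ.real Set.univ * (Measure.pi ζ).real (⋃ k ∈ 𝒦, Set.Ici k) := by
  obtain ⟨T, hT⟩ : ∃ T : Finset ℝ, ∀ k ∈ 𝒦, ∀ i, k i ∈ T :=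
    ⟨𝒦.biUnion fun k => Finset.univ.image k, fun k hk i =>
      Finset.mem_biUnion.2 ⟨k, hk, Finset.mem_image_of_mem _ (Finset.mem_univ i)⟩⟩
  obtain ⟨p, hpI, hp⟩ := exists_prod_filter_le_eq_prod_measure_Ici ζ T
  have hH := fkgOrthantBound_thresholdSet hμ fun K hK =>
    h.measureReal_subset_thresholdSet_le hpI hp hK
  have hup : IsUpperSet (⋃ k ∈ 𝒦, Set.Ici (thresholdSet T k)) :=
    isUpperSet_iUnion₂ fun k _ => isUpperSet_Ici _
  have hdom := orthantBoundsSuffice _ _ p hpI hH _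
    (Set.indicator_nonneg (f := 1) fun _ _ => zero_le_one) (monotone_indicator_one hup)
  rw [weightedSum_thresholdSet, weightedSum_thresholdSet_one, bernoulliMean_thresholdSet_eq_pi_real
    (fun k hk => hp Finset.univ k fun i _ => hk i) 𝒦 hT] at hdom
  convert hdom using 2
  ext x
  simp only [Set.mem_preimage, Set.mem_iUnion, Set.mem_Ici, exists_prop]
  exact exists_congr fun k => and_congr_right fun hk => (thresholdSet_le_iff (hT k hk)).symm

open scoped Pointwise

theorem measureReal_le_of_isCompact
    (hU : ∀ 𝒦 : Finset (ι → ℝ), μ.real (⋃ k ∈ 𝒦, Set.Ici k) ≤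
      μ.real Set.univ * (Measure.pi ζ).real (⋃ k ∈ 𝒦, Set.Ici k))
    {K : Set (ι → ℝ)} (hK : IsCompact K) :
    μ.real K ≤ μ.real Set.univ * (Measure.pi ζ).real (K + Set.Ici 0) := by
  set F : Set (ι → ℝ) := K + Set.Ici 0
  have hF : IsClosed F := isClosed_Ici.add_left_of_isCompact hK
  have hFup : IsUpperSet F := (isUpperSet_Ici 0).add_left
  let ε : ℕ → ι → ℝ := fun n _ => 1 / ((n : ℝ) + 1)
  have hε : ∀ n i, 0 < ε n i := fun n _ => Nat.one_div_pos_of_nat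
  let Fn : ℕ → Set (ι → ℝ) := fun n => {x | x + ε n ∈ F}
  have hbound : ∀ n, μ.real K ≤ μ.real Set.univ * (Measure.pi ζ).real (Fn n) := by
    intro n
    obtain ⟨t, htK, hcov⟩ := hK.elim_nhds_subcover (fun k => Set.Ici (k - ε n)) fun k _ =>
      pi_Ici_mem_nhds fun i => sub_lt_self (k i) (hε n i)
    have hcov' : K ⊆ ⋃ k ∈ t.image (· - ε n), Set.Ici k := by
      simpa only [Finset.set_biUnion_finset_image] using hcov
    have hshift : ⋃ k ∈ t.image (· - ε n), Set.Ici k ⊆ Fn n := by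
      rw [Finset.set_biUnion_finset_image]
      exact Set.iUnion₂_subset fun k hk x hx =>
        hFup (sub_le_iff_le_add.1 hx) ⟨k, htK k hk, 0, Set.self_mem_Ici, add_zero k⟩
    exact (measureReal_mono hcov' (measure_ne_top _ _)).trans <| (hU _).trans <|
      mul_le_mul_of_nonneg_left (measureReal_mono hshift) measureReal_nonneg
  have hanti : Antitone Fn := fun n m hnm x hx => hFup
    (add_le_add_right (fun i => Nat.one_div_le_one_div hnm) x) hx
  have hinter : ⋂ n, Fn n ⊆ F := fun x hx => by
    have hlim : Filter.Tendsto (fun n => x + ε n) Filter.atTop (nhds (x + 0)) :=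
      tendsto_const_nhds.add (tendsto_pi_nhds.2 fun _ => tendsto_one_div_add_atTop_nhds_zero_nat)
    rw [add_zero] at hlim
    exact hF.mem_of_tendsto hlim (.of_forall (Set.mem_iInter.1 hx))
  have hlim : Filter.Tendsto (fun n => (Measure.pi ζ).real (Fn n)) Filter.atTop
      (nhds ((Measure.pi ζ).real (⋂ n, Fn n))) :=
    (ENNReal.tendsto_toReal (measure_ne_top _ _)).comp <| tendsto_measure_iInter_atTop
      (fun n => (hF.measurableSet.preimage (measurable_id.add_const (ε n))).nullMeasurableSet)
      hanti ⟨0, measure_ne_top _ _⟩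
  exact (ge_of_tendsto' (hlim.const_mul _) hbound).trans
    (mul_le_mul_of_nonneg_left (measureReal_mono hinter) measureReal_nonneg)

theorem measure_le_of_isUpperSet
    (hU : ∀ 𝒦 : Finset (ι → ℝ), μ.real (⋃ k ∈ 𝒦, Set.Ici k) ≤
      μ.real Set.univ * (Measure.pi ζ).real (⋃ k ∈ 𝒦, Set.Ici k))
    {A : Set (ι → ℝ)} (hA : MeasurableSet A) (hup : IsUpperSet A) :
    μ A ≤ μ Set.univ * Measure.pi ζ A := by
  refine le_of_forall_lt fun r hr => ?_
  obtain ⟨K, hKA, hK, hrK⟩ := hA.exists_lt_isCompact hr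
  refine hrK.trans_le ?_
  have hsub : K + Set.Ici 0 ⊆ A := by
    rintro _ ⟨k, hk, v, hv, rfl⟩
    exact hup (le_add_of_nonneg_right hv) (hKA hk)
  have hle := (measureReal_le_of_isCompact hU hK).trans
    (mul_le_mul_of_nonneg_left (measureReal_mono hsub) measureReal_nonneg)
  rw [measureReal_def, measureReal_def, measureReal_def, ← ENNReal.toReal_mul] at hle
  exact (ENNReal.toReal_le_toReal (measure_ne_top _ _)
    (ENNReal.mul_ne_top (measure_ne_top _ _) (measure_ne_top _ _))).1 hle

theorem lintegral_le_of_hasOrthantBound (hμ : IsLogSupermodular μ) (h : HasOrthantBound μ ζ)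
    {g : (ι → ℝ) → ℝ≥0∞} (hg : ∀ x, g x ≠ ∞) (hgm : Measurable g) (hgmono : Monotone g) :
    ∫⁻ x, g x ∂μ ≤ μ Set.univ * ∫⁻ x, g x ∂Measure.pi ζ := by
  have hreal : g = fun x => ENNReal.ofReal (g x).toReal :=
    funext fun x => (ENNReal.ofReal_toReal (hg x)).symm
  have hmono : Monotone fun x => (g x).toReal := fun x y hxy =>
    ENNReal.toReal_mono (hg y) (hgmono hxy)
  have hnonneg : ∀ x, 0 ≤ (g x).toReal := fun x => ENNReal.toReal_nonneg
  have hmeas : Measurable fun x => (g x).toReal := hgm.ennreal_toReal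
  rw [hreal, lintegral_eq_lintegral_meas_lt μ (.of_forall hnonneg) hmeas.aemeasurable,
    lintegral_eq_lintegral_meas_lt _ (.of_forall hnonneg) hmeas.aemeasurable,
    ← lintegral_const_mul' _ _ (measure_ne_top _ _)]
  exact lintegral_mono fun t => measure_le_of_isUpperSet (measureReal_biUnion_Ici_le hμ h)
    (measurableSet_lt measurable_const hmeas) fun x y hxy hx => hx.trans_le (hmono hxy)

end ProductDomination

section Energy

variable {V : Type*} (G : SimpleGraph V) [∀ x : V, Fintype (G.neighborSet x)]

/-- A finite vertex set together with all its neighbours. -/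
noncomputable def closedNeighborFinset (I : Finset V) : Finset V :=
  I ∪ I.biUnion fun a => G.neighborFinset a

/-- Minus `β` times the nearest-neighbour Hamiltonian of the region `I`, as a function of the spins
on all of `V`: the sum of `β * x a * x b` over the edges `ab` with at least one endpoint in `I`. -/
noncomputable def energy (β : ℝ) (I : Finset V) (x : V → ℝ) : ℝ :=
  β / 2 * ∑ a ∈ closedNeighborFinset G I, ∑ b ∈ closedNeighborFinset G I,
    if G.Adj a b ∧ (a ∈ I ∨ b ∈ I) then x a * x b else 0

variable {G} {β : ℝ} {I Δ N : Finset V} {a b : V} {x y : V → ℝ}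

theorem subset_closedNeighborFinset : I ⊆ closedNeighborFinset G I := Finset.subset_union_left

theorem mem_closedNeighborFinset_of_adj (ha : a ∈ I) (h : G.Adj a b) :
    b ∈ closedNeighborFinset G I :=
  Finset.mem_union_right _ (Finset.mem_biUnion.2 ⟨a, ha, by simpa using h⟩)

theorem closedNeighborFinset_mono (h : I ⊆ Δ) :
    closedNeighborFinset G I ⊆ closedNeighborFinset G Δ :=
  Finset.union_subset_union h (Finset.biUnion_subset_biUnion_of_subset_left _ h)

theorem energy_eq_sum_of_subset (h : closedNeighborFinset G I ⊆ N) :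
    energy G β I x =
      β / 2 * ∑ a ∈ N, ∑ b ∈ N, if G.Adj a b ∧ (a ∈ I ∨ b ∈ I) then x a * x b else 0 := by
  have mem_of_touches {a b : V} (hab : G.Adj a b ∧ (a ∈ I ∨ b ∈ I)) :
      a ∈ closedNeighborFinset G I ∧ b ∈ closedNeighborFinset G I := by
    rcases hab with ⟨hab, ha | hb⟩
    · exact ⟨subset_closedNeighborFinset ha, mem_closedNeighborFinset_of_adj ha hab⟩
    · exact ⟨mem_closedNeighborFinset_of_adj hb hab.symm, subset_closedNeighborFinset hb⟩
  unfold energy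
  rw [Finset.sum_subset h]
  · congr 1
    refine Finset.sum_congr rfl fun a _ => Finset.sum_subset h fun b _ hb => ?_
    exact if_neg fun hab => hb (mem_of_touches hab).2
  · exact fun a _ ha => Finset.sum_eq_zero fun b _ => if_neg fun hab => ha (mem_of_touches hab).1

theorem tsum_Jnn_mul_compl (ha : a ∈ I) :
    ∑' y : {y : V // y ∉ I}, Jnn G a y.1 * x y.1 =
      ∑ y ∈ closedNeighborFinset G I \ I, if G.Adj a y then x y else 0 := by
  have hJ (y : V) : Jnn G a y * x y = if G.Adj a y then x y else 0 := by
    unfold Jnn; split_ifs <;> simp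
  refine (tsum_subtype {y : V | y ∉ I} fun y => Jnn G a y * x y).trans ?_
  rw [tsum_eq_sum (s := closedNeighborFinset G I \ I)]
  · refine Finset.sum_congr rfl fun y hy => ?_
    rw [Set.indicator_of_mem (Finset.mem_sdiff.1 hy).2, hJ]
  · intro y hy
    by_cases hyI : y ∈ I
    · exact Set.indicator_of_notMem (by simpa using hyI) _
    · rw [Set.indicator_of_mem (by simpa using hyI), hJ, if_neg]
      exact fun h => hy (Finset.mem_sdiff.2 ⟨mem_closedNeighborFinset_of_adj ha h, hyI⟩)

theorem energy_eq_inner_add_boundary :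
    energy G β I x = β * (1 / 2 * ∑ a ∈ I, ∑ b ∈ I, (if G.Adj a b then x a * x b else 0) +
      ∑ a ∈ I, ∑ b ∈ closedNeighborFinset G I \ I, if G.Adj a b then x a * x b else 0) := by
  have split (f : V → ℝ) : ∑ a ∈ closedNeighborFinset G I, f a =
      ∑ a ∈ I, f a + ∑ a ∈ closedNeighborFinset G I \ I, f a := by
    rw [add_comm, Finset.sum_sdiff subset_closedNeighborFinset]
  have from_inside :
      ∑ a ∈ I, ∑ b ∈ closedNeighborFinset G I,
        (if G.Adj a b ∧ (a ∈ I ∨ b ∈ I) then x a * x b else 0) =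
      ∑ a ∈ I, ∑ b ∈ I, (if G.Adj a b then x a * x b else 0) +
        ∑ a ∈ I, ∑ b ∈ closedNeighborFinset G I \ I, if G.Adj a b then x a * x b else 0 := by
    rw [← Finset.sum_add_distrib]
    refine Finset.sum_congr rfl fun a ha => ?_
    simp only [ha, true_or, and_true]
    exact split _
  have from_outside :
      ∑ a ∈ closedNeighborFinset G I \ I, ∑ b ∈ closedNeighborFinset G I,
        (if G.Adj a b ∧ (a ∈ I ∨ b ∈ I) then x a * x b else 0) =
      ∑ a ∈ I, ∑ b ∈ closedNeighborFinset G I \ I, if G.Adj a b then x a * x b else 0 := by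
    rw [Finset.sum_comm (s := I)]
    refine Finset.sum_congr rfl fun a ha => ?_
    simp only [(Finset.mem_sdiff.1 ha).2, false_or]
    rw [split, Finset.sum_eq_zero (s := closedNeighborFinset G I \ I)
      fun b hb => if_neg fun h => (Finset.mem_sdiff.1 hb).2 h.2, add_zero]
    refine Finset.sum_congr rfl fun b hb => ?_
    simp only [hb, and_true, G.adj_comm a b, mul_comm (x a)]
  rw [energy, split, from_inside, from_outside]
  ring

theorem hamil_Jnn_restrict : hamil (Jnn G) β I x (fun a => x a.1) = energy G β I x := by
  have inner : ∑ a : ↥I, ∑ b : ↥I, (if a.1 ≠ b.1 then Jnn G a.1 b.1 * x a.1 * x b.1 else 0) =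
      ∑ a ∈ I, ∑ b ∈ I, if G.Adj a b then x a * x b else 0 := by
    simp only [← Finset.sum_coe_sort I]
    refine Finset.sum_congr rfl fun a _ => Finset.sum_congr rfl fun b _ => ?_
    unfold Jnn
    by_cases h : G.Adj a.1 b.1
    · simp [h, h.ne]
    · simp [h]
  have boundary : ∑ a : ↥I, x a.1 * ∑' y : {y : V // y ∉ I}, Jnn G a.1 y.1 * x y.1 =
      ∑ a ∈ I, ∑ b ∈ closedNeighborFinset G I \ I, if G.Adj a b then x a * x b else 0 := by
    rw [← Finset.sum_coe_sort I]
    refine Finset.sum_congr rfl fun a _ => ?_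
    rw [tsum_Jnn_mul_compl a.2, Finset.mul_sum]
    simp only [mul_ite, mul_zero]
  rw [hamil, inner, boundary, energy_eq_inner_add_boundary]

theorem hamil_Jnn_eq_energy (ξ : V → ℝ) (φ : ↥I → ℝ) :
    hamil (Jnn G) β I ξ φ = energy G β I (Function.updateFinset ξ I φ) := by
  have inside (a : ↥I) : Function.updateFinset ξ I φ a.1 = φ a := by
    simp [Function.updateFinset_def]
  have outside (a : {y : V // y ∉ I}) : Function.updateFinset ξ I φ a.1 = ξ a.1 := by
    simp [Function.updateFinset_def, a.2]
  rw [← hamil_Jnn_restrict]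
  simp only [hamil, inside, outside]

theorem energy_add_le_sup_add_inf (hβ : 0 ≤ β) (I : Finset V) (x y : V → ℝ) :
    energy G β I x + energy G β I y ≤ energy G β I (x ⊔ y) + energy G β I (x ⊓ y) := by
  have mul_add_mul_le (a b : V) :
      x a * x b + y a * y b ≤ (x a ⊔ y a) * (x b ⊔ y b) + (x a ⊓ y a) * (x b ⊓ y b) := by
    rcases le_total (x a) (y a) with h₁ | h₁ <;> rcases le_total (x b) (y b) with h₂ | h₂ <;>
      simp only [h₁, h₂, sup_of_le_left, sup_of_le_right, inf_of_le_left, inf_of_le_right] <;>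
      nlinarith [mul_nonneg (sub_nonneg.2 h₁) (sub_nonneg.2 h₂)]
  simp only [energy, ← mul_add, ← Finset.sum_add_distrib]
  refine mul_le_mul_of_nonneg_left (Finset.sum_le_sum fun a _ => Finset.sum_le_sum fun b _ => ?_)
    (by positivity)
  split_ifs
  · exact mul_add_mul_le a b
  · simp

theorem measurable_energy (I : Finset V) : Measurable (energy G β I) := by
  refine Measurable.const_mul (Finset.measurable_fun_sum _ fun a _ =>
    Finset.measurable_fun_sum _ fun b _ => ?_) _
  split_ifs
  · exact (measurable_pi_apply a).mul (measurable_pi_apply b)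
  · exact measurable_const

theorem energy_sub_energy_congr (h : I ⊆ Δ) (hxy : ∀ v, v ∉ I → x v = y v) :
    energy G β Δ x - energy G β I x = energy G β Δ y - energy G β I y := by
  simp only [energy_eq_sum_of_subset (closedNeighborFinset_mono h)]
  simp only [energy, ← mul_sub, ← Finset.sum_sub_distrib]
  congr 1
  refine Finset.sum_congr rfl fun a _ => Finset.sum_congr rfl fun b _ => ?_
  by_cases hab : G.Adj a b
  · by_cases ha : a ∈ I
    · simp [hab, ha, h ha]
    · by_cases hb : b ∈ I
      · simp [hab, hb, h hb]
      · simp [ha, hb, hxy a ha, hxy b hb]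
  · simp [hab]

theorem energy_congr (hxy : ∀ v ∈ closedNeighborFinset G I, x v = y v) :
    energy G β I x = energy G β I y := by
  unfold energy
  congr 1
  refine Finset.sum_congr rfl fun a ha => Finset.sum_congr rfl fun b hb => ?_
  rw [hxy a ha, hxy b hb]

end Energy

section Lmarginal

variable {V : Type*} {μ : V → Measure ℝ} [∀ i, SigmaFinite (μ i)] {N : Finset V} {g : V → ℝ → ℝ≥0∞}

theorem lmarginal_prod_eval (hg : ∀ a, Measurable (g a)) {I : Finset V} (hI : I ⊆ N) (x : V → ℝ) :
    (∫⋯∫⁻_I, (fun x => ∏ a ∈ N, g a (x a)) ∂μ) x =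
      (∏ a ∈ I, ∫⁻ u, g a u ∂μ a) * ∏ a ∈ N \ I, g a (x a) := by
  have measurable_prod : Measurable fun x : V → ℝ => ∏ a ∈ N, g a (x a) :=
    Finset.measurable_fun_prod _ fun a _ => (hg a).comp (measurable_pi_apply a)
  induction I using Finset.induction generalizing x with
  | empty => simp
  | insert i I hi ih =>
    have hiN : i ∈ N \ I := Finset.mem_sdiff.2 ⟨hI (Finset.mem_insert_self _ _), hi⟩
    have erase_eq : N \ insert i I = (N \ I).erase i := by
      ext a; simp only [Finset.mem_sdiff, Finset.mem_insert, Finset.mem_erase]; tauto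
    have prod_update (u : ℝ) : ∏ a ∈ N \ I, g a (Function.update x i u a) =
        g i u * ∏ a ∈ N \ insert i I, g a (x a) := by
      rw [← Finset.mul_prod_erase _ _ hiN, Function.update_self, erase_eq]
      congr 1
      refine Finset.prod_congr rfl fun a ha => ?_
      rw [Function.update_of_ne (Finset.ne_of_mem_erase ha)]
    rw [lmarginal_insert _ measurable_prod hi]
    simp only [ih fun _ ha => hI (Finset.mem_insert_of_mem ha), prod_update]
    rw [lintegral_const_mul _ ((hg i).mul_const _), lintegral_mul_const _ (hg i),
      Finset.prod_insert hi]
    ring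

end Lmarginal

section SingleSiteMeasure

/-- The standing hypothesis on the single-site measure: it has all Gaussian moments, and it charges
the nonnegative half-line. -/
structure IsSingleSiteMeasure (ρ : Measure ℝ) : Prop where
  lintegral_exp_mul_sq_lt_top_of_pos :
    ∀ a : ℝ, 0 < a → ∫⁻ u, ENNReal.ofReal (Real.exp (a * u ^ 2)) ∂ρ < ∞
  measure_Ici_zero_pos : 0 < ρ (Set.Ici (0 : ℝ))

namespace IsSingleSiteMeasure

variable {ρ : Measure ℝ}

theorem lintegral_exp_mul_sq_lt_top (h : IsSingleSiteMeasure ρ) (a : ℝ) :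
    ∫⁻ u, ENNReal.ofReal (Real.exp (a * u ^ 2)) ∂ρ < ∞ := by
  refine lt_of_le_of_lt (lintegral_mono fun u => ENNReal.ofReal_le_ofReal (Real.exp_le_exp.2 ?_))
    (h.lintegral_exp_mul_sq_lt_top_of_pos (|a| + 1) (by positivity))
  exact mul_le_mul_of_nonneg_right ((le_abs_self a).trans (lt_add_one _).le) (sq_nonneg u)

theorem isFiniteMeasure (h : IsSingleSiteMeasure ρ) : IsFiniteMeasure ρ :=
  ⟨by simpa using h.lintegral_exp_mul_sq_lt_top 0⟩

theorem measure_univ_ne_zero (h : IsSingleSiteMeasure ρ) : ρ Set.univ ≠ 0 :=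
  (h.measure_Ici_zero_pos.trans_le (measure_mono (Set.subset_univ _))).ne'

theorem pi_ne_zero (h : IsSingleSiteMeasure ρ) {ι : Type*} [Fintype ι] :
    (Measure.pi fun _ : ι => ρ) ≠ 0 := by
  have := h.isFiniteMeasure
  rw [← Measure.measure_univ_ne_zero, Measure.pi_univ]
  exact Finset.prod_ne_zero_iff.2 fun _ _ => h.measure_univ_ne_zero

end IsSingleSiteMeasure

end SingleSiteMeasure

section BoltzmannIntegral

variable {V : Type*} (G : SimpleGraph V) [∀ x : V, Fintype (G.neighborSet x)] (β : ℝ)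
  (ρ : Measure ℝ)

/-- The Boltzmann weight of the region `I`. -/
noncomputable def boltzmann (I : Finset V) (x : V → ℝ) : ℝ≥0∞ :=
  ENNReal.ofReal (Real.exp (energy G β I x))

/-- The unnormalized Gibbs expectation of `F` in the region `I`. Its argument is a spin
configuration on all of `V`, of which only the spins off `I`, the boundary condition, matter. -/
noncomputable def boltzmannIntegral (I : Finset V) (F : (V → ℝ) → ℝ≥0∞) : (V → ℝ) → ℝ≥0∞ :=
  ∫⋯∫⁻_I, F * boltzmann G β I ∂fun _ => ρ

/-- The partition function of the region `I` with a given boundary condition. -/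
noncomputable def partitionFunction (I : Finset V) : (V → ℝ) → ℝ≥0∞ :=
  boltzmannIntegral G β ρ I fun _ => 1

/-- The Gibbs expectation of `F` in the region `I` with a given boundary condition. -/
noncomputable def gibbsExpectation (I : Finset V) (F : (V → ℝ) → ℝ≥0∞) (x : V → ℝ) : ℝ≥0∞ :=
  (partitionFunction G β ρ I x)⁻¹ * boltzmannIntegral G β ρ I F x

variable {G β ρ} {I Δ : Finset V} {F : (V → ℝ) → ℝ≥0∞} {x y : V → ℝ}

theorem measurable_boltzmann (I : Finset V) : Measurable (boltzmann G β I) :=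
  ENNReal.measurable_ofReal.comp (Real.measurable_exp.comp (measurable_energy I))

theorem measurable_boltzmann_updateFinset (x : V → ℝ) :
    Measurable fun φ : I → ℝ => boltzmann G β I (Function.updateFinset x I φ) :=
  (measurable_boltzmann I).comp measurable_updateFinset

theorem boltzmann_pos : 0 < boltzmann G β I x :=
  ENNReal.ofReal_pos.2 (Real.exp_pos _)

theorem boltzmann_mul_le_sup_mul_inf (hβ : 0 ≤ β) (I : Finset V) (x y : V → ℝ) :
    boltzmann G β I x * boltzmann G β I y ≤ boltzmann G β I (x ⊔ y) * boltzmann G β I (x ⊓ y) := by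
  simp only [boltzmann, ← ENNReal.ofReal_mul (Real.exp_pos _).le, ← Real.exp_add]
  exact ENNReal.ofReal_le_ofReal (Real.exp_le_exp.2 (energy_add_le_sup_add_inf hβ I x y))

theorem energy_le_sum_sq (hβ : 0 ≤ β) :
    energy G β I x ≤ β * (closedNeighborFinset G I).card *
      ∑ a ∈ closedNeighborFinset G I, x a ^ 2 := by
  set N := closedNeighborFinset G I
  calc energy G β I x
      ≤ β / 2 * ∑ a ∈ N, ∑ b ∈ N, (x a ^ 2 + x b ^ 2) := by
        refine mul_le_mul_of_nonneg_left (Finset.sum_le_sum fun a _ =>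
          Finset.sum_le_sum fun b _ => ?_) (by positivity)
        split_ifs
        · nlinarith [sq_nonneg (x a - x b), sq_nonneg (x a), sq_nonneg (x b)]
        · positivity
    _ = β * N.card * ∑ a ∈ N, x a ^ 2 := by
        simp only [Finset.sum_add_distrib, Finset.sum_const, nsmul_eq_mul, ← Finset.mul_sum]
        ring

theorem boltzmann_le_prod_exp_sq (hβ : 0 ≤ β) : boltzmann G β I x ≤
    ∏ a ∈ closedNeighborFinset G I,
      ENNReal.ofReal (Real.exp (β * (closedNeighborFinset G I).card * x a ^ 2)) := by
  rw [← ENNReal.ofReal_prod_of_nonneg fun a _ => (Real.exp_pos _).le, ← Real.exp_sum,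
    ← Finset.mul_sum]
  exact ENNReal.ofReal_le_ofReal (Real.exp_le_exp.2 (energy_le_sum_sq hβ))

theorem boltzmannIntegral_apply (I : Finset V) (F : (V → ℝ) → ℝ≥0∞) (x : V → ℝ) :
    boltzmannIntegral G β ρ I F x =
      ∫⁻ φ, F (Function.updateFinset x I φ) * boltzmann G β I (Function.updateFinset x I φ)
        ∂Measure.pi fun _ : ↥I => ρ := rfl

theorem partitionFunction_apply (I : Finset V) (x : V → ℝ) :
    partitionFunction G β ρ I x =
      ∫⁻ φ, boltzmann G β I (Function.updateFinset x I φ) ∂Measure.pi fun _ : ↥I => ρ := by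
  simp only [partitionFunction, boltzmannIntegral_apply, one_mul]

theorem lintegral_gibbs_Jnn (ξ : V → ℝ) (hF : Measurable F) :
    ∫⁻ φ, F (Function.updateFinset ξ I φ) ∂gibbs (Jnn G) β ρ I ξ =
      gibbsExpectation G β ρ I F ξ := by
  have density_eq : (fun φ => ENNReal.ofReal (Real.exp (hamil (Jnn G) β I ξ φ))) =
      fun φ : I → ℝ => boltzmann G β I (Function.updateFinset ξ I φ) := by
    simp only [hamil_Jnn_eq_energy, boltzmann]
  rw [gibbs, density_eq, lintegral_smul_measure, withDensity_apply _ MeasurableSet.univ,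
    Measure.restrict_univ, ← partitionFunction_apply, smul_eq_mul,
    lintegral_withDensity_eq_lintegral_mul (g := fun φ => F (Function.updateFinset ξ I φ)) _
      (measurable_boltzmann_updateFinset ξ) (hF.comp measurable_updateFinset),
    gibbsExpectation, boltzmannIntegral_apply]
  simp only [Pi.mul_apply, mul_comm]

theorem boltzmannIntegral_mono {F F' : (V → ℝ) → ℝ≥0∞} (h : ∀ x, F x ≤ F' x) (x : V → ℝ) :
    boltzmannIntegral G β ρ I F x ≤ boltzmannIntegral G β ρ I F' x :=
  lmarginal_mono (fun y => mul_le_mul_left (h y) _) x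

theorem boltzmannIntegral_congr_of_dependsOn {A : Set V} (hF : DependsOn F A)
    (h : ∀ v ∉ I, v ∈ A ∨ v ∈ closedNeighborFinset G I → x v = y v) :
    boltzmannIntegral G β ρ I F x = boltzmannIntegral G β ρ I F y := by
  rw [boltzmannIntegral_apply, boltzmannIntegral_apply]
  refine lintegral_congr fun φ => ?_
  have update_eq (v : V) (hv : v ∈ A ∨ v ∈ closedNeighborFinset G I) :
      Function.updateFinset x I φ v = Function.updateFinset y I φ v := by
    by_cases hI : v ∈ I
    · simp [Function.updateFinset_def, hI]
    · simp [Function.updateFinset_def, hI, h v hI hv]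
  rw [hF fun v hv => update_eq v (Or.inl hv), boltzmann, boltzmann,
    energy_congr fun v hv => update_eq v (Or.inr hv)]

theorem gibbsExpectation_congr_of_dependsOn {A : Set V} (hF : DependsOn F A)
    (h : ∀ v ∉ I, v ∈ A ∨ v ∈ closedNeighborFinset G I → x v = y v) :
    gibbsExpectation G β ρ I F x = gibbsExpectation G β ρ I F y := by
  unfold gibbsExpectation partitionFunction
  rw [boltzmannIntegral_congr_of_dependsOn hF h,
    boltzmannIntegral_congr_of_dependsOn ((dependsOn_const _).mono (Set.empty_subset A)) h]

theorem partitionFunction_le_prod_exp_sq [SigmaFinite ρ] (hβ : 0 ≤ β) (I : Finset V) (x : V → ℝ) :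
    partitionFunction G β ρ I x ≤
      (∏ _a ∈ I, ∫⁻ u, ENNReal.ofReal (Real.exp (β * (closedNeighborFinset G I).card * u ^ 2)) ∂ρ) *
        ∏ a ∈ closedNeighborFinset G I \ I,
          ENNReal.ofReal (Real.exp (β * (closedNeighborFinset G I).card * x a ^ 2)) := by
  let g (_ : V) (u : ℝ) : ℝ≥0∞ :=
    ENNReal.ofReal (Real.exp (β * (closedNeighborFinset G I).card * u ^ 2))
  calc partitionFunction G β ρ I x
      ≤ (∫⋯∫⁻_I, (fun x => ∏ a ∈ closedNeighborFinset G I, g a (x a)) ∂fun _ => ρ) x :=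
        lmarginal_mono (fun y => (one_mul _).trans_le (boltzmann_le_prod_exp_sq hβ)) x
    _ = _ := lmarginal_prod_eval (fun _ => by fun_prop) subset_closedNeighborFinset x

theorem partitionFunction_lt_top (hβ : 0 ≤ β) (h : IsSingleSiteMeasure ρ) (I : Finset V)
    (x : V → ℝ) : partitionFunction G β ρ I x < ∞ :=
  have := h.isFiniteMeasure
  (partitionFunction_le_prod_exp_sq hβ I x).trans_lt <|
    ENNReal.mul_lt_top (ENNReal.prod_lt_top fun _ _ => h.lintegral_exp_mul_sq_lt_top _)
      (ENNReal.prod_lt_top fun _ _ => ENNReal.ofReal_lt_top)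

theorem partitionFunction_pos (h : IsSingleSiteMeasure ρ) (I : Finset V) (x : V → ℝ) :
    0 < partitionFunction G β ρ I x := by
  rw [partitionFunction_apply,
    lintegral_pos_iff_support (measurable_boltzmann_updateFinset x)]
  rw [Function.support_eq_univ fun φ => boltzmann_pos.ne', Measure.measure_univ_pos]
  exact h.pi_ne_zero

theorem gibbsExpectation_mul_partitionFunction (hβ : 0 ≤ β) (h : IsSingleSiteMeasure ρ) :
    gibbsExpectation G β ρ I F x * partitionFunction G β ρ I x =
      boltzmannIntegral G β ρ I F x := by
  rw [gibbsExpectation, mul_comm, ← mul_assoc, ENNReal.mul_inv_cancel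
    (partitionFunction_pos h I x).ne' (partitionFunction_lt_top hβ h I x).ne, one_mul]

theorem gibbsExpectation_one (hβ : 0 ≤ β) (h : IsSingleSiteMeasure ρ) :
    gibbsExpectation G β ρ I (fun _ => 1) x = 1 :=
  ENNReal.inv_mul_cancel (partitionFunction_pos h I x).ne' (partitionFunction_lt_top hβ h I x).ne

section SigmaFinite

variable [SigmaFinite ρ]

theorem measurable_boltzmannIntegral (I : Finset V) (hF : Measurable F) :
    Measurable (boltzmannIntegral G β ρ I F) :=
  Measurable.lmarginal _ (hF.mul (measurable_boltzmann I))

theorem measurable_partitionFunction (I : Finset V) : Measurable (partitionFunction G β ρ I) :=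
  measurable_boltzmannIntegral I measurable_const

theorem measurable_gibbsExpectation (I : Finset V) (hF : Measurable F) :
    Measurable (gibbsExpectation G β ρ I F) :=
  (measurable_partitionFunction I).inv.mul (measurable_boltzmannIntegral I hF)

theorem boltzmannIntegral_mul_le_sup_mul_inf (hβ : 0 ≤ β) (I : Finset V)
    {F₁ F₂ F₃ F₄ : (V → ℝ) → ℝ≥0∞} (hF₁ : Measurable F₁) (hF₂ : Measurable F₂)
    (hF₃ : Measurable F₃) (hF₄ : Measurable F₄) (h : ∀ x y, F₁ x * F₂ y ≤ F₃ (x ⊔ y) * F₄ (x ⊓ y))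
    (x y : V → ℝ) :
    boltzmannIntegral G β ρ I F₁ x * boltzmannIntegral G β ρ I F₂ y ≤
      boltzmannIntegral G β ρ I F₃ (x ⊔ y) * boltzmannIntegral G β ρ I F₄ (x ⊓ y) := by
  have hB := measurable_boltzmann (G := G) (β := β) I
  refine four_functions_lmarginal (fun _ => ρ) I (hF₁.mul hB) (hF₂.mul hB) (hF₃.mul hB)
    (hF₄.mul hB) (fun x y => ?_) x y
  simp only [Pi.mul_apply]
  rw [mul_mul_mul_comm, mul_mul_mul_comm (F₃ _)]
  exact mul_le_mul' (h x y) (boltzmann_mul_le_sup_mul_inf hβ I x y)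

theorem boltzmannIntegral_mul_partitionFunction_le_of_monotone (hβ : 0 ≤ β) (hF : Measurable F)
    (hmono : Monotone F) (hxy : x ≤ y) :
    boltzmannIntegral G β ρ I F x * partitionFunction G β ρ I y ≤
      boltzmannIntegral G β ρ I F y * partitionFunction G β ρ I x := by
  have := boltzmannIntegral_mul_le_sup_mul_inf (G := G) (ρ := ρ) hβ I hF measurable_const hF
    measurable_const (fun a b => mul_le_mul_left (hmono le_sup_left) 1) x y
  rwa [sup_of_le_right hxy, inf_of_le_left hxy] at this

theorem boltzmannIntegral_mul_partitionFunction_le_of_antitone (hβ : 0 ≤ β) (hF : Measurable F)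
    (hanti : Antitone F) (hxy : x ≤ y) :
    boltzmannIntegral G β ρ I F y * partitionFunction G β ρ I x ≤
      boltzmannIntegral G β ρ I F x * partitionFunction G β ρ I y := by
  have := boltzmannIntegral_mul_le_sup_mul_inf (G := G) (ρ := ρ) hβ I measurable_const hF
    measurable_const hF (fun a b => mul_le_mul_right (hanti inf_le_right) 1) x y
  rw [sup_of_le_right hxy, inf_of_le_left hxy] at this
  rwa [mul_comm, mul_comm (boltzmannIntegral G β ρ I F x)]

end SigmaFinite

theorem monotone_gibbsExpectation (hβ : 0 ≤ β) (h : IsSingleSiteMeasure ρ) (hF : Measurable F)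
    (hmono : Monotone F) : Monotone (gibbsExpectation G β ρ I F) := by
  intro x y hxy
  have := h.isFiniteMeasure
  have partition_ne_zero (x) := (partitionFunction_pos (G := G) (β := β) h I x).ne'
  have partition_ne_top (x) := (partitionFunction_lt_top (G := G) hβ h I x).ne
  unfold gibbsExpectation
  rw [mul_comm, mul_comm (partitionFunction G β ρ I y)⁻¹, ← div_eq_mul_inv, ← div_eq_mul_inv,
    ENNReal.div_le_iff (partition_ne_zero x) (partition_ne_top x), ENNReal.mul_comm_div,
    ← mul_div_assoc, ENNReal.le_div_iff_mul_le (Or.inl (partition_ne_zero y))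
      (Or.inl (partition_ne_top y))]
  exact boltzmannIntegral_mul_partitionFunction_le_of_monotone hβ hF hmono hxy

theorem lmarginal_mul_boltzmann_of_subset (hsub : I ⊆ Δ) (hF : Measurable F)
    (x : V → ℝ) : (∫⋯∫⁻_I, F * boltzmann G β Δ ∂fun _ => ρ) x =
      boltzmannIntegral G β ρ I F x *
        ENNReal.ofReal (Real.exp (energy G β Δ x - energy G β I x)) := by
  have boltzmann_split (φ : I → ℝ) : boltzmann G β Δ (Function.updateFinset x I φ) =
      boltzmann G β I (Function.updateFinset x I φ) *
        ENNReal.ofReal (Real.exp (energy G β Δ x - energy G β I x)) := by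
    rw [← energy_sub_energy_congr (x := Function.updateFinset x I φ) hsub
        fun v hv => by simp [Function.updateFinset_def, hv],
      boltzmann, boltzmann, ← ENNReal.ofReal_mul (Real.exp_pos _).le, ← Real.exp_add,
      add_sub_cancel]
  have measurable_integrand : Measurable fun φ : I → ℝ =>
      (F * boltzmann G β I) (Function.updateFinset x I φ) :=
    (hF.mul (measurable_boltzmann I)).comp measurable_updateFinset
  rw [boltzmannIntegral, lmarginal, lmarginal, ← lintegral_mul_const _ measurable_integrand]
  simp only [Pi.mul_apply, boltzmann_split, mul_assoc]

theorem boltzmannIntegral_gibbsExpectation_self (hβ : 0 ≤ β) (h : IsSingleSiteMeasure ρ)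
    (x : V → ℝ) :
    boltzmannIntegral G β ρ I (gibbsExpectation G β ρ I F) x = boltzmannIntegral G β ρ I F x := by
  have expectation_eq (φ : I → ℝ) :
      gibbsExpectation G β ρ I F (Function.updateFinset x I φ) = gibbsExpectation G β ρ I F x := by
    have off (v) (hv : v ∉ I) : Function.updateFinset x I φ v = x v := by
      simp [Function.updateFinset_def, hv]
    simp only [gibbsExpectation, partitionFunction, boltzmannIntegral]
    rw [lmarginal_congr _ _ off, lmarginal_congr _ _ off]
  rw [boltzmannIntegral_apply, ← gibbsExpectation_mul_partitionFunction hβ h,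
    partitionFunction_apply, ← lintegral_const_mul _ (measurable_boltzmann_updateFinset x)]
  simp only [expectation_eq]

theorem boltzmannIntegral_gibbsExpectation_of_subset (hβ : 0 ≤ β) (h : IsSingleSiteMeasure ρ)
    (hsub : I ⊆ Δ) (hF : Measurable F) :
    boltzmannIntegral G β ρ Δ (gibbsExpectation G β ρ I F) = boltzmannIntegral G β ρ Δ F := by
  have := h.isFiniteMeasure
  have fubini {F : (V → ℝ) → ℝ≥0∞} (hF : Measurable F) : boltzmannIntegral G β ρ Δ F =
      ∫⋯∫⁻_Δ \ I, (∫⋯∫⁻_I, F * boltzmann G β Δ ∂fun _ => ρ) ∂fun _ => ρ := by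
    rw [← lmarginal_union _ _ (hF.mul (measurable_boltzmann Δ)) Finset.sdiff_disjoint,
      Finset.sdiff_union_of_subset hsub, boltzmannIntegral]
  have hK := measurable_gibbsExpectation (G := G) (β := β) (ρ := ρ) I hF
  rw [fubini hK, fubini hF]
  congr 1
  funext x
  rw [lmarginal_mul_boltzmann_of_subset hsub hK, lmarginal_mul_boltzmann_of_subset hsub hF,
    boltzmannIntegral_gibbsExpectation_self hβ h]

end BoltzmannIntegral

theorem ofReal_exp_neg_mul_measure_univ_le_lintegral {α : Type*} [MeasurableSpace α]
    {μ : Measure α} [IsFiniteMeasure μ] {f : α → ℝ} (hf : Measurable f) (hf₀ : ∀ x, 0 ≤ f x) {q : ℝ}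
    (hq : 0 ≤ q) (h : ∫⁻ x, ENNReal.ofReal (f x) ∂μ ≤ ENNReal.ofReal q * μ Set.univ) :
    ENNReal.ofReal (Real.exp (-q)) * μ Set.univ ≤ ∫⁻ x, ENNReal.ofReal (Real.exp (-f x)) ∂μ := by
  set e := ENNReal.ofReal (Real.exp (-q))
  -- The tangent line of `exp (-·)` at `q`.
  have tangent (x : α) :
      e + e * ENNReal.ofReal q ≤ ENNReal.ofReal (Real.exp (-f x)) + e * ENNReal.ofReal (f x) := by
    have : Real.exp (-q) * (q - f x + 1) ≤ Real.exp (-f x) :=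
      calc Real.exp (-q) * (q - f x + 1) ≤ Real.exp (-q) * Real.exp (q - f x) := by
            gcongr; exact Real.add_one_le_exp _
        _ = Real.exp (-f x) := by rw [← Real.exp_add]; ring_nf
    have hfx := hf₀ x
    rw [← ENNReal.ofReal_mul (Real.exp_pos _).le, ← ENNReal.ofReal_mul (Real.exp_pos _).le,
      ← ENNReal.ofReal_add (by positivity) (by positivity),
      ← ENNReal.ofReal_add (by positivity) (by positivity)]
    exact ENNReal.ofReal_le_ofReal (by linarith)
  have finite : e * (ENNReal.ofReal q * μ Set.univ) ≠ ∞ := by finiteness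
  refine (ENNReal.add_le_add_iff_right finite).1 ?_
  calc e * μ Set.univ + e * (ENNReal.ofReal q * μ Set.univ)
      = ∫⁻ _, (e + e * ENNReal.ofReal q) ∂μ := by rw [lintegral_const]; ring
    _ ≤ ∫⁻ x, (ENNReal.ofReal (Real.exp (-f x)) + e * ENNReal.ofReal (f x)) ∂μ :=
        lintegral_mono tangent
    _ = ∫⁻ x, ENNReal.ofReal (Real.exp (-f x)) ∂μ + e * ∫⁻ x, ENNReal.ofReal (f x) ∂μ := by
        rw [lintegral_add_left (by fun_prop), lintegral_const_mul _ (by fun_prop)]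
    _ ≤ _ := by gcongr

section BoundaryField

variable {V : Type*} {G : SimpleGraph V} {β : ℝ} {Δ Bd : Finset V}

variable (G β) in
/-- A bound for the energy lost in the region `Δ` when the spins on `Bd` are raised by `w`: only
negative spins adjacent to `Bd` lose energy. -/
noncomputable def negativeField (Δ Bd : Finset V) (w φ : V → ℝ) : ℝ :=
  ∑ z ∈ Bd, ∑ y ∈ Δ, if G.Adj y z then β * w z * max (-φ y) 0 else 0

theorem negativeField_nonneg (hβ : 0 ≤ β) {w : V → ℝ} (hw : 0 ≤ w) (φ : V → ℝ) :
    0 ≤ negativeField G β Δ Bd w φ :=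
  Finset.sum_nonneg fun z _ => Finset.sum_nonneg fun y _ => by
    have : 0 ≤ w z := hw z
    split_ifs
    · positivity
    · exact le_rfl

theorem measurable_negativeField {w : V → ℝ} : Measurable (negativeField G β Δ Bd w) :=
  Finset.measurable_fun_sum _ fun z _ => Finset.measurable_fun_sum _ fun y _ => by
    split_ifs
    · fun_prop
    · exact measurable_const

/-- The exponential weight `exp (c ∑ z ∈ Bd, x z)` on boundary conditions. -/
noncomputable def boundaryTilt (Bd : Finset V) (c : ℝ) (x : V → ℝ) : ℝ≥0∞ :=
  ENNReal.ofReal (Real.exp (c * ∑ z ∈ Bd, x z))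

theorem measurable_boundaryTilt {c : ℝ} : Measurable (boundaryTilt Bd c) :=
  ENNReal.measurable_ofReal.comp <| Real.measurable_exp.comp <|
    (Finset.measurable_fun_sum _ fun z _ => measurable_pi_apply z).const_mul _

end BoundaryField

section PartitionFunctionMonotone

variable {V : Type*} {G : SimpleGraph V} [∀ x : V, Fintype (G.neighborSet x)] {β : ℝ}
  {ρ : Measure ℝ} {I Δ Bd : Finset V} {F : (V → ℝ) → ℝ≥0∞} {x y : V → ℝ}

theorem card_filter_adj_le {D : ℕ} (hdeg : ∀ x : V, G.degree x ≤ D) (I : Finset V) (z : V) :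
    (I.filter fun y => G.Adj y z).card ≤ D := by
  refine (Finset.card_le_card fun y hy => ?_).trans (hdeg z)
  rw [SimpleGraph.mem_neighborFinset]
  exact (Finset.mem_filter.1 hy).2.symm

theorem energy_sub_energy_of_eqOn (hcl : closedNeighborFinset G Δ ⊆ Δ ∪ Bd) (hdisj : Disjoint Δ Bd)
    (hxy : ∀ v ∈ Δ, x v = y v) :
    energy G β Δ y - energy G β Δ x =
      β * ∑ a ∈ Δ, ∑ z ∈ Bd, if G.Adj a z then x a * (y z - x z) else 0 := by
  have hsub : closedNeighborFinset G Δ \ Δ ⊆ Bd := fun v hv => by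
    obtain ⟨hv, hvΔ⟩ := Finset.mem_sdiff.1 hv
    exact (Finset.mem_union.1 (hcl hv)).resolve_left hvΔ
  have extend {a : V} (ha : a ∈ Δ) (f : V → ℝ) :
      ∑ b ∈ closedNeighborFinset G Δ \ Δ, (if G.Adj a b then f b else 0) =
        ∑ b ∈ Bd, if G.Adj a b then f b else 0 :=
    Finset.sum_subset hsub fun z hz hz' => if_neg fun hadj => hz' <| Finset.mem_sdiff.2
      ⟨mem_closedNeighborFinset_of_adj ha hadj, fun hzΔ => Finset.disjoint_left.1 hdisj hzΔ hz⟩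
  have inner_eq : ∑ a ∈ Δ, ∑ b ∈ Δ, (if G.Adj a b then y a * y b else 0) =
      ∑ a ∈ Δ, ∑ b ∈ Δ, (if G.Adj a b then x a * x b else 0) :=
    Finset.sum_congr rfl fun a ha => Finset.sum_congr rfl fun b hb => by rw [hxy a ha, hxy b hb]
  rw [energy_eq_inner_add_boundary, energy_eq_inner_add_boundary, inner_eq, ← mul_sub,
    add_sub_add_left_eq_sub, ← Finset.sum_sub_distrib]
  congr 1
  refine Finset.sum_congr rfl fun a ha => ?_
  rw [extend ha fun b => y a * y b, extend ha fun b => x a * x b, ← Finset.sum_sub_distrib]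
  refine Finset.sum_congr rfl fun b _ => ?_
  rw [hxy a ha]
  split_ifs <;> ring

theorem boltzmannIntegral_const_mul (I : Finset V) (c : ℝ≥0∞) (hF : Measurable F)
    (x : V → ℝ) :
    boltzmannIntegral G β ρ I (fun y => c * F y) x = c * boltzmannIntegral G β ρ I F x := by
  simp only [boltzmannIntegral_apply, mul_assoc]
  exact lintegral_const_mul _ ((hF.mul (measurable_boltzmann I)).comp measurable_updateFinset)

theorem boltzmannIntegral_finsetSum {κ : Type*} (I : Finset V) (s : Finset κ)
    {F : κ → (V → ℝ) → ℝ≥0∞} (hF : ∀ i, Measurable (F i)) (x : V → ℝ) :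
    boltzmannIntegral G β ρ I (fun y => ∑ i ∈ s, F i y) x =
      ∑ i ∈ s, boltzmannIntegral G β ρ I (F i) x := by
  simp only [boltzmannIntegral_apply, Finset.sum_mul]
  exact lintegral_finsetSum _ fun i _ =>
    ((hF i).mul (measurable_boltzmann I)).comp measurable_updateFinset

theorem boltzmannIntegral_le_mul_partitionFunction_of_antitone (hβ : 0 ≤ β)
    (hρ : IsSingleSiteMeasure ρ) (hF : Measurable F) (hanti : Antitone F) (hxy : x ≤ y) {c : ℝ≥0∞}
    (h : boltzmannIntegral G β ρ I F x ≤ c * partitionFunction G β ρ I x) :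
    boltzmannIntegral G β ρ I F y ≤ c * partitionFunction G β ρ I y := by
  have := hρ.isFiniteMeasure
  rw [← ENNReal.mul_le_mul_iff_left (partitionFunction_pos hρ I x).ne'
    (partitionFunction_lt_top (G := G) hβ hρ I x).ne]
  calc _ ≤ boltzmannIntegral G β ρ I F x * partitionFunction G β ρ I y :=
        boltzmannIntegral_mul_partitionFunction_le_of_antitone hβ hF hanti hxy
    _ ≤ c * partitionFunction G β ρ I x * partitionFunction G β ρ I y := mul_le_mul_left h _
    _ = _ := mul_right_comm _ _ _

theorem ofReal_exp_neg_mul_partitionFunction_le (hβ : 0 ≤ β) (hρ : IsSingleSiteMeasure ρ)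
    {f : (V → ℝ) → ℝ} (hf : Measurable f) (hf₀ : ∀ x, 0 ≤ f x) {q : ℝ} (hq : 0 ≤ q)
    (h : boltzmannIntegral G β ρ I (fun x => ENNReal.ofReal (f x)) x ≤
      ENNReal.ofReal q * partitionFunction G β ρ I x) :
    ENNReal.ofReal (Real.exp (-q)) * partitionFunction G β ρ I x ≤
      boltzmannIntegral G β ρ I (fun x => ENNReal.ofReal (Real.exp (-f x))) x := by
  have := hρ.isFiniteMeasure
  have measurable_weight := measurable_boltzmann_updateFinset (G := G) (β := β) (I := I) x
  set μ := (Measure.pi fun _ : I => ρ).withDensity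
    fun φ => boltzmann G β I (Function.updateFinset x I φ) with hμ
  have lintegral_μ {g : (V → ℝ) → ℝ≥0∞} (hg : Measurable g) :
      ∫⁻ φ, g (Function.updateFinset x I φ) ∂μ = boltzmannIntegral G β ρ I g x := by
    rw [hμ, lintegral_withDensity_eq_lintegral_mul (g := fun φ => g (Function.updateFinset x I φ))
      _ measurable_weight (hg.comp measurable_updateFinset), boltzmannIntegral_apply]
    simp only [Pi.mul_apply, mul_comm]
  have μ_univ : μ Set.univ = partitionFunction G β ρ I x := by
    rw [hμ, withDensity_apply _ MeasurableSet.univ, Measure.restrict_univ, partitionFunction_apply]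
  have : IsFiniteMeasure μ := ⟨μ_univ ▸ partitionFunction_lt_top hβ hρ I x⟩
  rw [← μ_univ, ← lintegral_μ (by fun_prop)] at h ⊢
  exact ofReal_exp_neg_mul_measure_univ_le_lintegral (hf.comp measurable_updateFinset)
    (fun _ => hf₀ _) hq h

theorem energy_sub_negativeField_le (hβ : 0 ≤ β)
    (hcl : closedNeighborFinset G Δ ⊆ Δ ∪ Bd) (hdisj : Disjoint Δ Bd) (hxy : ∀ v ∈ Δ, x v = y v)
    {w : V → ℝ} (hw : 0 ≤ w) (hwxy : ∀ z ∈ Bd, y z - x z = w z) :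
    energy G β Δ x - negativeField G β Δ Bd w x ≤ energy G β Δ y := by
  suffices -negativeField G β Δ Bd w x ≤ energy G β Δ y - energy G β Δ x by linarith
  rw [energy_sub_energy_of_eqOn hcl hdisj hxy, Finset.sum_comm, negativeField]
  simp only [Finset.mul_sum, ← Finset.sum_neg_distrib]
  refine Finset.sum_le_sum fun z hz => Finset.sum_le_sum fun a _ => ?_
  split_ifs
  · rw [hwxy z hz]
    linarith [mul_le_mul_of_nonneg_left (le_max_left (-x a) 0) (mul_nonneg hβ (hw z))]
  · simp

theorem boltzmannIntegral_negativeField_le (hβ : 0 ≤ β) {D : ℕ}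
    (hdeg : ∀ x : V, G.degree x ≤ D) {w : V → ℝ} (hw : 0 ≤ w) {M : ℝ} (hM : 0 ≤ M)
    (h : ∀ y ∈ Δ, boltzmannIntegral G β ρ Δ (fun x => ENNReal.ofReal (-x y)) x ≤
      ENNReal.ofReal M * partitionFunction G β ρ Δ x) :
    boltzmannIntegral G β ρ Δ (fun φ => ENNReal.ofReal (negativeField G β Δ Bd w φ)) x ≤
      ENNReal.ofReal (β * D * M * ∑ z ∈ Bd, w z) * partitionFunction G β ρ Δ x := by
  have βw_nonneg (z : V) : 0 ≤ β * w z := mul_nonneg hβ (hw z)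
  have ofReal_negativeField (φ : V → ℝ) : ENNReal.ofReal (negativeField G β Δ Bd w φ) =
      ∑ z ∈ Bd, ENNReal.ofReal (β * w z) *
        ∑ y ∈ Δ.filter fun y => G.Adj y z, ENNReal.ofReal (-φ y) := by
    simp only [negativeField, ← Finset.sum_filter]
    rw [ENNReal.ofReal_sum_of_nonneg fun z _ => Finset.sum_nonneg fun y _ =>
      mul_nonneg (βw_nonneg z) (le_max_right _ _)]
    refine Finset.sum_congr rfl fun z _ => ?_
    rw [← Finset.mul_sum, ENNReal.ofReal_mul (βw_nonneg z),
      ENNReal.ofReal_sum_of_nonneg fun y _ => le_max_right _ _]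
    simp only [ENNReal.ofReal_max, ENNReal.ofReal_zero, max_eq_left zero_le]
  simp only [ofReal_negativeField]
  rw [boltzmannIntegral_finsetSum _ _ fun z => by fun_prop, Finset.mul_sum,
    ENNReal.ofReal_sum_of_nonneg fun z _ => by
      have : 0 ≤ w z := hw z
      positivity, Finset.sum_mul]
  refine Finset.sum_le_sum fun z _ => ?_
  rw [boltzmannIntegral_const_mul _ _ (by fun_prop),
    boltzmannIntegral_finsetSum _ _ fun y => by fun_prop]
  calc _ ≤ ENNReal.ofReal (β * w z) * ∑ _y ∈ Δ.filter fun y => G.Adj y z,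
          ENNReal.ofReal M * partitionFunction G β ρ Δ x := by
        gcongr with _ hy
        exact h _ (Finset.mem_filter.1 hy).1
    _ = ENNReal.ofReal (β * w z) * ((Δ.filter fun y => G.Adj y z).card * ENNReal.ofReal M) *
          partitionFunction G β ρ Δ x := by
        rw [Finset.sum_const, nsmul_eq_mul]; ring
    _ ≤ ENNReal.ofReal (β * w z) * (D * ENNReal.ofReal M) * partitionFunction G β ρ Δ x := by
        gcongr
        exact card_filter_adj_le hdeg Δ z
    _ = ENNReal.ofReal (β * D * M * w z) * partitionFunction G β ρ Δ x := by
        rw [← ENNReal.ofReal_natCast, ← ENNReal.ofReal_mul (by positivity),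
          ← ENNReal.ofReal_mul (βw_nonneg z)]
        congr 2
        ring

variable (G β ρ) in
/-- The region `Δ` has all its outer neighbours in `Bd`, in a graph of degree at most `D`, and under
the Gibbs measure on `Δ` with zero boundary condition each spin has negative part of mean at most
`M`. -/
structure IsControlledRegion (D : ℕ) (Δ Bd : Finset V) (M : ℝ) : Prop where
  beta_nonneg : 0 ≤ β
  isSingleSiteMeasure : IsSingleSiteMeasure ρ
  degree_le : ∀ x : V, G.degree x ≤ D
  closedNeighborFinset_subset : closedNeighborFinset G Δ ⊆ Δ ∪ Bd
  disjoint : Disjoint Δ Bd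
  bound_nonneg : 0 ≤ M
  boltzmannIntegral_neg_le : ∀ y ∈ Δ, boltzmannIntegral G β ρ Δ (fun x => ENNReal.ofReal (-x y)) 0 ≤
    ENNReal.ofReal M * partitionFunction G β ρ Δ 0

namespace IsControlledRegion

variable {D : ℕ} {M : ℝ}

theorem exp_neg_mul_partitionFunction_le (H : IsControlledRegion G β ρ D Δ Bd M) (hx : 0 ≤ x)
    (hxy : x ≤ y) :
    ENNReal.ofReal (Real.exp (-(β * D * M * ∑ z ∈ Bd, (y z - x z)))) * partitionFunction G β ρ Δ x ≤
      partitionFunction G β ρ Δ y := by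
  have hβ := H.beta_nonneg
  have hρ := H.isSingleSiteMeasure
  have hM := H.bound_nonneg
  have := hρ.isFiniteMeasure
  have hw : 0 ≤ y - x := sub_nonneg.2 hxy
  have sum_nonneg : 0 ≤ ∑ z ∈ Bd, (y z - x z) := Finset.sum_nonneg fun z _ => hw z
  have negative_part_le (v : V) (hv : v ∈ Δ) :
      boltzmannIntegral G β ρ Δ (fun x => ENNReal.ofReal (-x v)) x ≤
        ENNReal.ofReal M * partitionFunction G β ρ Δ x :=
    boltzmannIntegral_le_mul_partitionFunction_of_antitone hβ hρ (by fun_prop)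
      (fun _ _ h => ENNReal.ofReal_le_ofReal (neg_le_neg (h v))) hx
      (H.boltzmannIntegral_neg_le v hv)
  refine (ofReal_exp_neg_mul_partitionFunction_le hβ hρ measurable_negativeField
    (negativeField_nonneg hβ hw) (by positivity)
    (boltzmannIntegral_negativeField_le hβ H.degree_le hw hM negative_part_le)).trans ?_
  rw [boltzmannIntegral_apply, partitionFunction_apply]
  refine lintegral_mono fun φ => ?_
  simp only [boltzmann]
  rw [← ENNReal.ofReal_mul (Real.exp_pos _).le, ← Real.exp_add, neg_add_eq_sub]
  refine ENNReal.ofReal_le_ofReal (Real.exp_le_exp.2 ?_)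
  refine energy_sub_negativeField_le hβ H.closedNeighborFinset_subset H.disjoint
    (fun v hv => by simp [Function.updateFinset_def, hv]) hw fun z hz => ?_
  have : z ∉ Δ := Finset.disjoint_right.1 H.disjoint hz
  simp [Function.updateFinset_def, this]

theorem boundaryTilt_mul_partitionFunction_mono (H : IsControlledRegion G β ρ D Δ Bd M)
    (hx : 0 ≤ x) (hxy : x ≤ y) :
    boundaryTilt Bd (β * D * M) x * partitionFunction G β ρ Δ x ≤
      boundaryTilt Bd (β * D * M) y * partitionFunction G β ρ Δ y := by
  refine le_trans (le_of_eq ?_) (mul_le_mul_right (H.exp_neg_mul_partitionFunction_le hx hxy) _)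
  simp only [boundaryTilt]
  rw [← mul_assoc, ← ENNReal.ofReal_mul (Real.exp_pos _).le, ← Real.exp_add,
    Finset.sum_sub_distrib]
  ring_nf

end IsControlledRegion

end PartitionFunctionMonotone

section TiltedMeasure

variable {V : Type*} {G : SimpleGraph V} [∀ x : V, Fintype (G.neighborSet x)] {β : ℝ}
  {ρ ζ : Measure ℝ} {Δ Bd : Finset V} {c : ℝ} {F : (V → ℝ) → ℝ≥0∞}

theorem boundaryTilt_mul_eq_sup_mul_inf (Bd : Finset V) (c : ℝ) (x y : V → ℝ) :
    boundaryTilt Bd c x * boundaryTilt Bd c y =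
      boundaryTilt Bd c (x ⊔ y) * boundaryTilt Bd c (x ⊓ y) := by
  simp only [boundaryTilt, ← ENNReal.ofReal_mul (Real.exp_pos _).le, ← Real.exp_add, ← mul_add,
    ← Finset.sum_add_distrib, Pi.sup_apply, Pi.inf_apply, max_add_min]

theorem boundaryTilt_pos (Bd : Finset V) (c : ℝ) (x : V → ℝ) : 0 < boundaryTilt Bd c x :=
  ENNReal.ofReal_pos.2 (Real.exp_pos _)

theorem boundaryTilt_le_prod_exp_sq (hc : 0 ≤ c) (Bd : Finset V) (x : V → ℝ) :
    boundaryTilt Bd c x ≤ ∏ z ∈ Bd, ENNReal.ofReal (Real.exp (c + c * x z ^ 2)) := by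
  rw [boundaryTilt, ← ENNReal.ofReal_prod_of_nonneg fun a _ => (Real.exp_pos _).le, ← Real.exp_sum,
    Finset.mul_sum]
  refine ENNReal.ofReal_le_ofReal (Real.exp_le_exp.2 (Finset.sum_le_sum fun z _ => ?_))
  nlinarith [sq_nonneg (x z - 1), sq_nonneg (x z)]

/-- The configuration with the spins `p.1` on `Bd`, `p.2` on `Δ`, and zero elsewhere. -/
noncomputable def glue (Δ Bd : Finset V) (p : (Bd → ℝ) × (Δ → ℝ)) : V → ℝ :=
  Function.updateFinset (Function.updateFinset 0 Bd p.1) Δ p.2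

theorem measurable_glue : Measurable (glue Δ Bd) := by
  refine measurable_pi_lambda _ fun v => ?_
  unfold glue
  simp only [Function.updateFinset_def]
  split_ifs <;> fun_prop

variable (G β ρ ζ Δ Bd c) in
/-- The joint law, up to normalization, of boundary spins on `Bd` and bulk spins in `Δ` under the
exponential tilt `boundaryTilt Bd c`. Unlike the law in which the boundary spins are sampled first,
its density does not contain the partition function of `Δ`, so it is log-supermodular. -/
noncomputable def tiltedMeasure : Measure (V → ℝ) :=
  (((Measure.pi fun _ : Bd => ζ).prod (Measure.pi fun _ : Δ => ρ)).withDensity fun p =>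
    boundaryTilt Bd c (Function.updateFinset 0 Bd p.1) * boltzmann G β Δ (glue Δ Bd p)).map
      (glue Δ Bd)

theorem lintegral_tiltedMeasure [SigmaFinite ρ] (hF : Measurable F) :
    ∫⁻ x, F x ∂tiltedMeasure G β ρ ζ Δ Bd c =
      (∫⋯∫⁻_Bd, (fun x => boundaryTilt Bd c x * boltzmannIntegral G β ρ Δ F x) ∂fun _ => ζ) 0 := by
  have measurable_density : Measurable fun p : (Bd → ℝ) × (Δ → ℝ) =>
      boundaryTilt Bd c (Function.updateFinset 0 Bd p.1) * boltzmann G β Δ (glue Δ Bd p) :=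
    ((measurable_boundaryTilt.comp measurable_updateFinset).comp measurable_fst).mul
      ((measurable_boltzmann Δ).comp measurable_glue)
  have measurable_comp : Measurable fun p => F (glue Δ Bd p) := hF.comp measurable_glue
  rw [tiltedMeasure, lintegral_map hF measurable_glue,
    lintegral_withDensity_eq_lintegral_mul _ measurable_density measurable_comp,
    lintegral_prod _ (measurable_density.mul measurable_comp).aemeasurable, lmarginal]
  refine lintegral_congr fun ξ => ?_
  rw [boltzmannIntegral_apply, boundaryTilt, ← lintegral_const_mul' _ _ ENNReal.ofReal_ne_top]
  refine lintegral_congr fun φ => ?_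
  simp only [Pi.mul_apply, glue, boundaryTilt]
  ring

theorem tiltedMeasure_univ [SigmaFinite ρ] :
    tiltedMeasure G β ρ ζ Δ Bd c Set.univ =
      (∫⋯∫⁻_Bd, (fun x => boundaryTilt Bd c x * partitionFunction G β ρ Δ x) ∂fun _ => ζ) 0 := by
  rw [← lintegral_one]
  exact lintegral_tiltedMeasure measurable_const

theorem isLogSupermodular_tiltedMeasure [SigmaFinite ρ] [SigmaFinite ζ] (hβ : 0 ≤ β) :
    IsLogSupermodular (tiltedMeasure G β ρ ζ Δ Bd c) := by
  intro A₁ A₂ A₃ A₄ hA₁ hA₂ hA₃ hA₄ h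
  have measurable_ind {A : Set (V → ℝ)} (hA : MeasurableSet A) :
      Measurable (A.indicator (1 : (V → ℝ) → ℝ≥0∞)) := measurable_one.indicator hA
  have indicator_mul_le (x y : V → ℝ) : A₁.indicator (1 : (V → ℝ) → ℝ≥0∞) x * A₂.indicator 1 y ≤
      A₃.indicator 1 (x ⊔ y) * A₄.indicator 1 (x ⊓ y) := by
    by_cases hx : x ∈ A₁ <;> by_cases hy : y ∈ A₂ <;> simp only [hx, hy, Set.indicator_of_mem,
      Set.indicator_of_notMem, not_false_eq_true, mul_zero, zero_mul, zero_le]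
    simp only [Set.indicator_of_mem (h x hx y hy).1, Set.indicator_of_mem (h x hx y hy).2,
      Pi.one_apply, le_refl]
  have measurable_integrand {A : Set (V → ℝ)} (hA : MeasurableSet A) : Measurable fun x =>
      boundaryTilt Bd c x * boltzmannIntegral G β ρ Δ (A.indicator 1) x :=
    measurable_boundaryTilt.mul (measurable_boltzmannIntegral Δ (measurable_ind hA))
  have measure_eq {A : Set (V → ℝ)} (hA : MeasurableSet A) : tiltedMeasure G β ρ ζ Δ Bd c A =
      (∫⋯∫⁻_Bd, (fun x => boundaryTilt Bd c x * boltzmannIntegral G β ρ Δ (A.indicator 1) x)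
        ∂fun _ => ζ) 0 := by
    rw [← lintegral_indicator_one hA]
    exact lintegral_tiltedMeasure (measurable_ind hA)
  have four_functions := four_functions_lmarginal (fun _ => ζ) Bd (measurable_integrand hA₁)
    (measurable_integrand hA₂) (measurable_integrand hA₃) (measurable_integrand hA₄)
    (fun x y => by
      rw [mul_mul_mul_comm, boundaryTilt_mul_eq_sup_mul_inf,
        mul_mul_mul_comm _ (boltzmannIntegral G β ρ Δ (A₃.indicator 1) _)]
      exact mul_le_mul_right (boltzmannIntegral_mul_le_sup_mul_inf hβ Δ (measurable_ind hA₁)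
        (measurable_ind hA₂) (measurable_ind hA₃) (measurable_ind hA₄) indicator_mul_le x y) _) 0 0
  rw [sup_idem, inf_idem] at four_functions
  simpa only [measure_eq hA₁, measure_eq hA₂, measure_eq hA₃, measure_eq hA₄] using four_functions

theorem tiltedMeasure_univ_ne_zero (hρ : IsSingleSiteMeasure ρ) [IsProbabilityMeasure ζ] :
    tiltedMeasure G β ρ ζ Δ Bd c Set.univ ≠ 0 := by
  have := hρ.isFiniteMeasure
  have integrand_pos (x : V → ℝ) : 0 < boundaryTilt Bd c x * partitionFunction G β ρ Δ x :=
    ENNReal.mul_pos (boundaryTilt_pos Bd c x).ne' (partitionFunction_pos hρ Δ x).ne'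
  have measurable_integrand : Measurable fun ξ : Bd → ℝ =>
      boundaryTilt Bd c (Function.updateFinset 0 Bd ξ) *
        partitionFunction G β ρ Δ (Function.updateFinset 0 Bd ξ) :=
    (measurable_boundaryTilt.mul (measurable_partitionFunction Δ)).comp measurable_updateFinset
  rw [tiltedMeasure_univ, lmarginal, ← pos_iff_ne_zero,
    lintegral_pos_iff_support measurable_integrand,
    Function.support_eq_univ fun _ => (integrand_pos _).ne', Measure.measure_univ_pos]
  exact IsProbabilityMeasure.ne_zero _

theorem boundaryTilt_mul_partitionFunction_le_prod_exp_sq [SigmaFinite ρ] (hβ : 0 ≤ β) (hc : 0 ≤ c)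
    (hcl : closedNeighborFinset G Δ ⊆ Δ ∪ Bd) (x : V → ℝ) :
    boundaryTilt Bd c x * partitionFunction G β ρ Δ x ≤
      (∏ _a ∈ Δ, ∫⁻ u, ENNReal.ofReal (Real.exp (β * (closedNeighborFinset G Δ).card * u ^ 2)) ∂ρ) *
        ∏ z ∈ Bd, ENNReal.ofReal
          (Real.exp (c + (c + β * (closedNeighborFinset G Δ).card) * x z ^ 2)) := by
  set N := closedNeighborFinset G Δ
  set k := β * N.card
  set K := ∏ _a ∈ Δ, ∫⁻ u, ENNReal.ofReal (Real.exp (k * u ^ 2)) ∂ρ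
  have one_le (u : ℝ) : 1 ≤ ENNReal.ofReal (Real.exp (k * u ^ 2)) :=
    ENNReal.one_le_ofReal.2 (Real.one_le_exp (by positivity))
  calc _ ≤ (∏ z ∈ Bd, ENNReal.ofReal (Real.exp (c + c * x z ^ 2))) *
        (K * ∏ a ∈ N \ Δ, ENNReal.ofReal (Real.exp (k * x a ^ 2))) := by
        gcongr
        · exact boundaryTilt_le_prod_exp_sq hc Bd x
        · exact partitionFunction_le_prod_exp_sq hβ Δ x
    _ ≤ (∏ z ∈ Bd, ENNReal.ofReal (Real.exp (c + c * x z ^ 2))) *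
        (K * ∏ a ∈ Bd, ENNReal.ofReal (Real.exp (k * x a ^ 2))) := by
        gcongr
        · exact fun a _ _ => one_le _
        · exact sdiff_le_iff.2 hcl
    _ = K * ∏ z ∈ Bd, ENNReal.ofReal (Real.exp (c + (c + k) * x z ^ 2)) := by
        rw [mul_left_comm, ← Finset.prod_mul_distrib]
        simp only [← ENNReal.ofReal_mul (Real.exp_pos _).le, ← Real.exp_add, add_assoc, add_mul]

theorem isFiniteMeasure_tiltedMeasure (hρ : IsSingleSiteMeasure ρ) (hβ : 0 ≤ β) (hc : 0 ≤ c)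
    [SigmaFinite ζ] (hζ : ∀ a : ℝ, ∫⁻ u, ENNReal.ofReal (Real.exp (a * u ^ 2)) ∂ζ < ∞)
    (hcl : closedNeighborFinset G Δ ⊆ Δ ∪ Bd) :
    IsFiniteMeasure (tiltedMeasure G β ρ ζ Δ Bd c) := by
  have := hρ.isFiniteMeasure
  set k := β * (closedNeighborFinset G Δ).card
  set K := ∏ _a ∈ Δ, ∫⁻ u, ENNReal.ofReal (Real.exp (k * u ^ 2)) ∂ρ
  have hK : K < ∞ := ENNReal.prod_lt_top fun _ _ => hρ.lintegral_exp_mul_sq_lt_top _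
  have lintegral_lt_top : ∫⁻ u, ENNReal.ofReal (Real.exp (c + (c + k) * u ^ 2)) ∂ζ < ∞ := by
    simp only [Real.exp_add, ENNReal.ofReal_mul (Real.exp_pos _).le]
    rw [lintegral_const_mul' _ _ ENNReal.ofReal_ne_top]
    exact ENNReal.mul_lt_top ENNReal.ofReal_lt_top (hζ _)
  let g (_ : V) (u : ℝ) : ℝ≥0∞ := ENNReal.ofReal (Real.exp (c + (c + k) * u ^ 2))
  constructor
  calc tiltedMeasure G β ρ ζ Δ Bd c Set.univ
      ≤ (∫⋯∫⁻_Bd, (fun x => K * ∏ z ∈ Bd, g z (x z)) ∂fun _ => ζ) 0 := by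
        rw [tiltedMeasure_univ]
        exact lmarginal_mono (boundaryTilt_mul_partitionFunction_le_prod_exp_sq hβ hc hcl) 0
    _ = K * (∫⋯∫⁻_Bd, (fun x => ∏ z ∈ Bd, g z (x z)) ∂fun _ => ζ) 0 :=
        lintegral_const_mul' _ _ hK.ne
    _ < ∞ := by
        rw [lmarginal_prod_eval (fun _ => by fun_prop) subset_rfl, Finset.sdiff_self,
          Finset.prod_empty, mul_one]
        exact ENNReal.mul_lt_top hK (ENNReal.prod_lt_top fun _ _ => lintegral_lt_top)

end TiltedMeasure

section Decoupling

variable {V : Type*} {ζ : Measure ℝ}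

theorem lmarginal_le_lmarginal_of_ae {p : ℝ → Prop} [SigmaFinite ζ] (hζ : ∀ᵐ u ∂ζ, p u)
    {s : Finset V} {f g : (V → ℝ) → ℝ≥0∞} {x : V → ℝ}
    (h : ∀ y, (∀ i ∈ s, p (y i)) → (∀ i ∉ s, y i = x i) → f y ≤ g y) :
    (∫⋯∫⁻_s, f ∂fun _ => ζ) x ≤ (∫⋯∫⁻_s, g ∂fun _ => ζ) x := by
  have ae_forall : ∀ᵐ y ∂Measure.pi fun _ : s => ζ, ∀ i, p (y i) :=
    ae_all_iff.2 fun _ => Measure.tendsto_eval_ae_ae.eventually hζ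
  refine lintegral_mono_ae ?_
  filter_upwards [ae_forall] with y hy
  refine h _ (fun i hi => ?_) fun i hi => ?_
  · simpa [Function.updateFinset_def, hi] using hy ⟨i, hi⟩
  · simp [Function.updateFinset_def, hi]

theorem lintegral_mul_le_one_add_setLIntegral_mul [IsProbabilityMeasure ζ] {K : ℝ}
    {H φ : ℝ → ℝ≥0∞} (measurable_H : Measurable H) (hH : ∀ u ≤ K, H u = 1)
    (hφ : ∀ u' u, K < u' → φ u' ≤ φ u) :
    ∫⁻ u, H u * φ u ∂ζ ≤ (1 + ∫⁻ u in Set.Ioi K, H u ∂ζ) * ∫⁻ u, φ u ∂ζ := by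
  have le_lintegral (u' : ℝ) (hu' : K < u') : φ u' ≤ ∫⁻ u, φ u ∂ζ := by
    simpa using lintegral_mono (μ := ζ) fun u => hφ u' u hu'
  rw [← lintegral_add_compl _ (measurableSet_Ioi (a := K)), add_comm, add_mul, one_mul]
  refine add_le_add ?_ ?_
  · calc ∫⁻ u in (Set.Ioi K)ᶜ, H u * φ u ∂ζ
        = ∫⁻ u in (Set.Ioi K)ᶜ, φ u ∂ζ :=
          setLIntegral_congr_fun measurableSet_Ioi.compl fun u hu => by
            rw [hH u (not_lt.1 hu), one_mul]
      _ ≤ ∫⁻ u, φ u ∂ζ := setLIntegral_le_lintegral _ _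
  · calc ∫⁻ u in Set.Ioi K, H u * φ u ∂ζ
        ≤ ∫⁻ u in Set.Ioi K, H u * ∫⁻ u, φ u ∂ζ ∂ζ :=
          setLIntegral_mono' measurableSet_Ioi fun u hu => by gcongr; exact le_lintegral u hu
      _ = (∫⁻ u in Set.Ioi K, H u ∂ζ) * ∫⁻ u, φ u ∂ζ := lintegral_mul_const _ measurable_H

theorem lmarginal_prod_mul_le [IsProbabilityMeasure ζ] {K : V → ℝ} {H : V → ℝ → ℝ≥0∞}
    (measurable_H : ∀ z, Measurable (H z)) (hH : ∀ z, ∀ u ≤ K z, H z u = 1) {T : Finset V}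
    {f : (V → ℝ) → ℝ≥0∞} (measurable_f : Measurable f)
    (hf : ∀ z ∈ T, ∀ x u' u, K z < u' → f (Function.update x z u') ≤ f (Function.update x z u))
    (x : V → ℝ) :
    (∫⋯∫⁻_T, (fun x => (∏ z ∈ T, H z (x z)) * f x) ∂fun _ => ζ) x ≤
      (∏ z ∈ T, (1 + ∫⁻ u in Set.Ioi (K z), H z u ∂ζ)) * (∫⋯∫⁻_T, f ∂fun _ => ζ) x := by
  have measurable_prod (T : Finset V) : Measurable fun x : V → ℝ => ∏ z ∈ T, H z (x z) :=
    Finset.measurable_fun_prod _ fun z _ => (measurable_H z).comp (measurable_pi_apply z)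
  induction T using Finset.induction generalizing f with
  | empty => simp
  | insert i T hi ih =>
    set q := 1 + ∫⁻ u in Set.Ioi (K i), H i u ∂ζ
    let f' (x : V → ℝ) : ℝ≥0∞ := ∫⁻ u, f (Function.update x i u) ∂ζ
    have measurable_f' : Measurable f' := by
      have := Measurable.lmarginal (fun _ : V => ζ) (s := {i}) measurable_f
      rwa [lmarginal_singleton] at this
    have integrate_site (x : V → ℝ) :
        ∫⁻ u, (∏ z ∈ insert i T, H z (Function.update x i u z)) * f (Function.update x i u) ∂ζ ≤
          q * ((∏ z ∈ T, H z (x z)) * f' x) := by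
      have prod_update (u : ℝ) : ∏ z ∈ insert i T, H z (Function.update x i u z) =
          (∏ z ∈ T, H z (x z)) * H i u := by
        rw [Finset.prod_insert hi, Function.update_self, mul_comm]
        congr 1
        exact Finset.prod_congr rfl fun z hz => by
          rw [Function.update_of_ne (ne_of_mem_of_not_mem hz hi)]
      have measurable_mul : Measurable fun u => H i u * f (Function.update x i u) :=
        (measurable_H i).mul (measurable_f.comp (measurable_update x))
      simp only [prod_update, mul_assoc]
      rw [lintegral_const_mul _ measurable_mul, mul_left_comm]
      gcongr
      exact lintegral_mul_le_one_add_setLIntegral_mul (measurable_H i) (hH i)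
        (hf i (Finset.mem_insert_self _ _) x)
    rw [lmarginal_insert' (fun x => (∏ z ∈ insert i T, H z (x z)) * f x)
        ((measurable_prod _).mul measurable_f) hi,
      lmarginal_insert' _ measurable_f hi, Finset.prod_insert hi, mul_assoc]
    refine (lmarginal_mono integrate_site x).trans ?_
    calc _ = q * (∫⋯∫⁻_T, (fun x => (∏ z ∈ T, H z (x z)) * f' x) ∂fun _ => ζ) x :=
          lintegral_const_mul _ (((measurable_prod T).mul measurable_f').comp
            measurable_updateFinset)
      _ ≤ _ := mul_le_mul_right (ih measurable_f' fun z hz x u' u hu => ?_) _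
    refine lintegral_mono fun s => ?_
    have hzi := ne_of_mem_of_not_mem hz hi
    simp only [Function.update_comm hzi]
    exact hf z (Finset.mem_insert_of_mem hz) _ u' u hu

end Decoupling

section Clip

variable {V : Type*} {Bd : Finset V} {B : ℝ} {K x : V → ℝ}

/-- The boundary condition on `Bd` obtained from `x` by raising all spins to at least `B`. -/
noncomputable def clip (Bd : Finset V) (B : ℝ) (x : V → ℝ) : V → ℝ :=
  fun v => if v ∈ Bd then max (x v) B else 0

/-- The boundary condition on `Bd` that modifies `clip Bd B x` by resetting to `B` the spins above
the thresholds `K`. -/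
noncomputable def cap (Bd : Finset V) (B : ℝ) (K x : V → ℝ) : V → ℝ :=
  fun v => if v ∈ Bd then if K v < x v then B else max (x v) B else 0

theorem clip_nonneg (hB : 0 ≤ B) : 0 ≤ clip Bd B x := by
  intro v
  unfold clip
  split_ifs
  · exact hB.trans (le_max_right _ _)
  · exact le_rfl

theorem monotone_clip : Monotone (clip Bd B) := by
  intro x y h v
  unfold clip
  split_ifs
  · exact max_le_max_right _ (h v)
  · exact le_rfl

theorem clip_eq_self (h : ∀ z ∈ Bd, B ≤ x z) (h₀ : ∀ v ∉ Bd, x v = 0) : clip Bd B x = x := by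
  funext v
  unfold clip
  split_ifs with hv
  · exact max_eq_left (h v hv)
  · exact (h₀ v hv).symm

theorem measurable_clip : Measurable (clip Bd B) := by
  refine measurable_pi_lambda _ fun v => ?_
  unfold clip
  split_ifs <;> fun_prop

theorem measurable_cap : Measurable (cap Bd B K) := by
  refine measurable_pi_lambda _ fun v => ?_
  unfold cap
  split_ifs
  · exact Measurable.ite (measurableSet_lt measurable_const (measurable_pi_apply v))
      measurable_const ((measurable_pi_apply v).max measurable_const)
  · exact measurable_const

theorem clip_cap : clip Bd B (cap Bd B K x) = cap Bd B K x := by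
  refine clip_eq_self (fun z hz => ?_) fun v hv => if_neg hv
  simp only [cap, hz, if_true]
  split_ifs
  · exact le_rfl
  · exact le_max_right _ _

theorem cap_le_clip : cap Bd B K x ≤ clip Bd B x := by
  intro v
  unfold cap clip
  split_ifs
  · exact le_max_right _ _
  · exact le_rfl
  · exact le_rfl

theorem cap_update_le_cap_update {z : V} {u' : ℝ} (hu' : K z < u') (u : ℝ) :
    cap Bd B K (Function.update x z u') ≤ cap Bd B K (Function.update x z u) := by
  intro v
  unfold cap
  rcases eq_or_ne v z with rfl | hv
  · simp only [Function.update_self, hu', if_true]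
    split_ifs
    · exact le_rfl
    · exact le_max_right _ _
    · exact le_rfl
  · simp only [Function.update_of_ne hv, le_refl]

end Clip

section Harris

variable {V : Type*} {G : SimpleGraph V} [∀ x : V, Fintype (G.neighborSet x)] {β : ℝ}
  {ρ ζ : Measure ℝ} {D : ℕ} {Δ Bd : Finset V} {M B c : ℝ} {F : (V → ℝ) → ℝ≥0∞}

variable (G β ρ) in
/-- The tilted partition function of `Δ`, as a function of the clipped boundary condition. On
nonnegative boundary conditions the tilt makes it increasing, and clipping extends this to all. -/
noncomputable def clippedWeight (Δ Bd : Finset V) (c B : ℝ) (x : V → ℝ) : ℝ≥0∞ :=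
  boundaryTilt Bd c (clip Bd B x) * partitionFunction G β ρ Δ (clip Bd B x)

theorem IsControlledRegion.monotone_clippedWeight (H : IsControlledRegion G β ρ D Δ Bd M)
    (hB : 0 ≤ B) : Monotone (clippedWeight G β ρ Δ Bd (β * D * M) B) := fun _ _ hxy =>
  H.boundaryTilt_mul_partitionFunction_mono (clip_nonneg hB) (monotone_clip hxy)

theorem measurable_clippedWeight [SigmaFinite ρ] : Measurable (clippedWeight G β ρ Δ Bd c B) :=
  (measurable_boundaryTilt.comp measurable_clip).mul
    ((measurable_partitionFunction Δ).comp measurable_clip)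

theorem lmarginal_clippedWeight [SigmaFinite ρ] [SigmaFinite ζ] (hζ : ∀ᵐ u ∂ζ, B ≤ u) :
    (∫⋯∫⁻_Bd, clippedWeight G β ρ Δ Bd c B ∂fun _ => ζ) 0 =
      tiltedMeasure G β ρ ζ Δ Bd c Set.univ := by
  rw [tiltedMeasure_univ]
  refine le_antisymm (lmarginal_le_lmarginal_of_ae hζ fun x hx hx₀ => ?_)
    (lmarginal_le_lmarginal_of_ae hζ fun x hx hx₀ => ?_)
  all_goals rw [clippedWeight, clip_eq_self hx hx₀]

theorem IsControlledRegion.lmarginal_gibbsExpectation_mul_le [IsProbabilityMeasure ζ]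
    (hζ : ∀ᵐ u ∂ζ, B ≤ u) (H : IsControlledRegion G β ρ D Δ Bd M) (hB : 0 ≤ B) (hF : Measurable F)
    (hmono : Monotone F) :
    (∫⋯∫⁻_Bd, gibbsExpectation G β ρ Δ F ∂fun _ => ζ) 0 *
        tiltedMeasure G β ρ ζ Δ Bd (β * D * M) Set.univ ≤
      ∫⁻ x, F x ∂tiltedMeasure G β ρ ζ Δ Bd (β * D * M) := by
  have := H.isSingleSiteMeasure.isFiniteMeasure
  set w := clippedWeight G β ρ Δ Bd (β * D * M) B
  have measurable_w : Measurable w := measurable_clippedWeight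
  have measurable_gibbs : Measurable (gibbsExpectation G β ρ Δ F) :=
    measurable_gibbsExpectation Δ hF
  have harris := four_functions_lmarginal (fun _ => ζ) Bd measurable_gibbs measurable_w
    (measurable_gibbs.mul measurable_w) (measurable_const (a := 1)) (fun x y => by
      rw [mul_one]
      exact mul_le_mul'
        (monotone_gibbsExpectation H.beta_nonneg H.isSingleSiteMeasure hF hmono le_sup_left)
        (H.monotone_clippedWeight hB le_sup_right)) 0 0
  rw [sup_idem, inf_idem, lmarginal_clippedWeight hζ] at harris
  rw [lintegral_tiltedMeasure hF]
  refine harris.trans ?_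
  have lmarginal_one : (∫⋯∫⁻_Bd, (fun _ => 1) ∂fun _ : V => ζ) 0 = 1 := by simp [lmarginal]
  rw [lmarginal_one, mul_one]
  refine lmarginal_le_lmarginal_of_ae hζ fun x hx hx₀ => ?_
  simp only [w, Pi.mul_apply, clippedWeight]
  rw [clip_eq_self hx hx₀, mul_left_comm,
    gibbsExpectation_mul_partitionFunction H.beta_nonneg H.isSingleSiteMeasure]

end Harris

section TiltedSingleSite

variable {ρ : Measure ℝ} {b : ℝ}

/-- The mean of `g` under the normalization of the tilted single-site measure `ρ_b`. -/
noncomputable def rhoModMean (ρ : Measure ℝ) (b : ℝ) (g : ℝ → ℝ≥0∞) : ℝ≥0∞ :=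
  (rhoMod ρ b Set.univ)⁻¹ * ∫⁻ u, g u ∂rhoMod ρ b

theorem lintegral_rhoMod {g : ℝ → ℝ≥0∞} (hg : Measurable g) :
    ∫⁻ u, g u ∂rhoMod ρ b = ∫⁻ u, ENNReal.ofReal (Real.exp (b * u ^ 2)) * g u ∂ρ :=
  lintegral_withDensity_eq_lintegral_mul _ (by fun_prop) hg

theorem rhoMod_univ : rhoMod ρ b Set.univ = ∫⁻ u, ENNReal.ofReal (Real.exp (b * u ^ 2)) ∂ρ := by
  simpa using lintegral_rhoMod (ρ := ρ) (b := b) (measurable_const (a := 1))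

theorem IsSingleSiteMeasure.rhoMod_univ_lt_top (h : IsSingleSiteMeasure ρ) (b : ℝ) :
    rhoMod ρ b Set.univ < ∞ :=
  rhoMod_univ.trans_lt (h.lintegral_exp_mul_sq_lt_top b)

theorem rhoMod_ne_zero {s : Set ℝ} (hs : MeasurableSet s) (h : ρ s ≠ 0) : rhoMod ρ b s ≠ 0 := by
  rw [rhoMod, withDensity_apply _ hs]
  refine ((setLIntegral_pos_iff (by fun_prop)).2 ?_).ne'
  simpa [Function.support, Real.exp_pos, pos_iff_ne_zero] using h

end TiltedSingleSite

section Regularity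

variable {V : Type*} {G : SimpleGraph V} {β : ℝ} {ρ : Measure ℝ} {C Ct b : ℝ}

/-- The quantity `A(x, Λ, 2, ξ, C)` measuring the growth of the boundary condition `ξ` as seen
from `x`, for nearest-neighbour interactions and `f = 1`. -/
noncomputable abbrev boundaryGrowth (G : SimpleGraph V) (C : ℝ) (Λ : Finset V) (ξ : V → ℝ)
    (x : V) : ℝ :=
  ARealL (Jnn G) (fun _ => 1) 2 ξ C x Λ

/-- The regularity bound (case `n = 2`): marginals of finite-volume Gibbs measures have densities
at most `∏ exp(C̃ A²)` with respect to the normalized product of the tilted measures `ρ_b`. -/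
def HasRegularMarginals (G : SimpleGraph V) (β : ℝ) (ρ : Measure ℝ) (C Ct b : ℝ) : Prop :=
  ∀ (Λ Λ' : Finset V) (hsub : Λ' ⊆ Λ) (ξ : V → ℝ),
    marg hsub (gibbs (Jnn G) β ρ Λ ξ) ≤
      ENNReal.ofReal (∏ x ∈ Λ', Real.exp (Ct * boundaryGrowth G C Λ ξ x ^ 2)) •
        prodN (rhoMod ρ b) Λ'

theorem lintegral_prodN_prod {μ : Measure ℝ} [SigmaFinite μ] (T : Finset V) {g : V → ℝ → ℝ≥0∞}
    (hg : ∀ a, Measurable (g a)) :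
    ∫⁻ ψ, ∏ a, g a.1 (ψ a) ∂prodN μ T = ∏ a ∈ T, ((μ Set.univ)⁻¹ * ∫⁻ u, g a u ∂μ) := by
  have lintegral_pi_prod :
      ∫⁻ ψ : T → ℝ, ∏ a, g a.1 (ψ a) ∂Measure.pi (fun _ => μ) = ∏ a ∈ T, ∫⁻ u, g a u ∂μ := by
    have eval := lmarginal_prod_eval (μ := fun _ => μ) hg (subset_refl T) 0
    rw [Finset.sdiff_self, Finset.prod_empty, mul_one] at eval
    rw [← eval]
    refine lintegral_congr fun ψ => ?_
    refine Eq.trans ?_ (Finset.prod_coe_sort T fun a =>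
      g a (Function.updateFinset (0 : V → ℝ) T ψ a))
    exact Finset.prod_congr rfl fun a _ => by simp [Function.updateFinset_def]
  rw [prodN, lintegral_smul_measure, lintegral_pi_prod, Measure.pi_univ, Finset.prod_mul_distrib]
  simp [ENNReal.inv_pow]

variable [∀ x : V, Fintype (G.neighborSet x)]

theorem HasRegularMarginals.boltzmannIntegral_prod_le (hreg : HasRegularMarginals G β ρ C Ct b)
    (hβ : 0 ≤ β) (h : IsSingleSiteMeasure ρ) {Δ T : Finset V} (hT : T ⊆ Δ) (ξ : V → ℝ)
    {g : V → ℝ → ℝ≥0∞} (hg : ∀ a, Measurable (g a)) :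
    boltzmannIntegral G β ρ Δ (fun x => ∏ a ∈ T, g a (x a)) ξ ≤ partitionFunction G β ρ Δ ξ *
      ∏ a ∈ T, (ENNReal.ofReal (Real.exp (Ct * boundaryGrowth G C Δ ξ a ^ 2)) *
        rhoModMean ρ b (g a)) := by
  have := h.isFiniteMeasure
  have : IsFiniteMeasure (rhoMod ρ b) := ⟨h.rhoMod_univ_lt_top b⟩
  have measurable_prod : Measurable fun x : V → ℝ => ∏ a ∈ T, g a (x a) :=
    Finset.measurable_fun_prod _ fun a _ => (hg a).comp (measurable_pi_apply a)
  have measurable_prod' : Measurable fun ψ : T → ℝ => ∏ a, g a.1 (ψ a) :=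
    Finset.measurable_fun_prod _ fun a _ => (hg a).comp (measurable_pi_apply a)
  have measurable_restrict : Measurable fun (φ : Δ → ℝ) (x : T) => φ ⟨x.1, hT x.2⟩ :=
    measurable_pi_lambda _ fun x => measurable_pi_apply _
  have eq_marg : gibbsExpectation G β ρ Δ (fun x => ∏ a ∈ T, g a (x a)) ξ =
      ∫⁻ ψ, ∏ a, g a.1 (ψ a) ∂marg hT (gibbs (Jnn G) β ρ Δ ξ) := by
    rw [← lintegral_gibbs_Jnn ξ measurable_prod, marg,
      lintegral_map measurable_prod' measurable_restrict]
    refine lintegral_congr fun φ => ?_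
    rw [← Finset.prod_coe_sort]
    exact Finset.prod_congr rfl fun a _ => by simp [Function.updateFinset_def, hT a.2]
  rw [← gibbsExpectation_mul_partitionFunction hβ h, mul_comm, eq_marg]
  gcongr
  refine (lintegral_mono' (hreg Δ T hT ξ) le_rfl).trans_eq ?_
  rw [lintegral_smul_measure, lintegral_prodN_prod T hg, smul_eq_mul,
    ENNReal.ofReal_prod_of_nonneg fun a _ => (Real.exp_pos _).le, ← Finset.prod_mul_distrib]
  rfl

end Regularity

section BoundaryGrowth

variable {V : Type*} {G : SimpleGraph V} {C : ℝ} {Λ : Finset V} {ξ : V → ℝ}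

theorem IsWalk.dist_le {R : Set V} {m : ℕ} {w : ℕ → V} (hw : IsWalk (Jnn G) R m w) {z : V}
    (hz : G.Adj (w m) z) : G.dist (w 0) z ≤ m + 1 := by
  have exists_walk : ∀ j ≤ m, ∃ p : G.Walk (w 0) (w j), p.length = j := by
    intro j hj
    induction j with
    | zero => exact ⟨.nil, rfl⟩
    | succ j ih =>
      obtain ⟨p, hp⟩ := ih (by lia)
      have hadj : G.Adj (w j) (w (j + 1)) := by
        by_contra hadj
        exact hw.2 j (by lia) (if_neg hadj)
      exact ⟨p.concat hadj, by simp [hp]⟩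
  obtain ⟨p, hp⟩ := exists_walk m le_rfl
  simpa [hp] using SimpleGraph.dist_le (p.concat hz)

theorem boundaryGrowth_nonneg (x : V) : 0 ≤ boundaryGrowth G C Λ ξ x :=
  Real.sInf_nonneg fun _ hA => zero_le_one.trans hA.1

variable [∀ x : V, Fintype (G.neighborSet x)]

theorem boundaryGrowth_le (hC : 0 ≤ C) {A : ℝ} (hA : 1 ≤ A) {x : V}
    (h : ∀ z ∈ closedNeighborFinset G Λ \ Λ, 0 ≤ ξ z ∧ ξ z ≤ C * A * 2 ^ G.dist x z) :
    boundaryGrowth G C Λ ξ x ≤ A := by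
  refine csInf_le ⟨1, fun A hA => hA.1⟩ ⟨hA, fun m w hw hx hm => ?_⟩
  have abs_Jnn (z : V) : |Jnn G (w m) z| = Jnn G (w m) z := by unfold Jnn; split_ifs <;> simp
  simp only [abs_Jnn, Finset.prod_const_one, mul_one, Finset.mem_coe] at hm ⊢
  have sum_field := tsum_Jnn_mul_compl (G := G) (x := ξ) hm
  have sum_one := tsum_Jnn_mul_compl (G := G) (x := fun _ => 1) hm
  simp only [mul_one] at sum_one
  erw [sum_field, sum_one]
  rw [abs_of_nonneg (Finset.sum_nonneg fun z hz => by
    split_ifs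
    exacts [(h z hz).1, le_rfl]), mul_assoc, mul_assoc, Finset.sum_mul]
  refine Finset.sum_le_sum fun z hz => ?_
  split_ifs with hadj
  · have dist_le : G.dist x z ≤ m + 1 := hx ▸ hw.dist_le hadj
    calc ξ z ≤ C * A * 2 ^ G.dist x z := (h z hz).2
      _ ≤ C * A * 2 ^ (m + 1) := by gcongr; norm_num
      _ = 1 * (C * (A * 2 ^ (m + 1))) := by ring
  · simp

end BoundaryGrowth

section ExpSums

variable {ι : Type*}

theorem ofReal_exp_mul_ofReal_exp (a b : ℝ) :
    ENNReal.ofReal (Real.exp a) * ENNReal.ofReal (Real.exp b) =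
      ENNReal.ofReal (Real.exp (a + b)) := by
  rw [← ENNReal.ofReal_mul (Real.exp_pos _).le, ← Real.exp_add]

theorem prod_ofReal_exp (s : Finset ι) (a : ι → ℝ) :
    ∏ i ∈ s, ENNReal.ofReal (Real.exp (a i)) = ENNReal.ofReal (Real.exp (∑ i ∈ s, a i)) := by
  rw [Real.exp_sum, ENNReal.ofReal_prod_of_nonneg fun a _ => (Real.exp_pos _).le]

theorem ofReal_exp_le_ofReal_exp {a b : ℝ} (h : a ≤ b) :
    ENNReal.ofReal (Real.exp a) ≤ ENNReal.ofReal (Real.exp b) :=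
  ENNReal.ofReal_le_ofReal (Real.exp_le_exp.2 h)

end ExpSums

section SphereSums

variable {V : Type*} {G : SimpleGraph V}

theorem exists_adj_dist_eq_of_dist_eq_succ (hconn : G.Connected) {s z : V} {n : ℕ}
    (h : G.dist s z = n + 1) : ∃ p, G.Adj p z ∧ G.dist s p = n := by
  obtain ⟨w, hw⟩ := hconn.exists_walk_length_eq_dist z s
  rw [G.dist_comm, h] at hw
  cases w with
  | nil => simp at hw
  | @cons _ p _ hadj w' =>
    rw [SimpleGraph.Walk.length_cons] at hw
    refine ⟨p, hadj.symm, ?_⟩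
    have dist_le := SimpleGraph.dist_le w'
    have triangle := hconn.dist_triangle (u := s) (v := p) (w := z)
    have dist_eq_one := SimpleGraph.dist_eq_one_iff_adj.2 hadj.symm
    rw [G.dist_comm] at dist_le
    lia

variable [∀ x : V, Fintype (G.neighborSet x)] {D : ℕ}

theorem card_sphere_le (hconn : G.Connected) (hdeg : ∀ x : V, G.degree x ≤ D) (s : V) (n : ℕ)
    (T : Finset V) (hT : ∀ z ∈ T, G.dist s z = n) : T.card ≤ D ^ n := by
  induction n generalizing T with
  | zero =>
    rw [pow_zero, Finset.card_le_one]
    intro a ha b hb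
    rw [← hconn.dist_eq_zero_iff.1 (hT a ha), ← hconn.dist_eq_zero_iff.1 (hT b hb)]
  | succ n ih =>
    choose! p adj_p dist_p using fun z (hz : z ∈ T) =>
      exists_adj_dist_eq_of_dist_eq_succ hconn (hT z hz)
    have subset_biUnion : T ⊆ (T.image p).biUnion fun a => G.neighborFinset a := fun z hz =>
      Finset.mem_biUnion.2 ⟨p z, Finset.mem_image_of_mem _ hz, by simpa using adj_p z hz⟩
    calc T.card ≤ ((T.image p).biUnion fun a => G.neighborFinset a).card :=
          Finset.card_le_card subset_biUnion
      _ ≤ (T.image p).card * D := Finset.card_biUnion_le_card_mul _ _ D fun a _ => hdeg a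
      _ ≤ D ^ n * D := Nat.mul_le_mul_right _ (ih _ (Finset.forall_mem_image.2 dist_p))
      _ = D ^ (n + 1) := (pow_succ D n).symm

theorem exists_sum_dist_le (hconn : G.Connected) (hdeg : ∀ x : V, G.degree x ≤ D)
    {f : ℕ → ℝ} (hf : 0 ≤ f) (hsum : Summable fun n => (D : ℝ) ^ n * f n) {ε : ℝ} (hε : 0 < ε) :
    ∃ r : ℕ, ∀ (s : V) (T : Finset V), (∀ z ∈ T, r < G.dist s z) →
      ∑ z ∈ T, f (G.dist s z) ≤ ε := by
  obtain ⟨s₀, hs₀⟩ := summable_iff_vanishing_norm.1 hsum ε hε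
  refine ⟨s₀.sup id, fun s T hT => ?_⟩
  have disjoint_image : Disjoint (T.image (G.dist s)) s₀ := by
    refine Finset.disjoint_left.2 (Finset.forall_mem_image.2 fun z hz hz' => ?_)
    exact (hT z hz).not_ge (Finset.le_sup (f := id) hz')
  refine le_trans ?_ ((le_abs_self _).trans (hs₀ _ disjoint_image).le)
  rw [← Finset.sum_fiberwise_of_maps_to fun z hz => Finset.mem_image_of_mem (G.dist s) hz]
  refine Finset.sum_le_sum fun n _ => ?_
  have card_le : ((T.filter fun z => G.dist s z = n).card : ℝ) ≤ (D : ℝ) ^ n := by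
    exact_mod_cast card_sphere_le hconn hdeg s n _ fun z hz => (Finset.mem_filter.1 hz).2
  calc ∑ z ∈ T with G.dist s z = n, f (G.dist s z)
      = (T.filter fun z => G.dist s z = n).card * f n := by
        rw [Finset.sum_congr rfl fun z hz => congrArg f (Finset.mem_filter.1 hz).2,
          Finset.sum_const, nsmul_eq_mul]
    _ ≤ (D : ℝ) ^ n * f n := mul_le_mul_of_nonneg_right card_le (hf n)

end SphereSums

theorem summable_pow_mul_exp_neg_four_pow (D : ℝ) (hD : 0 ≤ D) :
    Summable fun n : ℕ => D ^ n * Real.exp (-4 ^ n) := by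
  refine Summable.of_nonneg_of_le (fun n => by positivity) (fun n => ?_)
    (Real.summable_pow_div_factorial D)
  rw [Real.exp_neg, ← div_eq_mul_inv]
  refine div_le_div_of_nonneg_left (by positivity) (by positivity) ?_
  have lt_two_pow : (n : ℝ) ≤ 2 ^ n := by exact_mod_cast n.lt_two_pow_self.le
  calc ((n.factorial : ℕ) : ℝ) ≤ (n : ℝ) ^ n := by exact_mod_cast n.factorial_le_pow
    _ ≤ Real.exp n ^ n := by
      gcongr
      linarith [Real.add_one_le_exp (n : ℝ)]
    _ = Real.exp (n * n) := (Real.exp_nat_mul _ n).symm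
    _ ≤ Real.exp (2 ^ n * 2 ^ n) := by gcongr
    _ = Real.exp (4 ^ n) := by rw [← mul_pow]; norm_num

section BoundaryMeasure

variable {ρ : Measure ℝ} {a b B : ℝ}

/-- The normalization of the single-site measure `ζ_{a,B}`. -/
noncomputable def zetaProb (ρ : Measure ℝ) (a B : ℝ) : Measure ℝ :=
  (zetaM ρ a B Set.univ)⁻¹ • zetaM ρ a B

theorem zetaM_Ici (t : ℝ) :
    zetaM ρ a B (Set.Ici t) = rhoMod ρ a (Set.Ici (t - B) ∩ Set.Ici 0) := by
  rw [zetaM, Measure.restrict_apply measurableSet_Ici,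
    Measure.map_apply (by fun_prop) (measurableSet_Ici.inter measurableSet_Ici)]
  congr 1
  ext u
  simp

theorem zetaM_univ : zetaM ρ a B Set.univ = rhoMod ρ a (Set.Ici 0) := by
  rw [zetaM, Measure.restrict_apply MeasurableSet.univ,
    Measure.map_apply (by fun_prop) (MeasurableSet.univ.inter measurableSet_Ici)]
  congr 1
  ext u
  simp

theorem IsSingleSiteMeasure.zetaM_univ_ne_zero (h : IsSingleSiteMeasure ρ) :
    zetaM ρ a B Set.univ ≠ 0 := by
  rw [zetaM_univ]
  exact rhoMod_ne_zero measurableSet_Ici h.measure_Ici_zero_pos.ne'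

theorem IsSingleSiteMeasure.zetaM_univ_ne_top (h : IsSingleSiteMeasure ρ) :
    zetaM ρ a B Set.univ ≠ ∞ := by
  rw [zetaM_univ]
  exact ((measure_mono (Set.subset_univ _)).trans_lt (h.rhoMod_univ_lt_top a)).ne

theorem IsSingleSiteMeasure.isProbabilityMeasure_zetaProb (h : IsSingleSiteMeasure ρ) :
    IsProbabilityMeasure (zetaProb ρ a B) :=
  ⟨by simpa [zetaProb] using ENNReal.inv_mul_cancel h.zetaM_univ_ne_zero h.zetaM_univ_ne_top⟩

theorem ae_le_zetaProb : ∀ᵐ u ∂zetaProb ρ a B, B ≤ u :=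
  Measure.ae_smul_measure (ae_restrict_mem measurableSet_Ici) _

theorem IsSingleSiteMeasure.lintegral_exp_mul_sq_zetaProb_lt_top (h : IsSingleSiteMeasure ρ)
    (c : ℝ) : ∫⁻ u, ENNReal.ofReal (Real.exp (c * u ^ 2)) ∂zetaProb ρ a B < ∞ := by
  rw [zetaProb, lintegral_smul_measure]
  refine ENNReal.mul_lt_top (ENNReal.inv_lt_top.2 (pos_iff_ne_zero.2 h.zetaM_univ_ne_zero)) ?_
  calc ∫⁻ u, ENNReal.ofReal (Real.exp (c * u ^ 2)) ∂zetaM ρ a B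
      ≤ ∫⁻ u, ENNReal.ofReal (Real.exp (c * u ^ 2)) ∂(rhoMod ρ a).map (· + B) :=
        lintegral_mono' Measure.restrict_le_self le_rfl
    _ = ∫⁻ u, ENNReal.ofReal (Real.exp (a * u ^ 2 + c * (u + B) ^ 2)) ∂ρ := by
        rw [lintegral_map (by fun_prop) (by fun_prop), lintegral_rhoMod (by fun_prop)]
        simp only [ofReal_exp_mul_ofReal_exp]
    _ ≤ ∫⁻ u, ENNReal.ofReal (Real.exp (2 * |c| * B ^ 2)) *
          ENNReal.ofReal (Real.exp ((a + 2 * |c|) * u ^ 2)) ∂ρ := by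
        refine lintegral_mono fun u => ?_
        rw [ofReal_exp_mul_ofReal_exp]
        refine ofReal_exp_le_ofReal_exp ?_
        nlinarith [mul_nonneg (abs_nonneg c) (sq_nonneg (u - B)),
          mul_le_mul_of_nonneg_right (le_abs_self c) (sq_nonneg (u + B))]
    _ < ∞ := by
        rw [lintegral_const_mul _ (by fun_prop)]
        exact ENNReal.mul_lt_top ENNReal.ofReal_lt_top (h.lintegral_exp_mul_sq_lt_top _)

theorem ofReal_exp_mul_rhoMod_Ici_le (hb : 0 ≤ b) (hB : 0 ≤ B) {t : ℝ} (ht : B ≤ t) :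
    ENNReal.ofReal (Real.exp (b * B ^ 2)) * rhoMod ρ b (Set.Ici t) ≤
      rhoMod ρ (2 * b) (Set.Ici t) := by
  rw [rhoMod, rhoMod, withDensity_apply _ measurableSet_Ici, withDensity_apply _ measurableSet_Ici,
    ← lintegral_const_mul _ (by fun_prop)]
  refine setLIntegral_mono (by fun_prop) fun u (hu : t ≤ u) => ?_
  rw [ofReal_exp_mul_ofReal_exp]
  refine ofReal_exp_le_ofReal_exp ?_
  have sq_le_sq : B ^ 2 ≤ u ^ 2 := pow_le_pow_left₀ hB (ht.trans hu) 2
  linarith [mul_le_mul_of_nonneg_left sq_le_sq hb]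

theorem IsSingleSiteMeasure.ofReal_exp_mul_inv_rhoMod_univ (h : IsSingleSiteMeasure ρ) {k : ℝ}
    (hB : b * B ^ 2 =
      k + Real.log (rhoMod ρ a Set.univ).toReal - Real.log (rhoMod ρ b Set.univ).toReal) :
    ENNReal.ofReal (Real.exp k) * (rhoMod ρ b Set.univ)⁻¹ =
      ENNReal.ofReal (Real.exp (b * B ^ 2)) * (rhoMod ρ a Set.univ)⁻¹ := by
  have toReal_pos (c : ℝ) : 0 < (rhoMod ρ c Set.univ).toReal :=
    ENNReal.toReal_pos (rhoMod_ne_zero MeasurableSet.univ h.measure_univ_ne_zero)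
      (h.rhoMod_univ_lt_top c).ne
  have ofReal_inv (c : ℝ) : (rhoMod ρ c Set.univ)⁻¹ =
      ENNReal.ofReal (rhoMod ρ c Set.univ).toReal⁻¹ := by
    rw [ENNReal.ofReal_inv_of_pos (toReal_pos c), ENNReal.ofReal_toReal (h.rhoMod_univ_lt_top c).ne]
  have := toReal_pos a
  rw [ofReal_inv, ofReal_inv, ← ENNReal.ofReal_mul (Real.exp_pos _).le,
    ← ENNReal.ofReal_mul (Real.exp_pos _).le, hB, Real.exp_sub, Real.exp_add,
    Real.exp_log (toReal_pos a), Real.exp_log (toReal_pos b)]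
  congr 1
  field_simp

theorem IsSingleSiteMeasure.ofReal_exp_mul_rhoModMean_Ici_le (h : IsSingleSiteMeasure ρ)
    (hb : 0 ≤ b) (hB₀ : 0 ≤ B) {k : ℝ} (hB : b * B ^ 2 =
      k + Real.log (rhoMod ρ (2 * b) Set.univ).toReal - Real.log (rhoMod ρ b Set.univ).toReal)
    {t : ℝ} (ht : B ≤ t) :
    ENNReal.ofReal (Real.exp k) * rhoModMean ρ b ((Set.Ici t).indicator 1) ≤
      zetaProb ρ (2 * b) B (Set.Ici t) := by
  have Ici_subset : Set.Ici t ⊆ Set.Ici (t - B) ∩ Set.Ici 0 := fun u (hu : t ≤ u) =>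
    ⟨(sub_le_self t hB₀).trans hu, (hB₀.trans ht).trans hu⟩
  calc ENNReal.ofReal (Real.exp k) * rhoModMean ρ b ((Set.Ici t).indicator 1)
      = (rhoMod ρ (2 * b) Set.univ)⁻¹ *
          (ENNReal.ofReal (Real.exp (b * B ^ 2)) * rhoMod ρ b (Set.Ici t)) := by
        rw [rhoModMean, lintegral_indicator_one measurableSet_Ici, ← mul_assoc,
          h.ofReal_exp_mul_inv_rhoMod_univ hB]
        ring
    _ ≤ (rhoMod ρ (2 * b) (Set.Ici 0))⁻¹ *
          rhoMod ρ (2 * b) (Set.Ici (t - B) ∩ Set.Ici 0) := by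
        gcongr
        · exact Set.subset_univ _
        · exact (ofReal_exp_mul_rhoMod_Ici_le hb hB₀ ht).trans (measure_mono Ici_subset)
    _ = zetaProb ρ (2 * b) B (Set.Ici t) := by
        simp [zetaProb, zetaM_Ici, zetaM_univ]

end BoundaryMeasure

section ControlledRegion

variable {V : Type*} {G : SimpleGraph V} [∀ x : V, Fintype (G.neighborSet x)] {β : ℝ}
  {ρ : Measure ℝ} {b : ℝ}

theorem rhoModMean_mono {g g' : ℝ → ℝ≥0∞} (hg : g ≤ g') : rhoModMean ρ b g ≤ rhoModMean ρ b g' :=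
  mul_le_mul_right (lintegral_mono hg) _

theorem IsSingleSiteMeasure.rhoModMean_exp_mul_sq_lt_top (h : IsSingleSiteMeasure ρ) (b c : ℝ) :
    rhoModMean ρ b (fun u => ENNReal.ofReal (Real.exp (c * u ^ 2))) < ∞ := by
  refine ENNReal.mul_lt_top (ENNReal.inv_lt_top.2 (pos_iff_ne_zero.2
    (rhoMod_ne_zero MeasurableSet.univ h.measure_univ_ne_zero))) ?_
  rw [lintegral_rhoMod (by fun_prop)]
  simp only [ofReal_exp_mul_ofReal_exp, ← add_mul]
  exact h.lintegral_exp_mul_sq_lt_top _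

theorem HasRegularMarginals.isControlledRegion {C Ct : ℝ} (hreg : HasRegularMarginals G β ρ C Ct b)
    (hβ : 0 ≤ β) (h : IsSingleSiteMeasure ρ) (hC : 0 ≤ C) (hCt : 0 ≤ Ct) {D : ℕ}
    (hdeg : ∀ x : V, G.degree x ≤ D) {Δ Bd : Finset V}
    (hcl : closedNeighborFinset G Δ ⊆ Δ ∪ Bd) (hdisj : Disjoint Δ Bd) :
    IsControlledRegion G β ρ D Δ Bd (Real.exp Ct *
      (rhoModMean ρ b fun u => ENNReal.ofReal (Real.exp (1 * u ^ 2))).toReal) := by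
  refine ⟨hβ, h, hdeg, hcl, hdisj, by positivity, fun y hy => ?_⟩
  have regular := hreg.boltzmannIntegral_prod_le hβ h (Finset.singleton_subset_iff.2 hy) 0
    (g := fun _ u => ENNReal.ofReal (-u)) (fun _ => by fun_prop)
  simp only [Finset.prod_singleton] at regular
  refine regular.trans ?_
  rw [mul_comm, ENNReal.ofReal_mul (Real.exp_pos _).le,
    ENNReal.ofReal_toReal (h.rhoModMean_exp_mul_sq_lt_top b 1).ne]
  have growth_le_one : boundaryGrowth G C Δ 0 y ≤ 1 :=
    boundaryGrowth_le hC le_rfl fun z _ => ⟨le_rfl, by simp only [Pi.zero_apply]; positivity⟩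
  gcongr
  · exact mul_le_of_le_one_right hCt (pow_le_one₀ (boundaryGrowth_nonneg y) growth_le_one)
  · refine rhoModMean_mono fun u => ENNReal.ofReal_le_ofReal ?_
    nlinarith [Real.add_one_le_exp (1 * u ^ 2), sq_nonneg (u + 1)]

end ControlledRegion

section LoweringBoundary

variable {V : Type*} {G : SimpleGraph V} {β : ℝ} {ρ : Measure ℝ} {D : ℕ}
  {Δ Bd Bad S : Finset V} {x y : V → ℝ}

/-- The vertices of `Δ` with a neighbour in `Bad`. -/
noncomputable def neighborsIn (G : SimpleGraph V) (Δ Bad : Finset V) : Finset V :=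
  Δ.filter fun a => ∃ z ∈ Bad, G.Adj a z

theorem neighborsIn_subset : neighborsIn G Δ Bad ⊆ Δ := Finset.filter_subset _ _

variable [∀ x : V, Fintype (G.neighborSet x)]

theorem sum_sum_adj_le (hdeg : ∀ x : V, G.degree x ≤ D) (Y : Finset V) {w : V → ℝ}
    (hw : ∀ z ∈ Bad, 0 ≤ w z) :
    ∑ a ∈ Y, ∑ z ∈ Bad, (if G.Adj a z then w z else 0) ≤ D * ∑ z ∈ Bad, w z := by
  rw [Finset.sum_comm, Finset.mul_sum]
  refine Finset.sum_le_sum fun z hz => ?_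
  rw [← Finset.sum_filter, Finset.sum_const, nsmul_eq_mul]
  exact mul_le_mul_of_nonneg_right (by exact_mod_cast card_filter_adj_le hdeg Y z) (hw z hz)

theorem sum_neighbors_adj_le (hdeg : ∀ x : V, G.degree x ≤ D) {w : V → ℝ} (hw : 0 ≤ w) :
    ∑ a ∈ Δ, ∑ z ∈ Bad, (if G.Adj a z then w a else 0) ≤
      D * ∑ a ∈ neighborsIn G Δ Bad, w a := by
  rw [neighborsIn, Finset.mul_sum, Finset.sum_filter]
  refine Finset.sum_le_sum fun a _ => ?_
  split_ifs with ha
  · rw [← Finset.sum_filter, Finset.sum_const, nsmul_eq_mul]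
    simp only [G.adj_comm a]
    exact mul_le_mul_of_nonneg_right (by exact_mod_cast card_filter_adj_le hdeg Bad a) (hw a)
  · exact (Finset.sum_eq_zero fun z hz => if_neg fun hadj => ha ⟨z, hz, hadj⟩).le

theorem energy_le_energy_add_sq (hβ : 0 ≤ β) (hdeg : ∀ x : V, G.degree x ≤ D)
    (hcl : closedNeighborFinset G Δ ⊆ Δ ∪ Bd) (hdisj : Disjoint Δ Bd)
    (hxy : ∀ v ∈ Δ, y v = x v) (hbad : Bad ⊆ Bd) (hgood : ∀ z ∈ Bd, z ∉ Bad → y z = x z)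
    (hle : ∀ z ∈ Bad, 0 ≤ y z ∧ y z ≤ x z) :
    energy G β Δ x ≤ energy G β Δ y +
      (β * D * ∑ z ∈ Bad, x z ^ 2 + ∑ a ∈ neighborsIn G Δ Bad, β * D * y a ^ 2) := by
  have energy_sub := energy_sub_energy_of_eqOn (G := G) (β := β) hcl hdisj hxy
  have sum_le : ∑ a ∈ Δ, ∑ z ∈ Bd, (if G.Adj a z then y a * (x z - y z) else 0) ≤
      D * ∑ z ∈ Bad, x z ^ 2 + D * ∑ a ∈ neighborsIn G Δ Bad, y a ^ 2 :=
    calc ∑ a ∈ Δ, ∑ z ∈ Bd, (if G.Adj a z then y a * (x z - y z) else 0)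
        = ∑ a ∈ Δ, ∑ z ∈ Bad, (if G.Adj a z then y a * (x z - y z) else 0) := by
          refine Finset.sum_congr rfl fun a _ => (Finset.sum_subset hbad fun z hz hz' => ?_).symm
          simp [hgood z hz hz']
      _ ≤ ∑ a ∈ Δ, ∑ z ∈ Bad,
            ((if G.Adj a z then x z ^ 2 else 0) + if G.Adj a z then y a ^ 2 else 0) := by
          refine Finset.sum_le_sum fun a _ => Finset.sum_le_sum fun z hz => ?_
          obtain ⟨hy, hyx⟩ := hle z hz
          split_ifs
          · nlinarith [sq_nonneg (y a - (x z - y z)), sq_nonneg (y a)]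
          · simp
      _ ≤ _ := by
          simp only [Finset.sum_add_distrib]
          exact add_le_add (sum_sum_adj_le hdeg Δ fun z _ => sq_nonneg _)
            (sum_neighbors_adj_le hdeg fun a => sq_nonneg (y a))
  rw [← Finset.mul_sum]
  linarith [mul_le_mul_of_nonneg_left sum_le hβ]

theorem boltzmannIntegral_le_of_lowered (hβ : 0 ≤ β)
    (hdeg : ∀ x : V, G.degree x ≤ D) (hcl : closedNeighborFinset G Δ ⊆ Δ ∪ Bd)
    (hdisj : Disjoint Δ Bd) (hbad : Bad ⊆ Bd) (hgood : ∀ z ∈ Bd, z ∉ Bad → y z = x z)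
    (hle : ∀ z ∈ Bad, 0 ≤ y z ∧ y z ≤ x z) {F : (V → ℝ) → ℝ≥0∞} (hF : Measurable F)
    (hFΔ : DependsOn F Δ) :
    boltzmannIntegral G β ρ Δ F x ≤ ENNReal.ofReal (Real.exp (β * D * ∑ z ∈ Bad, x z ^ 2)) *
      boltzmannIntegral G β ρ Δ (fun x => F x *
        ∏ a ∈ neighborsIn G Δ Bad, ENNReal.ofReal (Real.exp (β * D * x a ^ 2))) y := by
  have measurable_mul : Measurable fun x : V → ℝ =>
      F x * ∏ a ∈ neighborsIn G Δ Bad, ENNReal.ofReal (Real.exp (β * D * x a ^ 2)) :=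
    hF.mul (by fun_prop)
  rw [← boltzmannIntegral_const_mul Δ _ measurable_mul, boltzmannIntegral_apply,
    boltzmannIntegral_apply]
  refine lintegral_mono fun φ => ?_
  set x' := Function.updateFinset x Δ φ
  set y' := Function.updateFinset y Δ φ
  have eq_on (v : V) (hv : v ∈ Δ) : y' v = x' v := by simp [x', y', Function.updateFinset_def, hv]
  have x'_eq (v : V) (hv : v ∈ Bd) : x' v = x v := by
    simp [x', Function.updateFinset_def, Finset.disjoint_right.1 hdisj hv]
  have y'_eq (v : V) (hv : v ∈ Bd) : y' v = y v := by
    simp [y', Function.updateFinset_def, Finset.disjoint_right.1 hdisj hv]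
  have energy_le := energy_le_energy_add_sq hβ hdeg hcl hdisj eq_on hbad
    (fun z hz hz' => by rw [x'_eq z hz, y'_eq z hz, hgood z hz hz'])
    (fun z hz => by rw [x'_eq z (hbad hz), y'_eq z (hbad hz)]; exact hle z hz)
  rw [Finset.sum_congr rfl fun z hz => by rw [x'_eq z (hbad hz)]] at energy_le
  have boltzmann_le := ofReal_exp_le_ofReal_exp energy_le
  rw [← ofReal_exp_mul_ofReal_exp, ← ofReal_exp_mul_ofReal_exp, ← prod_ofReal_exp] at boltzmann_le
  rw [hFΔ fun v hv => (eq_on v hv).symm]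
  calc F y' * boltzmann G β Δ x' ≤ F y' * _ := mul_le_mul_right boltzmann_le _
    _ = _ := by rw [boltzmann]; ring

theorem HasRegularMarginals.boltzmannIntegral_prod_mul_prod_exp_le {C Ct b : ℝ}
    (hreg : HasRegularMarginals G β ρ C Ct b) (hβ : 0 ≤ β) (h : IsSingleSiteMeasure ρ)
    {Y : Finset V} (hS : S ⊆ Δ) (hY : Y ⊆ Δ) (hSY : Disjoint S Y) {g : V → ℝ → ℝ≥0∞}
    (hg : ∀ a, Measurable (g a)) (c : ℝ) (x : V → ℝ) :
    boltzmannIntegral G β ρ Δ (fun x => (∏ a ∈ S, g a (x a)) *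
        ∏ a ∈ Y, ENNReal.ofReal (Real.exp (c * x a ^ 2))) x ≤
      partitionFunction G β ρ Δ x *
        ((∏ a ∈ S, (ENNReal.ofReal (Real.exp (Ct * boundaryGrowth G C Δ x a ^ 2)) *
            rhoModMean ρ b (g a))) *
          ∏ a ∈ Y, (ENNReal.ofReal (Real.exp (Ct * boundaryGrowth G C Δ x a ^ 2)) *
            rhoModMean ρ b fun u => ENNReal.ofReal (Real.exp (c * u ^ 2)))) := by
  let g' (a : V) : ℝ → ℝ≥0∞ := if a ∈ S then g a else fun u => ENNReal.ofReal (Real.exp (c * u ^ 2))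
  have measurable_g' (a : V) : Measurable (g' a) := by
    by_cases ha : a ∈ S
    · simpa only [g', ha, if_true] using hg a
    · simp only [g', ha, if_false]; fun_prop
  have g'_of_mem {a : V} (ha : a ∈ S) : g' a = g a := if_pos ha
  have g'_of_mem_right {a : V} (ha : a ∈ Y) :
      g' a = fun u => ENNReal.ofReal (Real.exp (c * u ^ 2)) :=
    if_neg (Finset.disjoint_right.1 hSY ha)
  have regular := hreg.boltzmannIntegral_prod_le hβ h (Finset.union_subset hS hY) x measurable_g'
  simp only [Finset.prod_union hSY] at regular
  simpa +contextual only [Finset.prod_congr rfl, g'_of_mem, g'_of_mem_right] using regular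

end LoweringBoundary

section DistToFinset

variable {V : Type*} {G : SimpleGraph V} {S : Finset V}

/-- The graph distance from `v` to the set `S` (with value `0` for `S = ∅`). -/
noncomputable def distToFinset (G : SimpleGraph V) (S : Finset V) (v : V) : ℕ :=
  sInf ((fun s => G.dist s v) '' (S : Set V))

theorem distToFinset_le {s : V} (hs : s ∈ S) (v : V) : distToFinset G S v ≤ G.dist s v :=
  Nat.sInf_le ⟨s, hs, rfl⟩

theorem exists_dist_eq_distToFinset (hS : S.Nonempty) (v : V) :
    ∃ s ∈ S, G.dist s v = distToFinset G S v :=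
  Nat.sInf_mem (Set.Nonempty.image (fun s => G.dist s v) (Finset.coe_nonempty.2 hS))

theorem distToFinset_le_add_dist (hconn : G.Connected) (hS : S.Nonempty) (v w : V) :
    distToFinset G S w ≤ distToFinset G S v + G.dist v w := by
  obtain ⟨s, hs, dist_eq⟩ := exists_dist_eq_distToFinset (G := G) hS v
  exact (distToFinset_le hs w).trans (dist_eq ▸ hconn.dist_triangle)

theorem sum_distToFinset_le (hS : S.Nonempty) (T : Finset V) {f : ℕ → ℝ} (hf : 0 ≤ f) :
    ∑ z ∈ T, f (distToFinset G S z) ≤ ∑ s ∈ S, ∑ z ∈ T, f (G.dist s z) := by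
  rw [Finset.sum_comm]
  refine Finset.sum_le_sum fun z _ => ?_
  obtain ⟨s, hs, dist_eq⟩ := exists_dist_eq_distToFinset (G := G) hS z
  rw [← dist_eq]
  exact Finset.single_le_sum (f := fun s => f (G.dist s z)) (fun s _ => hf _) hs

end DistToFinset

section HighSpins

variable {V : Type*} {Bd : Finset V} {B : ℝ} {K x : V → ℝ} {z : V}

theorem cap_of_le (hz : z ∈ Bd) (hx : B ≤ x z) (h : x z ≤ K z) : cap Bd B K x z = x z := by
  simp only [cap, hz, if_true, h.not_gt, if_false, max_eq_left hx]

theorem le_cap (hz : z ∈ Bd) : B ≤ cap Bd B K x z := by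
  simp only [cap, hz, if_true]
  split_ifs
  · exact le_rfl
  · exact le_max_right _ _

theorem cap_le_threshold (hz : z ∈ Bd) (hBK : B ≤ K z) : cap Bd B K x z ≤ K z := by
  simp only [cap, hz, if_true]
  split_ifs with h
  · exact hBK
  · exact max_le (not_lt.1 h) hBK

theorem cap_le_self (hz : z ∈ Bd) (hx : B ≤ x z) : cap Bd B K x z ≤ x z := by
  simp only [cap, hz, if_true]
  split_ifs
  · exact hx
  · exact max_le le_rfl hx

/-- The boundary vertices at which the spin exceeds its threshold; there `cap` lowers it. -/
noncomputable def highSpins (Bd : Finset V) (K x : V → ℝ) : Finset V :=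
  Bd.filter fun z => K z < x z

theorem highSpins_subset : highSpins Bd K x ⊆ Bd := Finset.filter_subset _ _

theorem lt_of_mem_highSpins (hz : z ∈ highSpins Bd K x) : K z < x z := (Finset.mem_filter.1 hz).2

theorem cap_of_notMem_highSpins (hz : z ∈ Bd) (hz' : z ∉ highSpins Bd K x) (hx : B ≤ x z) :
    cap Bd B K x z = x z :=
  cap_of_le hz hx (not_lt.1 fun h => hz' (Finset.mem_filter.2 ⟨hz, h⟩))

/-- The Gaussian factor paid for lowering a spin `u` above the threshold `K`. -/
noncomputable def capPenalty (K c u : ℝ) : ℝ≥0∞ :=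
  if u ≤ K then 1 else ENNReal.ofReal (Real.exp (c * u ^ 2))

theorem measurable_capPenalty {K c : ℝ} : Measurable (capPenalty K c) :=
  Measurable.ite measurableSet_Iic measurable_const (by fun_prop)

theorem prod_capPenalty (c : ℝ) :
    ∏ z ∈ Bd, capPenalty (K z) c (x z) =
      ENNReal.ofReal (Real.exp (c * ∑ z ∈ highSpins Bd K x, x z ^ 2)) := by
  rw [Finset.mul_sum, ← prod_ofReal_exp, highSpins, Finset.prod_filter]
  refine Finset.prod_congr rfl fun z _ => ?_
  simp only [capPenalty, ← not_lt, ite_not]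

theorem boundaryTilt_le_mul_boundaryTilt_cap {c : ℝ} (hc : 0 ≤ c) (hB : 0 ≤ B)
    (hK : ∀ z ∈ Bd, 1 ≤ K z) (hx : ∀ z ∈ Bd, B ≤ x z) :
    boundaryTilt Bd c x ≤ ENNReal.ofReal (Real.exp (c * ∑ z ∈ highSpins Bd K x, x z ^ 2)) *
      boundaryTilt Bd c (cap Bd B K x) := by
  rw [boundaryTilt, boundaryTilt, ofReal_exp_mul_ofReal_exp, ← mul_add]
  refine ofReal_exp_le_ofReal_exp (mul_le_mul_of_nonneg_left ?_ hc)
  rw [highSpins, Finset.sum_filter, ← Finset.sum_add_distrib]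
  refine Finset.sum_le_sum fun z hz => ?_
  split_ifs with h
  · have one_le : 1 ≤ x z := (hK z hz).trans h.le
    nlinarith [hB.trans (le_cap (K := K) (x := x) hz)]
  · rw [cap_of_le hz (hx z hz) (not_lt.1 h), zero_add]

end HighSpins

section PointwiseBound

variable {V : Type*} {G : SimpleGraph V} {β : ℝ} {ρ : Measure ℝ} {D : ℕ} {Δ Bd S : Finset V}
  {M B c b C Ct k : ℝ} {x : V → ℝ}

/-- The largest boundary spins that keep the growth bound of regularity at most one on `S`. -/
noncomputable def growthThreshold (G : SimpleGraph V) (C : ℝ) (S : Finset V) (z : V) : ℝ :=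
  C * 2 ^ distToFinset G S z

theorem two_pow_le_growthThreshold (hC : 1 ≤ C) (z : V) :
    2 ^ distToFinset G S z ≤ growthThreshold G C S z :=
  le_mul_of_one_le_left (by positivity) hC

theorem one_le_growthThreshold (hC : 1 ≤ C) (z : V) : 1 ≤ growthThreshold G C S z :=
  (one_le_pow₀ one_le_two).trans (two_pow_le_growthThreshold hC z)

variable [∀ x : V, Fintype (G.neighborSet x)]

theorem boundaryGrowth_cap_le_one (hcl : closedNeighborFinset G Δ ⊆ Δ ∪ Bd) (hC : 0 ≤ C)
    (hB : 0 ≤ B) (hBK : ∀ z ∈ Bd, B ≤ growthThreshold G C S z) {s : V} (hs : s ∈ S) :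
    boundaryGrowth G C Δ (cap Bd B (growthThreshold G C S) x) s ≤ 1 := by
  refine boundaryGrowth_le hC le_rfl fun z hz => ?_
  have hzBd : z ∈ Bd := sdiff_le_iff.2 hcl hz
  refine ⟨hB.trans (le_cap hzBd), (cap_le_threshold hzBd (hBK z hzBd)).trans ?_⟩
  rw [growthThreshold, mul_one]
  exact mul_le_mul_of_nonneg_left (pow_le_pow_right₀ one_le_two (distToFinset_le hs z)) hC

theorem boundaryGrowth_cap_le_two_mul (hconn : G.Connected) (hS : S.Nonempty)
    (hcl : closedNeighborFinset G Δ ⊆ Δ ∪ Bd) (hC : 1 ≤ C) (hB : 0 ≤ B)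
    (hBK : ∀ z ∈ Bd, B ≤ growthThreshold G C S z) {y z₀ : V} (hadj : G.Adj y z₀)
    (hz₀ : growthThreshold G C S z₀ < x z₀) :
    boundaryGrowth G C Δ (cap Bd B (growthThreshold G C S) x) y ≤ 2 * x z₀ := by
  have two_pow_le : 2 ^ distToFinset G S z₀ ≤ x z₀ :=
    (two_pow_le_growthThreshold hC z₀).trans hz₀.le
  have one_le : (1 : ℝ) ≤ 2 ^ distToFinset G S z₀ := one_le_pow₀ one_le_two
  refine boundaryGrowth_le (by linarith) (by linarith) fun z hz => ?_
  have hzBd : z ∈ Bd := sdiff_le_iff.2 hcl hz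
  refine ⟨hB.trans (le_cap hzBd), (cap_le_threshold hzBd (hBK z hzBd)).trans ?_⟩
  have dist_le : distToFinset G S z ≤ distToFinset G S z₀ + 1 + G.dist y z := by
    have := distToFinset_le_add_dist hconn hS z₀ z
    have := hconn.dist_triangle (u := z₀) (v := y) (w := z)
    have := SimpleGraph.dist_eq_one_iff_adj.2 hadj.symm
    omega
  calc growthThreshold G C S z
      ≤ C * 2 ^ (distToFinset G S z₀ + 1 + G.dist y z) :=
        mul_le_mul_of_nonneg_left (pow_le_pow_right₀ one_le_two dist_le) (by linarith)
    _ = C * (2 * 2 ^ distToFinset G S z₀) * 2 ^ G.dist y z := by ring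
    _ ≤ C * (2 * x z₀) * 2 ^ G.dist y z := by gcongr

theorem prod_neighborsIn_highSpins_le (H : IsControlledRegion G β ρ D Δ Bd M)
    (hconn : G.Connected) (hS : S.Nonempty) (hC : 1 ≤ C) (hCt : 0 ≤ Ct) (hk : 0 ≤ k) (hB : 0 ≤ B)
    (hBK : ∀ z ∈ Bd, B ≤ growthThreshold G C S z) {κ : ℝ≥0∞}
    (hκ : κ ≤ ENNReal.ofReal (Real.exp k)) :
    ∏ a ∈ neighborsIn G Δ (highSpins Bd (growthThreshold G C S) x),
        (ENNReal.ofReal (Real.exp (Ct *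
          boundaryGrowth G C Δ (cap Bd B (growthThreshold G C S) x) a ^ 2)) * κ) ≤
      ENNReal.ofReal (Real.exp (D * (4 * Ct + k) *
        ∑ z ∈ highSpins Bd (growthThreshold G C S) x, x z ^ 2)) := by
  set high := highSpins Bd (growthThreshold G C S) x
  set w : V → ℝ := fun z => (4 * Ct + k) * x z ^ 2
  have w_nonneg (z : V) : 0 ≤ w z := by positivity
  have factor_le (a : V) (ha : a ∈ neighborsIn G Δ high) :
      ENNReal.ofReal (Real.exp (Ct *
          boundaryGrowth G C Δ (cap Bd B (growthThreshold G C S) x) a ^ 2)) * κ ≤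
        ENNReal.ofReal (Real.exp (∑ z ∈ high, if G.Adj a z then w z else 0)) := by
    obtain ⟨z₀, hz₀, hadj⟩ := (Finset.mem_filter.1 ha).2
    have hlt := lt_of_mem_highSpins hz₀
    have one_le : 1 ≤ x z₀ := (one_le_growthThreshold hC z₀).trans hlt.le
    have growth_sq_le : boundaryGrowth G C Δ (cap Bd B (growthThreshold G C S) x) a ^ 2 ≤
        (2 * x z₀) ^ 2 :=
      pow_le_pow_left₀ (boundaryGrowth_nonneg a)
        (boundaryGrowth_cap_le_two_mul hconn hS H.closedNeighborFinset_subset hC hB hBK hadj hlt) 2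
    have le_single : w z₀ ≤ ∑ z ∈ high, if G.Adj a z then w z else 0 := by
      have := Finset.single_le_sum (f := fun z => if G.Adj a z then w z else 0)
        (fun z _ => by split_ifs <;> simp [w_nonneg]) hz₀
      simpa only [hadj, if_true] using this
    refine (mul_le_mul_right hκ _).trans ?_
    rw [ofReal_exp_mul_ofReal_exp]
    refine ofReal_exp_le_ofReal_exp (le_trans ?_ le_single)
    nlinarith [mul_le_mul_of_nonneg_left growth_sq_le hCt,
      mul_nonneg hk (show 0 ≤ x z₀ ^ 2 - 1 by nlinarith)]
  refine (Finset.prod_le_prod' factor_le).trans ?_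
  rw [prod_ofReal_exp]
  refine ofReal_exp_le_ofReal_exp
    ((sum_sum_adj_le H.degree_le _ fun z _ => w_nonneg z).trans_eq ?_)
  rw [← Finset.mul_sum, mul_assoc]

/-- The rate of the Gaussian factor paid for lowering the high boundary spins: tilting, decoupling
from the bulk, and the regularity bound at their neighbours contribute one term each. -/
def penaltyRate (β : ℝ) (D : ℕ) (c Ct k : ℝ) : ℝ :=
  c + β * D + D * (4 * Ct + k)

-- High boundary spins are lowered to `B` so that regularity applies with growth bound one on `S`;
-- the cost of lowering is a factor `capPenalty`, which is integrable since `ζ` is sub-Gaussian.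
theorem IsControlledRegion.boundaryTilt_mul_boltzmannIntegral_prod_le
    (H : IsControlledRegion G β ρ D Δ Bd M) (hreg : HasRegularMarginals G β ρ C Ct b)
    (hconn : G.Connected) (hS : S.Nonempty) (hSΔ : S ⊆ Δ)
    (hadj : ∀ s ∈ S, ∀ z ∈ Bd, ¬ G.Adj s z) (hC : 1 ≤ C) (hCt : 0 ≤ Ct) (hk : 0 ≤ k)
    (hmean : rhoModMean ρ b (fun u => ENNReal.ofReal (Real.exp (β * D * u ^ 2))) ≤
      ENNReal.ofReal (Real.exp k))
    (hc : 0 ≤ c) (hB : 0 ≤ B) (hBK : ∀ z ∈ Bd, B ≤ growthThreshold G C S z)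
    {g : V → ℝ → ℝ≥0∞} (hg : ∀ a, Measurable (g a)) (hx : ∀ z ∈ Bd, B ≤ x z) :
    boundaryTilt Bd c x * boltzmannIntegral G β ρ Δ (fun x => ∏ a ∈ S, g a (x a)) x ≤
      (∏ s ∈ S, (ENNReal.ofReal (Real.exp Ct) * rhoModMean ρ b (g s))) *
        ((∏ z ∈ Bd, capPenalty (growthThreshold G C S z) (penaltyRate β D c Ct k) (x z)) *
          clippedWeight G β ρ Δ Bd c B (cap Bd B (growthThreshold G C S) x)) := by
  have := H.isSingleSiteMeasure.isFiniteMeasure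
  set K := growthThreshold G C S
  set high := highSpins Bd K x
  set y := cap Bd B K x
  have disjoint_neighborsIn : Disjoint S (neighborsIn G Δ high) :=
    Finset.disjoint_left.2 fun s hs hs' => by
      obtain ⟨z, hz, hsz⟩ := (Finset.mem_filter.1 hs').2
      exact hadj s hs z (highSpins_subset hz) hsz
  have measurable_prod : Measurable fun x : V → ℝ => ∏ a ∈ S, g a (x a) :=
    Finset.measurable_fun_prod _ fun a _ => (hg a).comp (measurable_pi_apply a)
  have dependsOn_prod : DependsOn (fun x : V → ℝ => ∏ a ∈ S, g a (x a)) Δ := fun x y h =>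
    Finset.prod_congr rfl fun a ha => by rw [h a (hSΔ ha)]
  have lowered := boltzmannIntegral_le_of_lowered (y := y) (Bad := high) H.beta_nonneg H.degree_le
    H.closedNeighborFinset_subset H.disjoint highSpins_subset
    (fun z hz hz' => cap_of_notMem_highSpins hz hz' (hx z hz))
    (fun z hz => ⟨hB.trans (le_cap (highSpins_subset hz)),
      cap_le_self (highSpins_subset hz) (hx z (highSpins_subset hz))⟩)
    (ρ := ρ) measurable_prod dependsOn_prod
  have regular := hreg.boltzmannIntegral_prod_mul_prod_exp_le H.beta_nonneg H.isSingleSiteMeasure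
    hSΔ neighborsIn_subset disjoint_neighborsIn hg (β * D) y
  have prod_S_le : ∏ a ∈ S, (ENNReal.ofReal (Real.exp (Ct * boundaryGrowth G C Δ y a ^ 2)) *
      rhoModMean ρ b (g a)) ≤ ∏ s ∈ S, (ENNReal.ofReal (Real.exp Ct) * rhoModMean ρ b (g s)) :=
    Finset.prod_le_prod' fun s hs => mul_le_mul_left (ofReal_exp_le_ofReal_exp
      (mul_le_of_le_one_right hCt (pow_le_one₀ (boundaryGrowth_nonneg s)
        (boundaryGrowth_cap_le_one H.closedNeighborFinset_subset (by linarith) hB hBK hs)))) _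
  have prod_neighbors_le :=
    prod_neighborsIn_highSpins_le (x := x) H hconn hS hC hCt hk hB hBK hmean
  have tilt_le := boundaryTilt_le_mul_boundaryTilt_cap (K := K) hc hB
    (fun z _ => one_le_growthThreshold hC z) hx
  rw [prod_capPenalty, clippedWeight, clip_cap, penaltyRate, add_mul, add_mul,
    ← ofReal_exp_mul_ofReal_exp, ← ofReal_exp_mul_ofReal_exp]
  calc _ ≤ _ := mul_le_mul' tilt_le (lowered.trans (mul_le_mul_right (regular.trans
        (mul_le_mul_right (mul_le_mul' prod_S_le prod_neighbors_le) _)) _))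
    _ = _ := by ring

end PointwiseBound

section PenaltyTail

variable {ζ : Measure ℝ} {K c : ℝ}

theorem setLIntegral_Ioi_capPenalty_le (hK : 0 ≤ K) :
    ∫⁻ u in Set.Ioi K, capPenalty K c u ∂ζ ≤
      (∫⁻ u, ENNReal.ofReal (Real.exp ((c + 1) * u ^ 2)) ∂ζ) *
        ENNReal.ofReal (Real.exp (-K ^ 2)) := by
  rw [← lintegral_mul_const _ (by fun_prop)]
  refine (setLIntegral_mono (by fun_prop) fun u hu => ?_).trans (setLIntegral_le_lintegral _ _)
  rw [Set.mem_Ioi] at hu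
  rw [capPenalty, if_neg hu.not_ge, ofReal_exp_mul_ofReal_exp]
  refine ofReal_exp_le_ofReal_exp ?_
  linarith [pow_le_pow_left₀ hK hu.le 2]

theorem one_add_setLIntegral_capPenalty_le {q : ℝ} (hq₀ : 0 ≤ q)
    (hq : ∫⁻ u, ENNReal.ofReal (Real.exp ((c + 1) * u ^ 2)) ∂ζ ≤ ENNReal.ofReal q) {n : ℕ}
    (hn : 2 ^ n ≤ K) :
    1 + ∫⁻ u in Set.Ioi K, capPenalty K c u ∂ζ ≤
      ENNReal.ofReal (Real.exp (q * Real.exp (-4 ^ n))) := by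
  have four_pow_le : (4 : ℝ) ^ n ≤ K ^ 2 :=
    calc (4 : ℝ) ^ n = (2 ^ n) ^ 2 := by rw [← pow_mul, mul_comm, pow_mul]; norm_num
      _ ≤ K ^ 2 := pow_le_pow_left₀ (by positivity) hn 2
  have tail_le := (setLIntegral_Ioi_capPenalty_le (ζ := ζ) (c := c)
    ((pow_nonneg zero_le_two n).trans hn)).trans
      (mul_le_mul' hq (ofReal_exp_le_ofReal_exp (neg_le_neg four_pow_le)))
  calc _ ≤ 1 + ENNReal.ofReal q * ENNReal.ofReal (Real.exp (-4 ^ n)) := by gcongr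
    _ = ENNReal.ofReal (q * Real.exp (-4 ^ n) + 1) := by
        rw [← ENNReal.ofReal_mul hq₀, add_comm, ENNReal.ofReal_add (by positivity) zero_le_one,
          ENNReal.ofReal_one]
    _ ≤ _ := ENNReal.ofReal_le_ofReal (Real.add_one_le_exp _)

end PenaltyTail

section OrthantBound

variable {V : Type*} {G : SimpleGraph V} {β : ℝ} {ρ ζ : Measure ℝ} {D : ℕ}
  {Δ Bd S : Finset V} {M B c b C Ct k : ℝ} {x : V → ℝ}

theorem prod_one_add_setLIntegral_capPenalty_le (hS : S.Nonempty) (hC : 1 ≤ C) {q ε : ℝ}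
    (hq₀ : 0 ≤ q)
    (hq : ∫⁻ u, ENNReal.ofReal (Real.exp ((c + 1) * u ^ 2)) ∂ζ ≤ ENNReal.ofReal q)
    (hsum : ∀ s ∈ S, ∑ z ∈ Bd, q * Real.exp (-4 ^ G.dist s z) ≤ ε) :
    ∏ z ∈ Bd, (1 + ∫⁻ u in Set.Ioi (growthThreshold G C S z),
        capPenalty (growthThreshold G C S z) c u ∂ζ) ≤
      ∏ _s ∈ S, ENNReal.ofReal (Real.exp ε) := by
  refine (Finset.prod_le_prod' fun z _ =>
    one_add_setLIntegral_capPenalty_le hq₀ hq (two_pow_le_growthThreshold hC z)).trans ?_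
  rw [prod_ofReal_exp, prod_ofReal_exp]
  exact ofReal_exp_le_ofReal_exp ((sum_distToFinset_le (f := fun n => q * Real.exp (-4 ^ n)) hS Bd
    fun n => mul_nonneg hq₀ (Real.exp_pos _).le).trans (Finset.sum_le_sum hsum))

variable [∀ x : V, Fintype (G.neighborSet x)]

theorem IsControlledRegion.lintegral_prod_tiltedMeasure_le [IsProbabilityMeasure ζ]
    (hζ : ∀ᵐ u ∂ζ, B ≤ u) (H : IsControlledRegion G β ρ D Δ Bd M)
    (hreg : HasRegularMarginals G β ρ C Ct b) (hconn : G.Connected) (hS : S.Nonempty) (hSΔ : S ⊆ Δ)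
    (hadj : ∀ s ∈ S, ∀ z ∈ Bd, ¬ G.Adj s z) (hC : 1 ≤ C) (hCt : 0 ≤ Ct) (hk : 0 ≤ k)
    (hmean : rhoModMean ρ b (fun u => ENNReal.ofReal (Real.exp (β * D * u ^ 2))) ≤
      ENNReal.ofReal (Real.exp k))
    (hB : 0 ≤ B) (hBK : ∀ z ∈ Bd, B ≤ growthThreshold G C S z)
    {g : V → ℝ → ℝ≥0∞} (hg : ∀ a, Measurable (g a)) :
    ∫⁻ x, ∏ a ∈ S, g a (x a) ∂tiltedMeasure G β ρ ζ Δ Bd (β * D * M) ≤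
      (∏ s ∈ S, (ENNReal.ofReal (Real.exp Ct) * rhoModMean ρ b (g s))) *
        ((∏ z ∈ Bd, (1 + ∫⁻ u in Set.Ioi (growthThreshold G C S z),
            capPenalty (growthThreshold G C S z) (penaltyRate β D (β * D * M) Ct k) u ∂ζ)) *
          tiltedMeasure G β ρ ζ Δ Bd (β * D * M) Set.univ) := by
  have := H.isSingleSiteMeasure.isFiniteMeasure
  have hβ := H.beta_nonneg
  have hM := H.bound_nonneg
  set K := growthThreshold G C S
  set penalty : V → ℝ → ℝ≥0∞ := fun z => capPenalty (K z) (penaltyRate β D (β * D * M) Ct k)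
  set cappedWeight : (V → ℝ) → ℝ≥0∞ := fun x =>
    clippedWeight G β ρ Δ Bd (β * D * M) B (cap Bd B K x)
  have measurable_cappedWeight : Measurable cappedWeight :=
    measurable_clippedWeight.comp measurable_cap
  have measurable_penalized : Measurable fun x : V → ℝ =>
      (∏ z ∈ Bd, penalty z (x z)) * cappedWeight x :=
    (Finset.measurable_fun_prod _ fun z _ => measurable_capPenalty.comp
      (measurable_pi_apply z)).mul measurable_cappedWeight
  have measurable_prod : Measurable fun x : V → ℝ => ∏ a ∈ S, g a (x a) :=
    Finset.measurable_fun_prod _ fun a _ => (hg a).comp (measurable_pi_apply a)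
  have lmarginal_penalized_le := lmarginal_prod_mul_le (ζ := ζ) (H := penalty) (T := Bd)
    (fun _ => measurable_capPenalty) (fun _ _ hu => if_pos hu) measurable_cappedWeight
    (fun z _ x u' u hu' => H.monotone_clippedWeight hB (cap_update_le_cap_update hu' u)) 0
  have lmarginal_cappedWeight_le : (∫⋯∫⁻_Bd, cappedWeight ∂fun _ => ζ) 0 ≤
      tiltedMeasure G β ρ ζ Δ Bd (β * D * M) Set.univ := by
    rw [← lmarginal_clippedWeight hζ]
    exact lmarginal_le_lmarginal_of_ae hζ fun x hx hx₀ =>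
      H.monotone_clippedWeight hB (cap_le_clip.trans_eq (clip_eq_self hx hx₀))
  rw [lintegral_tiltedMeasure measurable_prod]
  calc _ ≤ (∫⋯∫⁻_Bd, (fun x => (∏ s ∈ S, (ENNReal.ofReal (Real.exp Ct) * rhoModMean ρ b (g s))) *
          ((∏ z ∈ Bd, penalty z (x z)) * cappedWeight x)) ∂fun _ => ζ) 0 :=
        lmarginal_le_lmarginal_of_ae hζ fun x hx _ =>
          H.boundaryTilt_mul_boltzmannIntegral_prod_le hreg hconn hS hSΔ hadj hC hCt hk hmean
            (by positivity) hB hBK hg hx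
    _ = (∏ s ∈ S, (ENNReal.ofReal (Real.exp Ct) * rhoModMean ρ b (g s))) *
          (∫⋯∫⁻_Bd, (fun x => (∏ z ∈ Bd, penalty z (x z)) * cappedWeight x) ∂fun _ => ζ) 0 :=
        lintegral_const_mul _ (measurable_penalized.comp measurable_updateFinset)
    _ ≤ _ := mul_le_mul_right (lmarginal_penalized_le.trans
        (mul_le_mul_right lmarginal_cappedWeight_le _)) _

end OrthantBound

section TiltedOrthantBound

variable {V : Type*} {G : SimpleGraph V} {β : ℝ} {ρ : Measure ℝ} {D : ℕ}
  {Δ Bd S : Finset V} {M B b C Ct k : ℝ} {t : V → ℝ}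

theorem indicator_forall_le_eq_prod (S : Finset V) (t x : V → ℝ) :
    {x : V → ℝ | ∀ i ∈ S, t i ≤ x i}.indicator (1 : (V → ℝ) → ℝ≥0∞) x =
      ∏ i ∈ S, (Set.Ici (t i)).indicator 1 (x i) := by
  simp [Set.indicator_apply, Finset.prod_ite_zero]

theorem measurableSet_forall_le (S : Finset V) (t : V → ℝ) :
    MeasurableSet {x : V → ℝ | ∀ i ∈ S, t i ≤ x i} := by
  simp only [Set.ofPred_forall]
  exact S.measurableSet_biInter fun i _ => measurableSet_le measurable_const (measurable_pi_apply i)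

theorem le_growthThreshold_of_lt_dist (hS : S.Nonempty) (hC : 1 ≤ C) {r : ℕ} {z : V}
    (hr : ∀ s ∈ S, r < G.dist s z) : r ≤ growthThreshold G C S z := by
  obtain ⟨s, hs, dist_eq⟩ := exists_dist_eq_distToFinset (G := G) hS z
  have lt_two_pow : r < 2 ^ distToFinset G S z :=
    (dist_eq ▸ hr s hs).trans Nat.lt_two_pow_self
  calc (r : ℝ) ≤ 2 ^ distToFinset G S z := by exact_mod_cast lt_two_pow.le
    _ ≤ growthThreshold G C S z := two_pow_le_growthThreshold hC z

variable [∀ x : V, Fintype (G.neighborSet x)]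

theorem IsControlledRegion.tiltedMeasure_forall_le_of_le (H : IsControlledRegion G β ρ D Δ Bd M)
    (hreg : HasRegularMarginals G β ρ C Ct b) (hconn : G.Connected) (hSΔ : S ⊆ Δ) (hC : 1 ≤ C)
    (hCt : 0 ≤ Ct) (hk : 0 ≤ k)
    (hmean : rhoModMean ρ b (fun u => ENNReal.ofReal (Real.exp (β * D * u ^ 2))) ≤
      ENNReal.ofReal (Real.exp k))
    (hb : 0 ≤ b) (hB₀ : 0 ≤ B)
    (hB : b * B ^ 2 = 2 * Ct + Real.log (rhoMod ρ (2 * b) Set.univ).toReal -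
      Real.log (rhoMod ρ b Set.univ).toReal)
    {q : ℝ} (hq₀ : 0 ≤ q)
    (hq : ∫⁻ u, ENNReal.ofReal (Real.exp ((penaltyRate β D (β * D * M) Ct k + 1) * u ^ 2))
      ∂zetaProb ρ (2 * b) B ≤ ENNReal.ofReal q)
    (hsum : ∀ s ∈ S, ∑ z ∈ Bd, q * Real.exp (-4 ^ G.dist s z) ≤ Ct)
    {r : ℕ} (hr : 1 ≤ r) (hBr : B ≤ r) (hdist : ∀ s ∈ S, ∀ z ∈ Bd, r < G.dist s z)
    (ht : ∀ s ∈ S, B ≤ t s) :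
    tiltedMeasure G β ρ (zetaProb ρ (2 * b) B) Δ Bd (β * D * M) {x | ∀ i ∈ S, t i ≤ x i} ≤
      tiltedMeasure G β ρ (zetaProb ρ (2 * b) B) Δ Bd (β * D * M) Set.univ *
        ∏ i ∈ S, zetaProb ρ (2 * b) B (Set.Ici (t i)) := by
  have h := H.isSingleSiteMeasure
  have := h.isProbabilityMeasure_zetaProb (a := 2 * b) (B := B)
  rcases S.eq_empty_or_nonempty with rfl | hS
  · simp
  have not_adj : ∀ s ∈ S, ∀ z ∈ Bd, ¬ G.Adj s z := fun s hs z hz hadj =>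
    (hr.trans_lt (hdist s hs z hz)).ne' (SimpleGraph.dist_eq_one_iff_adj.2 hadj)
  have le_threshold : ∀ z ∈ Bd, B ≤ growthThreshold G C S z := fun z hz =>
    hBr.trans (le_growthThreshold_of_lt_dist hS hC fun s hs => hdist s hs z hz)
  have site_le : ∀ s ∈ S, ENNReal.ofReal (Real.exp Ct) * rhoModMean ρ b
        ((Set.Ici (t s)).indicator 1) * ENNReal.ofReal (Real.exp Ct) ≤
      zetaProb ρ (2 * b) B (Set.Ici (t s)) := fun s hs => by
    rw [mul_right_comm, ofReal_exp_mul_ofReal_exp, ← two_mul]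
    exact h.ofReal_exp_mul_rhoModMean_Ici_le hb hB₀ hB (ht s hs)
  rw [← lintegral_indicator_one (measurableSet_forall_le S t)]
  simp only [indicator_forall_le_eq_prod]
  refine (H.lintegral_prod_tiltedMeasure_le ae_le_zetaProb hreg hconn hS hSΔ not_adj hC hCt hk
    hmean hB₀ le_threshold fun a => measurable_one.indicator measurableSet_Ici).trans ?_
  rw [← mul_assoc, mul_comm]
  refine mul_le_mul_right ((mul_le_mul_right
    (prod_one_add_setLIntegral_capPenalty_le hS hC hq₀ hq hsum) _).trans ?_) _
  rw [← Finset.prod_mul_distrib]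
  exact Finset.prod_le_prod' site_le

theorem measure_forall_le_le_of_filter {μ : Measure (V → ℝ)} {ζ : Measure ℝ}
    [IsProbabilityMeasure ζ] (hζ : ∀ᵐ u ∂ζ, B ≤ u)
    (h : μ {x | ∀ i ∈ S.filter (B ≤ t ·), t i ≤ x i} ≤
      μ Set.univ * ∏ i ∈ S.filter (B ≤ t ·), ζ (Set.Ici (t i))) :
    μ {x | ∀ i ∈ S, t i ≤ x i} ≤ μ Set.univ * ∏ i ∈ S, ζ (Set.Ici (t i)) := by
  have prod_filter : ∏ i ∈ S.filter (B ≤ t ·), ζ (Set.Ici (t i)) = ∏ i ∈ S, ζ (Set.Ici (t i)) := by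
    refine Finset.prod_subset (Finset.filter_subset _ _) fun i hi hi' => ?_
    have lt : t i < B := not_le.1 fun hle => hi' (Finset.mem_filter.2 ⟨hi, hle⟩)
    exact (mem_ae_iff_prob_eq_one measurableSet_Ici).1 (hζ.mono fun u hu => lt.le.trans hu)
  rw [← prod_filter]
  have subset : {x : V → ℝ | ∀ i ∈ S, t i ≤ x i} ⊆ {x | ∀ i ∈ S.filter (B ≤ t ·), t i ≤ x i} :=
    fun x hx i hi => hx i (Finset.mem_filter.1 hi).1
  exact (measure_mono subset).trans h

theorem HasRegularMarginals.exists_tiltedMeasure_forall_le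
    (hreg : HasRegularMarginals G β ρ C Ct b) (h : IsSingleSiteMeasure ρ) (hconn : G.Connected)
    (hdeg : ∀ x : V, G.degree x ≤ D) (hC : 1 ≤ C) (hCt : 0 < Ct) (hb : 0 ≤ b) (hB₀ : 0 ≤ B)
    (hB : b * B ^ 2 = 2 * Ct + Real.log (rhoMod ρ (2 * b) Set.univ).toReal -
      Real.log (rhoMod ρ b Set.univ).toReal) (M : ℝ) :
    ∃ r : ℕ, 1 ≤ r ∧ ∀ Δ Bd : Finset V, IsControlledRegion G β ρ D Δ Bd M → ∀ S ⊆ Δ,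
      (∀ s ∈ S, ∀ z ∈ Bd, r < G.dist s z) → ∀ t : V → ℝ,
        tiltedMeasure G β ρ (zetaProb ρ (2 * b) B) Δ Bd (β * D * M) {x | ∀ i ∈ S, t i ≤ x i} ≤
          tiltedMeasure G β ρ (zetaProb ρ (2 * b) B) Δ Bd (β * D * M) Set.univ *
            ∏ i ∈ S, zetaProb ρ (2 * b) B (Set.Ici (t i)) := by
  have := h.isProbabilityMeasure_zetaProb (a := 2 * b) (B := B)
  set κ := rhoModMean ρ b fun u => ENNReal.ofReal (Real.exp (β * D * u ^ 2))
  have mean_le : κ ≤ ENNReal.ofReal (Real.exp κ.toReal) := by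
    rw [ENNReal.le_ofReal_iff_toReal_le (h.rhoModMean_exp_mul_sq_lt_top b _).ne (by positivity)]
    exact (lt_add_one _).le.trans (Real.add_one_le_exp _)
  set q := (∫⁻ u, ENNReal.ofReal (Real.exp ((penaltyRate β D (β * D * M) Ct κ.toReal + 1) * u ^ 2))
    ∂zetaProb ρ (2 * b) B).toReal
  have hq₀ : 0 ≤ q := ENNReal.toReal_nonneg
  have summable : Summable fun n : ℕ => (D : ℝ) ^ n * (q * Real.exp (-4 ^ n)) := by
    simpa only [mul_left_comm] using
      (summable_pow_mul_exp_neg_four_pow D D.cast_nonneg).mul_left q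
  obtain ⟨r₁, sum_le⟩ := exists_sum_dist_le hconn hdeg
    (fun n => mul_nonneg hq₀ (Real.exp_pos _).le) summable hCt
  obtain ⟨r₂, B_le⟩ := exists_nat_ge B
  refine ⟨max 1 (max r₁ r₂), le_max_left _ _, fun Δ Bd H S hS hr t => ?_⟩
  refine measure_forall_le_le_of_filter ae_le_zetaProb ?_
  have hr' : ∀ s ∈ S.filter (B ≤ t ·), ∀ z ∈ Bd, max 1 (max r₁ r₂) < G.dist s z := fun s hs =>
    hr s (Finset.mem_filter.1 hs).1
  refine H.tiltedMeasure_forall_le_of_le hreg hconn ((Finset.filter_subset _ _).trans hS) hC hCt.le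
    ENNReal.toReal_nonneg mean_le hb hB₀ hB hq₀ (ENNReal.ofReal_toReal
      (h.lintegral_exp_mul_sq_zetaProb_lt_top _).ne).ge
    (fun s hs => sum_le s Bd fun z hz => ?_) (le_max_left _ _) (B_le.trans ?_) hr'
    fun s hs => (Finset.mem_filter.1 hs).2
  · exact ((le_max_left _ _).trans (le_max_right _ _)).trans_lt (hr' s hs z hz)
  · exact_mod_cast (le_max_right _ _).trans (le_max_right _ _)

end TiltedOrthantBound

section LocalFunctions

variable {V : Type*} {E : Finset V} {μ : Measure (V → ℝ)}

theorem IsLogSupermodular.map_restrict (hμ : IsLogSupermodular μ) (E : Finset V) :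
    IsLogSupermodular (μ.map E.restrict) := by
  have measurable_restrict := Finset.measurable_restrict (X := fun _ : V => ℝ) E
  intro A₁ A₂ A₃ A₄ hA₁ hA₂ hA₃ hA₄ h
  rw [Measure.map_apply measurable_restrict hA₁, Measure.map_apply measurable_restrict hA₂,
    Measure.map_apply measurable_restrict hA₃, Measure.map_apply measurable_restrict hA₄]
  exact hμ (measurable_restrict hA₁) (measurable_restrict hA₂) (measurable_restrict hA₃)
    (measurable_restrict hA₄) fun x hx y hy => h _ hx _ hy

variable {ζ : Measure ℝ}

theorem hasOrthantBound_map_restrict (h : ∀ S ⊆ E, ∀ t : V → ℝ,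
      μ {x | ∀ i ∈ S, t i ≤ x i} ≤ μ Set.univ * ∏ i ∈ S, ζ (Set.Ici (t i))) :
    HasOrthantBound (μ.map E.restrict) fun _ => ζ := by
  intro S t
  have measurable_restrict := Finset.measurable_restrict (X := fun _ : V => ℝ) E
  have subset : S.map (Function.Embedding.subtype _) ⊆ E := fun v hv => by
    obtain ⟨w, -, rfl⟩ := Finset.mem_map.1 hv
    exact w.2
  have extended := h _ subset fun v => if hv : v ∈ E then t ⟨v, hv⟩ else 0
  simp only [Finset.forall_mem_map, Finset.prod_map, Function.Embedding.subtype_apply,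
    Subtype.coe_eta, Finset.coe_mem, dite_true] at extended
  rwa [Measure.map_apply measurable_restrict (measurableSet_forall_le S t),
    Measure.map_apply measurable_restrict MeasurableSet.univ]

theorem lintegral_le_lintegral_pi_of_dependsOn [IsFiniteMeasure μ] [IsProbabilityMeasure ζ]
    (hμ : IsLogSupermodular μ) (h : ∀ S ⊆ E, ∀ t : V → ℝ,
      μ {x | ∀ i ∈ S, t i ≤ x i} ≤ μ Set.univ * ∏ i ∈ S, ζ (Set.Ici (t i)))
    {f : (V → ℝ) → ℝ≥0∞} (hf : Measurable f) (hmono : Monotone f) (htop : ∀ x, f x ≠ ∞)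
    (hdep : DependsOn f E) :
    ∫⁻ x, f x ∂μ ≤
      μ Set.univ * ∫⁻ φ, f (Function.updateFinset 0 E φ) ∂Measure.pi fun _ : E => ζ := by
  have measurable_restrict := Finset.measurable_restrict (X := fun _ : V => ℝ) E
  have measurable_comp : Measurable fun φ : E → ℝ => f (Function.updateFinset 0 E φ) :=
    hf.comp measurable_updateFinset
  have monotone_comp : Monotone fun φ : E → ℝ => f (Function.updateFinset 0 E φ) := by
    refine fun φ ψ hφψ => hmono fun v => ?_
    simp only [Function.updateFinset_def]
    split_ifs with hv
    exacts [hφψ ⟨v, hv⟩, le_rfl]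
  have restrict_eq (x : V → ℝ) : f x = f (Function.updateFinset 0 E (E.restrict x)) :=
    hdep fun v hv => by simp [Function.updateFinset_def, Finset.mem_coe.1 hv]
  calc ∫⁻ x, f x ∂μ = ∫⁻ φ, f (Function.updateFinset 0 E φ) ∂μ.map E.restrict := by
        rw [lintegral_map measurable_comp measurable_restrict]
        exact lintegral_congr restrict_eq
    _ ≤ _ := lintegral_le_of_hasOrthantBound (hμ.map_restrict E) (hasOrthantBound_map_restrict h)
        (fun _ => htop _) measurable_comp monotone_comp
    _ = _ := by rw [Measure.map_apply measurable_restrict MeasurableSet.univ, Set.preimage_univ]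

end LocalFunctions

section BoundaryDomination

variable {V : Type*} {G : SimpleGraph V} [∀ x : V, Fintype (G.neighborSet x)] {β : ℝ}
  {ρ ζ : Measure ℝ} {D : ℕ} {Δ Bd I E : Finset V} {M B c : ℝ} {F : (V → ℝ) → ℝ≥0∞}

theorem gibbsExpectation_le (hβ : 0 ≤ β) (h : IsSingleSiteMeasure ρ) {K : ℝ≥0∞}
    (hF : ∀ x, F x ≤ K) (x : V → ℝ) : gibbsExpectation G β ρ I F x ≤ K := by
  have := h.isFiniteMeasure
  calc gibbsExpectation G β ρ I F x ≤ gibbsExpectation G β ρ I (fun _ => K * 1) x :=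
        mul_le_mul_right (boltzmannIntegral_mono (fun y => (hF y).trans_eq (mul_one K).symm) x) _
    _ = K * gibbsExpectation G β ρ I (fun _ => 1) x := by
        rw [gibbsExpectation, boltzmannIntegral_const_mul I K measurable_const, mul_left_comm]
        rfl
    _ = K := by rw [gibbsExpectation_one hβ h, mul_one]

theorem dependsOn_gibbsExpectation (hF : DependsOn F (I ∪ E : Finset V))
    (hcl : closedNeighborFinset G I ⊆ I ∪ E) : DependsOn (gibbsExpectation G β ρ I F) E := by
  refine fun x y hxy => gibbsExpectation_congr_of_dependsOn hF fun v hv hv' => hxy v ?_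
  have mem_union : v ∈ I ∪ E := hv'.elim Finset.mem_coe.1 (hcl ·)
  exact Finset.mem_coe.2 ((Finset.mem_union.1 mem_union).resolve_left hv)

theorem lintegral_gibbsExpectation_tiltedMeasure (hβ : 0 ≤ β)
    (h : IsSingleSiteMeasure ρ) (hI : I ⊆ Δ) (hF : Measurable F) :
    ∫⁻ x, gibbsExpectation G β ρ I F x ∂tiltedMeasure G β ρ ζ Δ Bd c =
      ∫⁻ x, F x ∂tiltedMeasure G β ρ ζ Δ Bd c := by
  have := h.isFiniteMeasure
  rw [lintegral_tiltedMeasure (measurable_gibbsExpectation I hF), lintegral_tiltedMeasure hF,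
    boltzmannIntegral_gibbsExpectation_of_subset hβ h hI hF]

theorem IsControlledRegion.lmarginal_gibbsExpectation_le [IsProbabilityMeasure ζ]
    (H : IsControlledRegion G β ρ D Δ Bd M) (hB : 0 ≤ B) (hζB : ∀ᵐ u ∂ζ, B ≤ u)
    (hζ : ∀ a : ℝ, ∫⁻ u, ENNReal.ofReal (Real.exp (a * u ^ 2)) ∂ζ < ∞) (hI : I ⊆ Δ)
    (hcl : closedNeighborFinset G I ⊆ I ∪ E)
    (horth : ∀ S ⊆ E, ∀ t : V → ℝ,
      tiltedMeasure G β ρ ζ Δ Bd (β * D * M) {x | ∀ i ∈ S, t i ≤ x i} ≤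
        tiltedMeasure G β ρ ζ Δ Bd (β * D * M) Set.univ * ∏ i ∈ S, ζ (Set.Ici (t i)))
    (hF : Measurable F) (hmono : Monotone F) {K : ℝ≥0∞} (hK : K ≠ ∞) (hFK : ∀ x, F x ≤ K)
    (hdep : DependsOn F (I ∪ E : Finset V)) :
    (∫⋯∫⁻_Bd, gibbsExpectation G β ρ Δ F ∂fun _ => ζ) 0 ≤
      (∫⋯∫⁻_E, gibbsExpectation G β ρ I F ∂fun _ => ζ) 0 := by
  have h := H.isSingleSiteMeasure
  have hβ := H.beta_nonneg
  have := h.isFiniteMeasure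
  have := isFiniteMeasure_tiltedMeasure (c := β * D * M) h hβ
    (mul_nonneg (by positivity) H.bound_nonneg) hζ H.closedNeighborFinset_subset
  have univ_ne_zero := tiltedMeasure_univ_ne_zero (G := G) (β := β) (ζ := ζ) (Δ := Δ) (Bd := Bd)
    (c := β * D * M) h
  rw [← ENNReal.mul_le_mul_iff_right univ_ne_zero (measure_ne_top _ _)]
  calc _ ≤ ∫⁻ x, F x ∂tiltedMeasure G β ρ ζ Δ Bd (β * D * M) := by
        rw [mul_comm]
        exact H.lmarginal_gibbsExpectation_mul_le hζB hB hF hmono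
    _ = ∫⁻ x, gibbsExpectation G β ρ I F x ∂tiltedMeasure G β ρ ζ Δ Bd (β * D * M) :=
        (lintegral_gibbsExpectation_tiltedMeasure hβ h hI hF).symm
    _ ≤ _ := lintegral_le_lintegral_pi_of_dependsOn (isLogSupermodular_tiltedMeasure hβ) horth
        (measurable_gibbsExpectation I hF) (monotone_gibbsExpectation hβ h hF hmono)
        (fun x => ne_top_of_le_ne_top hK (gibbsExpectation_le hβ h hFK x))
        (dependsOn_gibbsExpectation hdep hcl)

end BoundaryDomination

section RandomBoundary

variable {V : Type*} {G : SimpleGraph V} {β : ℝ} {ρ ζ : Measure ℝ} {a B : ℝ}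

theorem bdry_subset (Λ : Finset V) : bdry G Λ ⊆ Λ := Finset.filter_subset _ _

theorem prodN_zetaM (h : IsSingleSiteMeasure ρ) (E : Finset V) :
    prodN (zetaM ρ a B) E = Measure.pi fun _ : E => zetaProb ρ a B := by
  have := h.isProbabilityMeasure_zetaProb (a := a) (B := B)
  have : IsFiniteMeasure (zetaM ρ a B) := ⟨h.zetaM_univ_ne_top.lt_top⟩
  refine (Measure.pi_eq fun s _ => ?_).symm
  simp only [prodN, zetaProb, Measure.smul_apply, Measure.pi_pi, Measure.pi_univ, smul_eq_mul,
    Finset.prod_mul_distrib]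
  rw [ENNReal.prod_inv_distrib fun _ _ _ _ _ => Or.inl h.zetaM_univ_ne_zero]

/-- The law on `ℝ^Λ` of boundary spins `ξ` on `∂Λ` together with spins on `Λ ∖ ∂Λ` sampled from the
Gibbs measure with boundary condition `ξ`: the kernel mixed over `ξ` in `nuTilde`. -/
noncomputable def boundaryKernel (G : SimpleGraph V) (β : ℝ) (ρ : Measure ℝ) (Λ : Finset V)
    (ξ : bdry G Λ → ℝ) : Measure (Λ → ℝ) :=
  (gibbs (Jnn G) β ρ (Λ \ bdry G Λ) fun y => if h : y ∈ bdry G Λ then ξ ⟨y, h⟩ else 0).map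
    fun ψ x => if h : x.1 ∈ bdry G Λ then ξ ⟨x.1, h⟩ else ψ ⟨x.1, Finset.mem_sdiff.mpr ⟨x.2, h⟩⟩

variable [∀ x : V, Fintype (G.neighborSet x)]

theorem closedNeighborFinset_sdiff_bdry_subset (Λ : Finset V) :
    closedNeighborFinset G (Λ \ bdry G Λ) ⊆ Λ \ bdry G Λ ∪ bdry G Λ := by
  intro v hv
  rw [Finset.sdiff_union_of_subset (bdry_subset Λ)]
  rcases Finset.mem_union.1 hv with hv | hv
  · exact (Finset.mem_sdiff.1 hv).1
  · obtain ⟨w, hw, adj⟩ := Finset.mem_biUnion.1 hv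
    rw [SimpleGraph.mem_neighborFinset] at adj
    by_contra hvΛ
    exact (Finset.mem_sdiff.1 hw).2
      (Finset.mem_filter.2 ⟨(Finset.mem_sdiff.1 hw).1, v, hvΛ, adj⟩)

section BoundaryKernel

variable {Λ : Finset V} {Φ : (Λ → ℝ) → ℝ≥0∞}

theorem lintegral_boundaryKernel (ξ : bdry G Λ → ℝ) (hΦ : Measurable Φ) :
    ∫⁻ φ, Φ φ ∂boundaryKernel G β ρ Λ ξ =
      gibbsExpectation G β ρ (Λ \ bdry G Λ) (fun x => Φ (Λ.restrict x))
        (Function.updateFinset 0 (bdry G Λ) ξ) := by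
  have boundary_eq : (fun y => if h : y ∈ bdry G Λ then ξ ⟨y, h⟩ else (0 : ℝ)) =
      Function.updateFinset (0 : V → ℝ) (bdry G Λ) ξ := by
    funext y
    simp [Function.updateFinset_def]
  have measurable_extend : Measurable fun (ψ : ↥(Λ \ bdry G Λ) → ℝ) (x : Λ) =>
      if h : x.1 ∈ bdry G Λ then ξ ⟨x.1, h⟩ else ψ ⟨x.1, Finset.mem_sdiff.mpr ⟨x.2, h⟩⟩ := by
    refine measurable_pi_lambda _ fun x => ?_
    split_ifs
    exacts [measurable_const, measurable_pi_apply _]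
  rw [boundaryKernel, lintegral_map hΦ measurable_extend, boundary_eq,
    ← lintegral_gibbs_Jnn (F := fun x => Φ (Λ.restrict x)) _
      (hΦ.comp (Finset.measurable_restrict Λ))]
  refine lintegral_congr fun ψ => congrArg Φ (funext fun x => ?_)
  by_cases hx : x.1 ∈ bdry G Λ <;> simp [Function.updateFinset_def, hx]

theorem measurable_boundaryKernel [SigmaFinite ρ] : Measurable (boundaryKernel G β ρ Λ) := by
  refine Measure.measurable_of_measurable_coe _ fun s hs => ?_
  simp only [← lintegral_indicator_one hs,
    lintegral_boundaryKernel _ (measurable_one.indicator hs)]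
  exact (measurable_gibbsExpectation _ ((measurable_one.indicator hs).comp
    (Finset.measurable_restrict Λ))).comp measurable_updateFinset

theorem lintegral_nuTilde [SigmaFinite ρ] (hΦ : Measurable Φ) :
    ∫⁻ φ, Φ φ ∂nuTilde G β ρ ζ Λ =
      ∫⁻ ξ, gibbsExpectation G β ρ (Λ \ bdry G Λ) (fun x => Φ (Λ.restrict x))
        (Function.updateFinset 0 (bdry G Λ) ξ) ∂prodN ζ (bdry G Λ) :=
  calc ∫⁻ φ, Φ φ ∂nuTilde G β ρ ζ Λ
      = ∫⁻ φ, Φ φ ∂(prodN ζ (bdry G Λ)).bind (boundaryKernel G β ρ Λ) := rfl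
    _ = _ := by
      rw [Measure.lintegral_bind measurable_boundaryKernel.aemeasurable hΦ.aemeasurable]
      exact lintegral_congr fun ξ => lintegral_boundaryKernel ξ hΦ

end BoundaryKernel

theorem isProbabilityMeasure_nuTilde (hβ : 0 ≤ β) (h : IsSingleSiteMeasure ρ) (Λ : Finset V) :
    IsProbabilityMeasure (nuTilde G β ρ (zetaM ρ a B) Λ) := by
  have := h.isFiniteMeasure
  have := h.isProbabilityMeasure_zetaProb (a := a) (B := B)
  refine ⟨?_⟩
  rw [← lintegral_one, lintegral_nuTilde (Φ := fun _ => 1) measurable_const, prodN_zetaM h]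
  simp [gibbsExpectation_one hβ h]

theorem IsControlledRegion.lintegral_marg_nuTilde_le {D : ℕ} {M : ℝ} {Λ' Λ : Finset V}
    (H : IsControlledRegion G β ρ D (Λ \ bdry G Λ) (bdry G Λ) M) (hB : 0 ≤ B)
    (hsub : Λ' ⊆ Λ) (hbulk : Λ' ⊆ Λ \ bdry G Λ)
    (horth : ∀ S ⊆ bdry G Λ', ∀ t : V → ℝ,
      tiltedMeasure G β ρ (zetaProb ρ a B) (Λ \ bdry G Λ) (bdry G Λ) (β * D * M)
          {x | ∀ i ∈ S, t i ≤ x i} ≤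
        tiltedMeasure G β ρ (zetaProb ρ a B) (Λ \ bdry G Λ) (bdry G Λ) (β * D * M) Set.univ *
          ∏ i ∈ S, zetaProb ρ a B (Set.Ici (t i)))
    {Φ : (Λ' → ℝ) → ℝ≥0∞} (hΦ : Measurable Φ) (hmono : Monotone Φ) {K : ℝ≥0∞} (hK : K ≠ ∞)
    (hΦK : ∀ x, Φ x ≤ K) :
    ∫⁻ φ, Φ φ ∂marg hsub (nuTilde G β ρ (zetaM ρ a B) Λ) ≤
      ∫⁻ φ, Φ φ ∂nuTilde G β ρ (zetaM ρ a B) Λ' := by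
  have h := H.isSingleSiteMeasure
  have := h.isFiniteMeasure
  have := h.isProbabilityMeasure_zetaProb (a := a) (B := B)
  have measurable_restrict₂ : Measurable fun (φ : Λ → ℝ) (x : Λ') => φ ⟨x.1, hsub x.2⟩ :=
    measurable_pi_lambda _ fun _ => measurable_pi_apply _
  rw [marg, lintegral_map hΦ measurable_restrict₂,
    lintegral_nuTilde (Φ := fun φ => Φ fun x => φ ⟨x.1, hsub x.2⟩) (hΦ.comp measurable_restrict₂),
    lintegral_nuTilde hΦ, prodN_zetaM h, prodN_zetaM h]
  refine H.lmarginal_gibbsExpectation_le hB ae_le_zetaProb h.lintegral_exp_mul_sq_zetaProb_lt_top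
    (Finset.sdiff_subset.trans hbulk) (closedNeighborFinset_sdiff_bdry_subset Λ') horth
    (hΦ.comp (Finset.measurable_restrict Λ')) (fun x y hxy => hmono fun v => hxy v) hK
    (fun x => hΦK _) ?_
  rw [Finset.sdiff_union_of_subset (bdry_subset Λ')]
  exact fun x y hxy => congrArg Φ (funext fun v => hxy v v.2)

end RandomBoundary

theorem stochDom_of_lintegral_le {ι : Type*} {μ ν : Measure (ι → ℝ)} [IsProbabilityMeasure μ]
    [IsProbabilityMeasure ν]
    (h : ∀ Φ : (ι → ℝ) → ℝ≥0∞, Measurable Φ → Monotone Φ → ∀ K ≠ ∞, (∀ x, Φ x ≤ K) →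
      ∫⁻ φ, Φ φ ∂μ ≤ ∫⁻ φ, Φ φ ∂ν) : StochDom μ ν := by
  intro g measurable_g monotone_g ⟨K, hK⟩
  have nonneg (x) : 0 ≤ g x + K := neg_le_iff_add_nonneg.1 (abs_le.1 (hK x)).1
  have le_two_mul (x) : g x + K ≤ 2 * K := by linarith [(abs_le.1 (hK x)).2]
  have integral_eq (m : Measure (ι → ℝ)) [IsProbabilityMeasure m] :
      ∫ x, g x ∂m = (∫⁻ x, ENNReal.ofReal (g x + K) ∂m).toReal - K := by
    have integrable : Integrable g m :=
      Integrable.of_bound measurable_g.aestronglyMeasurable K (ae_of_all _ hK)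
    rw [← integral_eq_lintegral_of_nonneg_ae (ae_of_all _ nonneg)
      (measurable_g.add_const K).aestronglyMeasurable,
      integral_add integrable (integrable_const K)]
    simp
  rw [integral_eq μ, integral_eq ν]
  refine sub_le_sub_right (ENNReal.toReal_mono ?_ ?_) K
  · refine ne_top_of_le_ne_top (b := ∫⁻ _, ENNReal.ofReal (2 * K) ∂ν) ?_ ?_
    · simpa using ENNReal.mul_ne_top ENNReal.ofNat_ne_top ENNReal.ofReal_ne_top
    · exact lintegral_mono fun x => ENNReal.ofReal_le_ofReal (le_two_mul x)
  · exact h _ (measurable_g.add_const K).ennreal_ofReal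
      (fun x y hxy => ENNReal.ofReal_le_ofReal (add_le_add_left (monotone_g hxy) K)) _
      ENNReal.ofReal_ne_top fun x => ENNReal.ofReal_le_ofReal (le_two_mul x)

section VolumeMonotonicity

variable {V : Type*} {G : SimpleGraph V} {β : ℝ} {ρ : Measure ℝ} {D : ℕ} {C Ct b B : ℝ}

theorem subset_sdiff_bdry_of_lt_dist {Λ' Λ : Finset V} (hsub : Λ' ⊆ Λ) {r : ℕ}
    (h : ∀ x ∈ Λ', ∀ y ∈ bdry G Λ, r < G.dist x y) : Λ' ⊆ Λ \ bdry G Λ := fun v hv =>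
  Finset.mem_sdiff.2 ⟨hsub hv, fun hv' => by simpa using h v hv v hv'⟩

variable [∀ x : V, Fintype (G.neighborSet x)]

theorem HasRegularMarginals.exists_stochDom_nuTilde (hreg : HasRegularMarginals G β ρ C Ct b)
    (h : IsSingleSiteMeasure ρ) (hβ : 0 ≤ β) (hconn : G.Connected) (hdeg : ∀ x : V, G.degree x ≤ D)
    (hC : 1 ≤ C) (hCt : 0 < Ct) (hb : 0 ≤ b) (hB₀ : 0 ≤ B)
    (hB : b * B ^ 2 = 2 * Ct + Real.log (rhoMod ρ (2 * b) Set.univ).toReal -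
      Real.log (rhoMod ρ b Set.univ).toReal) :
    ∃ r : ℕ, 1 ≤ r ∧ ∀ (Λ' Λ : Finset V) (hsub : Λ' ⊆ Λ),
      (∀ x ∈ Λ', ∀ y ∈ bdry G Λ, r < G.dist x y) →
      StochDom (marg hsub (nuTilde G β ρ (zetaM ρ (2 * b) B) Λ))
        (nuTilde G β ρ (zetaM ρ (2 * b) B) Λ') := by
  set M := Real.exp Ct * (rhoModMean ρ b fun u => ENNReal.ofReal (Real.exp (1 * u ^ 2))).toReal
  obtain ⟨r, hr, orthant_le⟩ :=
    hreg.exists_tiltedMeasure_forall_le h hconn hdeg hC hCt hb hB₀ hB M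
  refine ⟨r, hr, fun Λ' Λ hsub hdist => ?_⟩
  have bulk_subset := subset_sdiff_bdry_of_lt_dist hsub hdist
  have controlled : IsControlledRegion G β ρ D (Λ \ bdry G Λ) (bdry G Λ) M :=
    hreg.isControlledRegion hβ h (zero_le_one.trans hC) hCt.le hdeg
      (closedNeighborFinset_sdiff_bdry_subset Λ) Finset.sdiff_disjoint
  have probability (Λ : Finset V) := isProbabilityMeasure_nuTilde (G := G) (a := 2 * b) (B := B)
    hβ h Λ
  have : IsProbabilityMeasure (marg hsub (nuTilde G β ρ (zetaM ρ (2 * b) B) Λ)) :=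
    Measure.isProbabilityMeasure_map
      (measurable_pi_lambda _ fun _ => measurable_pi_apply _).aemeasurable
  refine stochDom_of_lintegral_le fun Φ hΦ hmono K hK hΦK =>
    controlled.lintegral_marg_nuTilde_le hB₀ hsub bulk_subset (fun S hS t => ?_) hΦ hmono hK hΦK
  have hSΛ' := hS.trans (bdry_subset Λ')
  exact orthant_le _ _ controlled S (hSΛ'.trans bulk_subset) (fun s hs => hdist s (hSΛ' hs)) t

theorem IsSingleSiteMeasure.log_rhoMod_univ_le (h : IsSingleSiteMeasure ρ) {a : ℝ} (hba : b ≤ a) :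
    Real.log (rhoMod ρ b Set.univ).toReal ≤ Real.log (rhoMod ρ a Set.univ).toReal := by
  have ne_zero : rhoMod ρ b Set.univ ≠ 0 :=
    rhoMod_ne_zero MeasurableSet.univ h.measure_univ_ne_zero
  refine Real.log_le_log (ENNReal.toReal_pos ne_zero (h.rhoMod_univ_lt_top b).ne)
    (ENNReal.toReal_mono (h.rhoMod_univ_lt_top a).ne ?_)
  rw [rhoMod_univ, rhoMod_univ]
  exact lintegral_mono fun u => ofReal_exp_le_ofReal_exp
    (mul_le_mul_of_nonneg_right hba (sq_nonneg u))

end VolumeMonotonicity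

/-- Proposition `prop: Lambda monotonicity`: monotonicity in the
volume of the random-boundary-condition measures. On a connected graph of degree at
most `D`, with `a = 8βD`, `B = ((2/a)(2C̃ + log ρ_a(ℝ) - log ρ_{a/2}(ℝ)))^{1/2}` and
`ζ = ζ_{a,B}` (where `C̃` is a constant realizing the `n = 2` regularity theorem),
there exists `r > 0` such that whenever `d_G(∂Λ, Λ') > r`, the measure `ν̃⁰_{Λ',β,ρ}`
stochastically dominates the `Λ'`-marginal of `ν̃⁰_{Λ,β,ρ}`. -/
theorem stmt16 {V : Type*} [Countable V] (G : SimpleGraph V) (hconn : G.Connected)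
    [∀ x : V, Fintype (G.neighborSet x)] (D : ℕ) (hD : 0 < D)
    (hdeg : ∀ x : V, G.degree x ≤ D)
    (β : ℝ) (hβ : 0 < β) (ρ : Measure ℝ)
    (hρ : ∀ a : ℝ, 0 < a →
      0 < ∫⁻ u, ENNReal.ofReal (Real.exp (a * u ^ 2)) ∂ρ ∧
      ∫⁻ u, ENNReal.ofReal (Real.exp (a * u ^ 2)) ∂ρ < ⊤)
    (hρpos : 0 < ρ (Set.Ici (0 : ℝ)))
    (C Ct : ℝ) (hC : 1 ≤ C) (hCt : 0 < Ct)
    -- `C` and `C̃` realize the `n = 2` regularity theorem (with `a = 8βD`, `M_f = D`):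
    (hreg : ∀ lam : ℝ, 1 ≤ lam → 4 * β * (D : ℝ) * lam ≤ 8 * β * D →
      ∀ (Λ Λ' : Finset V) (hsub : Λ' ⊆ Λ) (ξ : V → ℝ),
      marg hsub (gibbs (Jnn G) β ρ Λ ξ) ≤
        ENNReal.ofReal (∏ x ∈ Λ', Real.exp
          (Ct * ARealL (Jnn G) (fun _ => 1) lam ξ C x (↑Λ) ^ 2)) •
        prodN (rhoMod ρ (4 * β * D)) Λ') :
    ∃ r : ℝ, 0 < r ∧ ∀ (Λ' Λ : Finset V) (hsub : Λ' ⊆ Λ),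
      (∀ x ∈ Λ', ∀ y ∈ bdry G Λ, r < (G.dist x y : ℝ)) →
      StochDom
        (marg hsub (nuTilde G β ρ
          (zetaM ρ (8 * β * D)
            (Real.sqrt (2 / (8 * β * D) * (2 * Ct +
              Real.log ((rhoMod ρ (8 * β * D)) Set.univ).toReal -
              Real.log ((rhoMod ρ (4 * β * D)) Set.univ).toReal)))) Λ))
        (nuTilde G β ρ
          (zetaM ρ (8 * β * D)
            (Real.sqrt (2 / (8 * β * D) * (2 * Ct +
              Real.log ((rhoMod ρ (8 * β * D)) Set.univ).toReal -
              Real.log ((rhoMod ρ (4 * β * D)) Set.univ).toReal)))) Λ') := by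
  have h : IsSingleSiteMeasure ρ := ⟨fun a ha => (hρ a ha).2, hρpos⟩
  have : (0 : ℝ) < D := Nat.cast_pos.2 hD
  have regular : HasRegularMarginals G β ρ C Ct (4 * β * D) :=
    hreg 2 one_le_two (by linarith)
  rw [show 8 * β * D = 2 * (4 * β * D) by ring]
  set b := 4 * β * D
  have hb : 0 < b := by positivity
  set X := 2 * Ct + Real.log (rhoMod ρ (2 * b) Set.univ).toReal -
    Real.log (rhoMod ρ b Set.univ).toReal
  have X_nonneg : 0 ≤ X := by
    linarith [h.log_rhoMod_univ_le (show b ≤ 2 * b by linarith)]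
  have B_sq : b * Real.sqrt (2 / (2 * b) * X) ^ 2 = X := by
    rw [Real.sq_sqrt (by positivity)]
    field_simp
  obtain ⟨r, hr, dom⟩ := regular.exists_stochDom_nuTilde h hβ.le hconn hdeg hC hCt hb.le
    (Real.sqrt_nonneg _) B_sq
  exact ⟨r, Nat.cast_pos.2 hr, fun Λ' Λ hsub hdist =>
    dom Λ' Λ hsub fun x hx y hy => Nat.cast_lt.1 (hdist x hx y hy)⟩
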